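/- Fix n ≥ 1. There exists a constant C > 0, depending only on n, such that for every p ∈ (1, ∞), every d ≥ 1, every Lipschitz function f : ℝⁿ → ℝ with |f(ξ) − f(ξ̃)| ≤ ‖ξ − ξ̃‖₂ for all ξ, ξ̃ ∈ ℝⁿ, every d×d unitary matrix U, every family of reals λ_{j,i} (1 ≤ j ≤ n, 1 ≤ i ≤ d), and every x ∈ M_d(ℂ), the following holds: setting A_j = U·diag(λ_{j,1},…,λ_{j,d})·U* for 1 ≤ j ≤ n and F = U·diag(f(λ_{1,1},…,λ_{n,1}),…,f(λ_{1,d},…,λ_{n,d}))·U*, one has ‖F·x − x·F‖_p ≤ C·(p²/(p−1))·∑_{j=1}^{n} ‖A_j·x − x·A_j‖_p. -/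

import Mathlib

open Finset Matrix

/-- The singular values of a square complex matrix: the square roots of the eigenvalues of
the positive semidefinite Hermitian matrix `Mᴴ * M`. -/
noncomputable def singularValues {d : ℕ} (M : Matrix (Fin d) (Fin d) ℂ) : Fin d → ℝ :=
  fun i => Real.sqrt ((Matrix.isHermitian_conjTranspose_mul_self M).eigenvalues i)

/-- The Schatten `p`-norm of a square complex matrix: `(∑ᵢ σᵢ(M)^p)^(1/p)`. -/
noncomputable def schattenNorm {d : ℕ} (p : ℝ) (M : Matrix (Fin d) (Fin d) ℂ) : ℝ :=
  (∑ i, singularValues M i ^ p) ^ (1 / p)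

/-!
In a joint eigenbasis of the `A_j` the commutators are the Schur products of `x` with the matrices
`(g k - g l)`. Write `v k` for the vector of the `k`-th joint eigenvalues and
`w k = ⟪θ, v k⟫` for a direction `θ`.

Martingale transforms of matrix-valued families on a binary tree are of weak type `(1, 1)`: on the
complement of Cuculescu's projection, which has small trace, nothing is needed, and on the
projection the noncommutative Calderón–Zygmund decomposition leaves a good part, estimated in `L²`,
and a bad part that is killed by the compression. Marcinkiewicz interpolation and duality give the
norm `O(p² / (p - 1))` on `L^p(S^p)`. Conjugating `x` by diagonal unitaries whose entries are
characters of the tree transfers this bound to Schur multipliers, first with the symbol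
`b² / (a² + b²)` of a squared Riesz transform of the plane, then with the Cauchy symbol
`Im z / z`. Averaging rotations of the latter against the third Fourier mode of the circle
produces a bounded kernel `K` with `w * K w t = 3 * t` for `|t| < |w|`.

Consequently the matrix `(w k - w l) * K (w k - w l) (f k - f l)` is `3 * (f k - f l)` wherever
`|f k - f l| < |w k - w l|`, and its Schur product with `x` is bounded by a linear combination of
the `[A_j, x]`. To reach all entries, average over `θ` in balls of radius `r`: in odd dimension the
marginal of the ball has polynomial density in `r`, so a finite difference in `r` annihilates the
contribution of the error, which is supported where `⟪θ, v k - v l⟫` is small.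
-/

section SingularValues

/-- Square complex matrices of size `d`. -/
abbrev CMat (d : ℕ) := Matrix (Fin d) (Fin d) ℂ

variable {d : ℕ}

/-- The diagonal matrix with real entries `s`, as a complex matrix; it carries eigenvalues and
singular values. -/
def realDiagonal (s : Fin d → ℝ) : CMat d := diagonal fun i => (s i : ℂ)

lemma realDiagonal_mul (s t : Fin d → ℝ) :
    realDiagonal s * realDiagonal t = realDiagonal (s * t) := by
  simp [realDiagonal, diagonal_mul_diagonal]

lemma realDiagonal_sub (s t : Fin d → ℝ) :
    realDiagonal (s - t) = realDiagonal s - realDiagonal t := by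
  simp [realDiagonal, diagonal_sub]

lemma conjTranspose_realDiagonal (s : Fin d → ℝ) : (realDiagonal s)ᴴ = realDiagonal s := by
  simp [realDiagonal, diagonal_conjTranspose]

lemma conjTranspose_mul_self_of_mem_unitaryGroup {U : CMat d}
    (hU : U ∈ unitaryGroup (Fin d) ℂ) : Uᴴ * U = 1 :=
  mem_unitaryGroup_iff'.1 hU

lemma mul_conjTranspose_self_of_mem_unitaryGroup {U : CMat d}
    (hU : U ∈ unitaryGroup (Fin d) ℂ) : U * Uᴴ = 1 :=
  mem_unitaryGroup_iff.1 hU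

lemma conjTranspose_mem_unitaryGroup {U : CMat d} (hU : U ∈ unitaryGroup (Fin d) ℂ) :
    Uᴴ ∈ unitaryGroup (Fin d) ℂ :=
  Unitary.star_mem hU

lemma exists_unitary_diagonalization {A : CMat d} (hA : A.IsHermitian) :
    ∃ V ∈ unitaryGroup (Fin d) ℂ, A = V * realDiagonal hA.eigenvalues * Vᴴ := by
  have hspec := hA.spectral_theorem
  rw [Unitary.conjStarAlgAut_apply] at hspec
  exact ⟨hA.eigenvectorUnitary, hA.eigenvectorUnitary.2, hspec⟩

lemma singularValues_nonneg (M : CMat d) (i : Fin d) : 0 ≤ singularValues M i :=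
  Real.sqrt_nonneg _

open ComplexOrder in
lemma eigenvalues_conjTranspose_mul_self (M : CMat d) (i : Fin d) :
    (isHermitian_conjTranspose_mul_self M).eigenvalues i = singularValues M i ^ 2 :=
  (Real.sq_sqrt ((posSemidef_conjTranspose_mul_self M).eigenvalues_nonneg i)).symm

lemma sum_star_mul_self {ι : Type*} (s : Finset ι) (v : ι → ℂ) :
    ∑ k ∈ s, star (v k) * v k = ((∑ k ∈ s, ‖v k‖ ^ 2 : ℝ) : ℂ) := by
  push_cast
  exact sum_congr rfl fun k _ => Complex.conj_mul' (v k)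

lemma exists_unitary_mul_realDiagonal_eq {N : CMat d} {s : Fin d → ℝ}
    (hN : Nᴴ * N = realDiagonal (s ^ 2)) :
    ∃ W ∈ unitaryGroup (Fin d) ℂ, N = W * realDiagonal s := by
  have hgram : ∀ i j, ∑ k, star (N k i) * N k j = if i = j then ((s i ^ 2 : ℝ) : ℂ) else 0 :=
    fun i j => by
      simpa [mul_apply, conjTranspose_apply, realDiagonal, diagonal_apply]
        using congrFun (congrFun hN i) j
  let v : Fin d → EuclideanSpace ℂ (Fin d) :=
    fun i => WithLp.toLp 2 fun k => (s i : ℂ)⁻¹ * N k i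
  have hinner : ∀ i j, inner ℂ (v i) (v j) =
      (s i : ℂ)⁻¹ * (s j : ℂ)⁻¹ * if i = j then ((s i ^ 2 : ℝ) : ℂ) else 0 := fun i j => by
    rw [← hgram i j, PiLp.inner_apply, mul_sum]
    refine sum_congr rfl fun k _ => ?_
    simp [v]
    ring
  have hv : Orthonormal ℂ ({i | s i ≠ 0}.domRestrict v) := by
    rw [orthonormal_iff_ite]
    rintro ⟨i, hi⟩ ⟨j, hj⟩
    simp only [Set.domRestrict_apply, hinner, Subtype.mk.injEq]
    split_ifs with h
    · subst h
      have : (s i : ℂ) ≠ 0 := by exact_mod_cast hi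
      push_cast
      field_simp
    · simp
  obtain ⟨b, hb⟩ := hv.exists_orthonormalBasis_extension_of_card_eq (by simp)
  have hW : (of fun k i => b i k : CMat d) ∈ unitaryGroup (Fin d) ℂ :=
    (EuclideanSpace.basisFun (Fin d) ℂ).toMatrix_orthonormalBasis_mem_unitary b
  refine ⟨_, hW, Matrix.ext fun k i => ?_⟩
  rw [realDiagonal, mul_diagonal, of_apply]
  by_cases hi : s i = 0
  · have hcol : ∑ k, ‖N k i‖ ^ 2 = 0 := by
      have := hgram i i
      rw [sum_star_mul_self, if_pos rfl, hi, zero_pow two_ne_zero] at this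
      exact_mod_cast this
    have := (sum_eq_zero_iff_of_nonneg fun k _ => by positivity).1 hcol k (mem_univ k)
    simp_all
  · have : (s i : ℂ) ≠ 0 := by exact_mod_cast hi
    rw [hb i hi]
    simp [v]
    field_simp

lemma exists_svd (M : CMat d) :
    ∃ W ∈ unitaryGroup (Fin d) ℂ, ∃ V ∈ unitaryGroup (Fin d) ℂ,
      M = W * realDiagonal (singularValues M) * Vᴴ := by
  obtain ⟨V, hV, hdiag⟩ := exists_unitary_diagonalization (isHermitian_conjTranspose_mul_self M)
  have hVV := conjTranspose_mul_self_of_mem_unitaryGroup hV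
  have hgram : (M * V)ᴴ * (M * V) = realDiagonal (singularValues M ^ 2) := by
    calc (M * V)ᴴ * (M * V) = Vᴴ * (Mᴴ * M) * V := by
          simp only [conjTranspose_mul, Matrix.mul_assoc]
      _ = Vᴴ * V * realDiagonal (isHermitian_conjTranspose_mul_self M).eigenvalues *
            (Vᴴ * V) := by
          rw (occs := .pos [1]) [hdiag]
          simp only [Matrix.mul_assoc]
      _ = _ := by
          rw [hVV, Matrix.one_mul, Matrix.mul_one]
          exact congrArg realDiagonal (funext (eigenvalues_conjTranspose_mul_self M))
  obtain ⟨W, hW, hMV⟩ := exists_unitary_mul_realDiagonal_eq hgram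
  refine ⟨W, hW, V, hV, ?_⟩
  rw [← hMV, Matrix.mul_assoc, mul_conjTranspose_self_of_mem_unitaryGroup hV, Matrix.mul_one]

lemma conjTranspose_mul_mul_realDiagonal_mul {W : CMat d} (hW : W ∈ unitaryGroup (Fin d) ℂ)
    (V : CMat d) (s : Fin d → ℝ) :
    (W * realDiagonal s * Vᴴ)ᴴ * (W * realDiagonal s * Vᴴ) = V * realDiagonal (s ^ 2) * Vᴴ := by
  calc (W * realDiagonal s * Vᴴ)ᴴ * (W * realDiagonal s * Vᴴ)
      = V * (realDiagonal s * (Wᴴ * W) * realDiagonal s) * Vᴴ := by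
        simp only [conjTranspose_mul, conjTranspose_realDiagonal, conjTranspose_conjTranspose,
          Matrix.mul_assoc]
    _ = _ := by
        rw [conjTranspose_mul_self_of_mem_unitaryGroup hW, Matrix.mul_one, realDiagonal_mul, sq]

lemma map_singularValues_mul_realDiagonal_mul {W V : CMat d} {s : Fin d → ℝ}
    (hW : W ∈ unitaryGroup (Fin d) ℂ) (hV : V ∈ unitaryGroup (Fin d) ℂ) (hs : 0 ≤ s) :
    univ.val.map (singularValues (W * realDiagonal s * Vᴴ)) = univ.val.map s := by
  set M := W * realDiagonal s * Vᴴ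
  have hcharpoly : (Mᴴ * M).charpoly = (realDiagonal (s ^ 2)).charpoly := by
    rw [conjTranspose_mul_mul_realDiagonal_mul hW, Matrix.mul_assoc, charpoly_mul_comm,
      Matrix.mul_assoc, conjTranspose_mul_self_of_mem_unitaryGroup hV, Matrix.mul_one]
  have hroots := (isHermitian_conjTranspose_mul_self M).roots_charpoly_eq_eigenvalues
  rw [hcharpoly, realDiagonal, charpoly_diagonal, Polynomial.roots_prod _ _
    (prod_ne_zero_iff.2 fun a _ => Polynomial.X_sub_C_ne_zero _)] at hroots
  simp only [Polynomial.roots_X_sub_C, Multiset.bind_singleton] at hroots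
  have hsqrt := congrArg (Multiset.map fun z : ℂ => √z.re) hroots
  simp only [Multiset.map_map] at hsqrt
  have hs' : (fun z : ℂ => √z.re) ∘ (fun i => (((s ^ 2) i : ℝ) : ℂ)) = s :=
    funext fun i => Real.sqrt_sq (hs i)
  rw [hs'] at hsqrt
  exact hsqrt.symm

section Sum

variable {E : Type*} [AddCommMonoid E] (g : ℝ → E)

lemma sum_singularValues_mul_realDiagonal_mul {W V : CMat d} {s : Fin d → ℝ}
    (hW : W ∈ unitaryGroup (Fin d) ℂ) (hV : V ∈ unitaryGroup (Fin d) ℂ) (hs : 0 ≤ s) :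
    ∑ i, g (singularValues (W * realDiagonal s * Vᴴ) i) = ∑ i, g (s i) := by
  have h := congrArg (fun m => (m.map g).sum) (map_singularValues_mul_realDiagonal_mul hW hV hs)
  simp only [Multiset.map_map] at h
  exact h

lemma sum_singularValues_unitary_mul_mul {M U V : CMat d} (hU : U ∈ unitaryGroup (Fin d) ℂ)
    (hV : V ∈ unitaryGroup (Fin d) ℂ) :
    ∑ i, g (singularValues (U * M * Vᴴ) i) = ∑ i, g (singularValues M i) := by
  obtain ⟨W, hW, Z, hZ, hM⟩ := exists_svd M
  have hprod : U * M * Vᴴ = U * W * realDiagonal (singularValues M) * (V * Z)ᴴ := by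
    rw (occs := .pos [1]) [hM]
    simp only [Matrix.mul_assoc, conjTranspose_mul]
  rw [hprod]
  exact sum_singularValues_mul_realDiagonal_mul g (mul_mem hU hW) (mul_mem hV hZ)
    (singularValues_nonneg M)

lemma sum_singularValues_conjTranspose (M : CMat d) :
    ∑ i, g (singularValues Mᴴ i) = ∑ i, g (singularValues M i) := by
  obtain ⟨W, hW, Z, hZ, hM⟩ := exists_svd M
  have hadj : Mᴴ = Z * realDiagonal (singularValues M) * Wᴴ := by
    rw (occs := .pos [1]) [hM]
    simp only [Matrix.mul_assoc, conjTranspose_mul, conjTranspose_realDiagonal,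
      conjTranspose_conjTranspose]
  rw [hadj]
  exact sum_singularValues_mul_realDiagonal_mul g hZ hW (singularValues_nonneg M)

end Sum

/-- The `p`-th power of the Schatten norm, `∑ᵢ σᵢ(M)^p = tr |M|^p`. -/
noncomputable def schattenSum (p : ℝ) (M : CMat d) : ℝ := ∑ i, singularValues M i ^ p

lemma schattenSum_nonneg (p : ℝ) (M : CMat d) : 0 ≤ schattenSum p M :=
  sum_nonneg fun i _ => Real.rpow_nonneg (singularValues_nonneg M i) p

lemma schattenSum_unitary_mul_mul {M U V : CMat d} (hU : U ∈ unitaryGroup (Fin d) ℂ)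
    (hV : V ∈ unitaryGroup (Fin d) ℂ) (p : ℝ) : schattenSum p (U * M * Vᴴ) = schattenSum p M :=
  sum_singularValues_unitary_mul_mul (· ^ p) hU hV

lemma schattenSum_conjTranspose (M : CMat d) (p : ℝ) : schattenSum p Mᴴ = schattenSum p M :=
  sum_singularValues_conjTranspose (· ^ p) M

lemma schattenSum_mul_realDiagonal_mul {W V : CMat d} {s : Fin d → ℝ}
    (hW : W ∈ unitaryGroup (Fin d) ℂ) (hV : V ∈ unitaryGroup (Fin d) ℂ) (hs : 0 ≤ s) (p : ℝ) :
    schattenSum p (W * realDiagonal s * Vᴴ) = ∑ i, s i ^ p :=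
  sum_singularValues_mul_realDiagonal_mul (· ^ p) hW hV hs

lemma trace_conjTranspose_mul_self (M : CMat d) : (Mᴴ * M).trace = (schattenSum 2 M : ℂ) := by
  rw [(isHermitian_conjTranspose_mul_self M).trace_eq_sum_eigenvalues, schattenSum]
  push_cast
  refine sum_congr rfl fun i _ => ?_
  rw [eigenvalues_conjTranspose_mul_self, Real.rpow_two]
  rfl

lemma schattenSum_two (M : CMat d) : schattenSum 2 M = ∑ i, ∑ j, ‖M i j‖ ^ 2 := by
  have h : (Mᴴ * M).trace = ((∑ i, ∑ j, ‖M i j‖ ^ 2 : ℝ) : ℂ) := by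
    rw [sum_comm, Complex.ofReal_sum]
    exact sum_congr rfl fun j _ => sum_star_mul_self univ (M · j)
  exact_mod_cast (trace_conjTranspose_mul_self M).symm.trans h

end SingularValues

section Holder

lemma sum_mul_mul_le_of_doublySubstochastic {ι κ : Type*} [Fintype ι] [Fintype κ] {p q : ℝ}
    (hpq : p.HolderConjugate q) {w : ι → κ → ℝ} (hw : ∀ i j, 0 ≤ w i j)
    (hrow : ∀ i, ∑ j, w i j ≤ 1) (hcol : ∀ j, ∑ i, w i j ≤ 1) {a : ι → ℝ} {b : κ → ℝ}
    (ha : 0 ≤ a) (hb : 0 ≤ b) :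
    ∑ i, ∑ j, a i * b j * w i j ≤ (∑ i, a i ^ p) ^ (1 / p) * (∑ j, b j ^ q) ^ (1 / q) := by
  have hp := hpq.pos
  have hq := hpq.symm.pos
  have hwpow : ∀ r : ℝ, ∀ i j, 0 ≤ w i j ^ r := fun r i j => Real.rpow_nonneg (hw i j) r
  have hsplit : ∀ i j, w i j ^ (1 / p) * w i j ^ (1 / q) = w i j := fun i j => by
    rw [← Real.rpow_add_of_nonneg (hw i j) (by positivity) (by positivity), one_div, one_div,
      hpq.inv_add_inv_eq_one, Real.rpow_one]
  have hcancel : ∀ {r x : ℝ}, 0 < r → 0 ≤ x → ∀ i j,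
      (x * w i j ^ (1 / r)) ^ r = x ^ r * w i j := fun hr hx i j => by
    rw [Real.mul_rpow hx (hwpow _ i j), ← Real.rpow_mul (hw i j), one_div_mul_cancel hr.ne',
      Real.rpow_one]
  have hsum_a : ∑ z : ι × κ, (a z.1 * w z.1 z.2 ^ (1 / p)) ^ p ≤ ∑ i, a i ^ p := by
    simp only [Fintype.sum_prod_type, hcancel hp (ha _), ← mul_sum]
    exact sum_le_sum fun i _ => mul_le_of_le_one_right (Real.rpow_nonneg (ha i) p) (hrow i)
  have hsum_b : ∑ z : ι × κ, (b z.2 * w z.1 z.2 ^ (1 / q)) ^ q ≤ ∑ j, b j ^ q := by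
    simp only [Fintype.sum_prod_type_right, hcancel hq (hb _), ← mul_sum]
    exact sum_le_sum fun j _ => mul_le_of_le_one_right (Real.rpow_nonneg (hb j) q) (hcol j)
  calc ∑ i, ∑ j, a i * b j * w i j
      = ∑ z : ι × κ, (a z.1 * w z.1 z.2 ^ (1 / p)) * (b z.2 * w z.1 z.2 ^ (1 / q)) := by
        rw [Fintype.sum_prod_type]
        refine sum_congr rfl fun i _ => sum_congr rfl fun j _ => ?_
        rw [mul_mul_mul_comm, hsplit]
    _ ≤ (∑ z : ι × κ, (a z.1 * w z.1 z.2 ^ (1 / p)) ^ p) ^ (1 / p) *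
          (∑ z : ι × κ, (b z.2 * w z.1 z.2 ^ (1 / q)) ^ q) ^ (1 / q) :=
        Real.inner_le_Lp_mul_Lq_of_nonneg univ hpq
          (fun z _ => mul_nonneg (ha _) (hwpow _ _ _)) (fun z _ => mul_nonneg (hb _) (hwpow _ _ _))
    _ ≤ _ := by
        have hnonneg_a := sum_nonneg fun z (_ : z ∈ (univ : Finset (ι × κ))) =>
          Real.rpow_nonneg (mul_nonneg (ha z.1) (hwpow (1 / p) z.1 z.2)) p
        have hnonneg_b := sum_nonneg fun z (_ : z ∈ (univ : Finset (ι × κ))) =>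
          Real.rpow_nonneg (mul_nonneg (hb z.2) (hwpow (1 / q) z.1 z.2)) q
        gcongr
        exact Real.rpow_nonneg (sum_nonneg fun i _ => Real.rpow_nonneg (ha i) p) _

variable {d : ℕ}

lemma sum_norm_sq_row_of_mem_unitaryGroup {P : CMat d} (hP : P ∈ unitaryGroup (Fin d) ℂ)
    (i : Fin d) : ∑ j, ‖P i j‖ ^ 2 = 1 := by
  have h : ∑ j, P i j * star (P i j) = 1 := by
    simpa [mul_apply] using congrFun (congrFun (mul_conjTranspose_self_of_mem_unitaryGroup hP) i) i
  simp only [mul_comm (P i _), sum_star_mul_self] at h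
  exact_mod_cast h

lemma sum_norm_sq_col_of_mem_unitaryGroup {P : CMat d} (hP : P ∈ unitaryGroup (Fin d) ℂ)
    (j : Fin d) : ∑ i, ‖P i j‖ ^ 2 = 1 := by
  simpa using sum_norm_sq_row_of_mem_unitaryGroup (conjTranspose_mem_unitaryGroup hP) j

lemma exists_doublySubstochastic_norm_trace_mul_le (A B : CMat d) :
    ∃ w : Fin d → Fin d → ℝ, (∀ i j, 0 ≤ w i j) ∧ (∀ i, ∑ j, w i j ≤ 1) ∧
      (∀ j, ∑ i, w i j ≤ 1) ∧
      ‖(A * B).trace‖ ≤ ∑ i, ∑ j, singularValues A i * singularValues B j * w i j := by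
  obtain ⟨W, hW, V, hV, hA⟩ := exists_svd A
  obtain ⟨Z, hZ, Y, hY, hB⟩ := exists_svd B
  set σ := singularValues A
  set τ := singularValues B
  have hP : Vᴴ * Z ∈ unitaryGroup (Fin d) ℂ := mul_mem (conjTranspose_mem_unitaryGroup hV) hZ
  have hQ : Yᴴ * W ∈ unitaryGroup (Fin d) ℂ := mul_mem (conjTranspose_mem_unitaryGroup hY) hW
  have htrace : (A * B).trace =
      ∑ i, ∑ j, (σ i : ℂ) * (Vᴴ * Z) i j * ((τ j : ℂ) * (Yᴴ * W) j i) := by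
    have hcycle : (A * B).trace =
        (realDiagonal σ * (Vᴴ * Z) * (realDiagonal τ * (Yᴴ * W))).trace := by
      rw [hA, hB, Matrix.mul_assoc W, Matrix.mul_assoc W, Matrix.trace_mul_comm W]
      simp only [Matrix.mul_assoc]
    rw [hcycle, Matrix.trace]
    refine sum_congr rfl fun i _ => ?_
    rw [Matrix.diag_apply, Matrix.mul_apply]
    simp only [realDiagonal, diagonal_mul]
  have hamgm : ∀ i j, ‖(Vᴴ * Z) i j‖ * ‖(Yᴴ * W) j i‖ ≤
      (‖(Vᴴ * Z) i j‖ ^ 2 + ‖(Yᴴ * W) j i‖ ^ 2) / 2 := fun i j => by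
    linarith [two_mul_le_add_sq ‖(Vᴴ * Z) i j‖ ‖(Yᴴ * W) j i‖]
  refine ⟨fun i j => ‖(Vᴴ * Z) i j‖ * ‖(Yᴴ * W) j i‖, fun i j => by positivity, fun i => ?_,
    fun j => ?_, ?_⟩
  · refine (sum_le_sum fun j _ => hamgm i j).trans_eq ?_
    rw [← sum_div, sum_add_distrib, sum_norm_sq_row_of_mem_unitaryGroup hP,
      sum_norm_sq_col_of_mem_unitaryGroup hQ]
    norm_num
  · refine (sum_le_sum fun i _ => hamgm i j).trans_eq ?_
    rw [← sum_div, sum_add_distrib, sum_norm_sq_col_of_mem_unitaryGroup hP,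
      sum_norm_sq_row_of_mem_unitaryGroup hQ]
    norm_num
  · rw [htrace]
    refine (norm_sum_le _ _).trans (sum_le_sum fun i _ => (norm_sum_le _ _).trans_eq ?_)
    refine sum_congr rfl fun j _ => ?_
    simp only [norm_mul, Complex.norm_real, Real.norm_of_nonneg (singularValues_nonneg A i),
      Real.norm_of_nonneg (singularValues_nonneg B j), σ, τ]
    ring

lemma norm_trace_mul_le {p q : ℝ} (hpq : p.HolderConjugate q) (A B : CMat d) :
    ‖(A * B).trace‖ ≤ schattenNorm p A * schattenNorm q B := by
  obtain ⟨w, hw, hrow, hcol, htrace⟩ := exists_doublySubstochastic_norm_trace_mul_le A B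
  exact htrace.trans (sum_mul_mul_le_of_doublySubstochastic hpq hw hrow hcol
    (singularValues_nonneg A) (singularValues_nonneg B))

lemma exists_trace_mul_eq_schattenSum {p q : ℝ} (hpq : p.HolderConjugate q) (M : CMat d) :
    ∃ g : CMat d, (M * g).trace = (schattenSum p M : ℂ) ∧ schattenSum q g = schattenSum p M := by
  obtain ⟨W, hW, V, hV, hM⟩ := exists_svd M
  set σ := singularValues M
  have hσ0 : 0 ≤ σ := singularValues_nonneg M
  refine ⟨V * realDiagonal (fun i => σ i ^ (p - 1)) * Wᴴ, ?_, ?_⟩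
  · have hpow : σ * (fun i => σ i ^ (p - 1)) = fun i => σ i ^ p := funext fun i => by
      have := Real.rpow_add_of_nonneg (hσ0 i) zero_le_one (sub_nonneg.2 hpq.lt.le)
      rw [Real.rpow_one, add_sub_cancel] at this
      exact this.symm
    calc (M * (V * realDiagonal (fun i => σ i ^ (p - 1)) * Wᴴ)).trace
        = (W * (realDiagonal σ * (Vᴴ * V) * realDiagonal (fun i => σ i ^ (p - 1)) * Wᴴ)).trace := by
          rw (occs := .pos [1]) [hM]
          simp only [Matrix.mul_assoc]
      _ = (realDiagonal (fun i => σ i ^ p) * (Wᴴ * W)).trace := by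
          rw [conjTranspose_mul_self_of_mem_unitaryGroup hV, Matrix.mul_one, realDiagonal_mul,
            hpow, Matrix.trace_mul_comm, Matrix.mul_assoc]
      _ = (schattenSum p M : ℂ) := by
          rw [conjTranspose_mul_self_of_mem_unitaryGroup hW, Matrix.mul_one, realDiagonal,
            trace_diagonal, schattenSum, Complex.ofReal_sum]
  · rw [schattenSum_mul_realDiagonal_mul hV hW (fun i => Real.rpow_nonneg (hσ0 i) _)]
    refine sum_congr rfl fun i _ => ?_
    rw [← Real.rpow_mul (hσ0 i), hpq.sub_one_mul_conj]

end Holder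

section SchattenFamily

variable {Ω : Type*} [Fintype Ω] {d : ℕ}

/-- The norm of `L^p(Ω; S^p)` for the counting measure on a finite type `Ω`: the Schatten norm of
a finite family of matrices, regarded as one block-diagonal matrix. -/
noncomputable def familySchattenNorm (p : ℝ) (f : Ω → CMat d) : ℝ :=
  (∑ ω, schattenSum p (f ω)) ^ (1 / p)

/-- The bilinear pairing `∑_ω tr (f(ω) g(ω))` realizing the duality of `L^p(Ω; S^p)` and
`L^q(Ω; S^q)`. -/
def tracePairing (f g : Ω → CMat d) : ℂ := ∑ ω, (f ω * g ω).trace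

lemma tracePairing_add_left (f f' g : Ω → CMat d) :
    tracePairing (f + f') g = tracePairing f g + tracePairing f' g := by
  simp [tracePairing, add_mul, sum_add_distrib]

lemma tracePairing_smul_left (c : ℂ) (f g : Ω → CMat d) :
    tracePairing (c • f) g = c * tracePairing f g := by
  simp [tracePairing, mul_sum]

lemma sum_schattenSum_nonneg (p : ℝ) (f : Ω → CMat d) : 0 ≤ ∑ ω, schattenSum p (f ω) :=
  sum_nonneg fun ω _ => schattenSum_nonneg p (f ω)

lemma familySchattenNorm_nonneg (p : ℝ) (f : Ω → CMat d) : 0 ≤ familySchattenNorm p f :=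
  Real.rpow_nonneg (sum_schattenSum_nonneg p f) _

lemma schattenNorm_nonneg (p : ℝ) (M : CMat d) : 0 ≤ schattenNorm p M :=
  Real.rpow_nonneg (schattenSum_nonneg p M) _

lemma schattenNorm_rpow {p : ℝ} (hp : p ≠ 0) (M : CMat d) :
    schattenNorm p M ^ p = schattenSum p M := by
  rw [schattenNorm, ← schattenSum, ← Real.rpow_mul (schattenSum_nonneg p M),
    one_div_mul_cancel hp, Real.rpow_one]

lemma norm_tracePairing_le {p q : ℝ} (hpq : p.HolderConjugate q) (f g : Ω → CMat d) :
    ‖tracePairing f g‖ ≤ familySchattenNorm p f * familySchattenNorm q g := by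
  calc ‖tracePairing f g‖ ≤ ∑ ω, schattenNorm p (f ω) * schattenNorm q (g ω) :=
        (norm_sum_le _ _).trans (sum_le_sum fun ω _ => norm_trace_mul_le hpq (f ω) (g ω))
    _ ≤ _ := Real.inner_le_Lp_mul_Lq_of_nonneg univ hpq (fun ω _ => schattenNorm_nonneg p (f ω))
        (fun ω _ => schattenNorm_nonneg q (g ω))
    _ = _ := by
        simp only [schattenNorm_rpow hpq.ne_zero, schattenNorm_rpow hpq.symm.ne_zero,
          familySchattenNorm]

lemma familySchattenNorm_le_of_forall_norm_tracePairing_le {p q : ℝ} (hpq : p.HolderConjugate q)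
    {f : Ω → CMat d} {c : ℝ} (hc : 0 ≤ c)
    (h : ∀ g : Ω → CMat d, ‖tracePairing f g‖ ≤ c * familySchattenNorm q g) :
    familySchattenNorm p f ≤ c := by
  choose g htrace hsum using fun ω => exists_trace_mul_eq_schattenSum hpq (f ω)
  set S := ∑ ω, schattenSum p (f ω) with hS
  have hpair : tracePairing f g = (S : ℂ) := by
    simp only [tracePairing, htrace, hS, Complex.ofReal_sum]
  have hbound : S ≤ c * S ^ (1 / q) := by
    have := h g
    rw [hpair, Complex.norm_real, familySchattenNorm] at this
    simp only [hsum] at this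
    exact (le_abs_self S).trans this
  rcases (sum_schattenSum_nonneg p f).eq_or_lt with hzero | hpos
  · rw [familySchattenNorm, ← hzero, Real.zero_rpow (one_div_ne_zero hpq.ne_zero)]
    exact hc
  · have hsplit : S ^ (1 / p) * S ^ (1 / q) = S := by
      rw [← Real.rpow_add hpos, one_div, one_div, hpq.inv_add_inv_eq_one, Real.rpow_one]
    exact le_of_mul_le_mul_right (hsplit.trans_le hbound) (Real.rpow_pos_of_pos hpos _)

variable {p : ℝ} (hp : 1 < p)
include hp

lemma familySchattenNorm_add_le (f g : Ω → CMat d) :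
    familySchattenNorm p (f + g) ≤ familySchattenNorm p f + familySchattenNorm p g := by
  have hpq := Real.HolderConjugate.conjExponent hp
  refine familySchattenNorm_le_of_forall_norm_tracePairing_le hpq
    (add_nonneg (familySchattenNorm_nonneg _ _) (familySchattenNorm_nonneg _ _)) fun h => ?_
  rw [tracePairing_add_left, add_mul]
  exact (norm_add_le _ _).trans
    (add_le_add (norm_tracePairing_le hpq _ _) (norm_tracePairing_le hpq _ _))

lemma familySchattenNorm_smul_le (c : ℂ) (f : Ω → CMat d) :
    familySchattenNorm p (c • f) ≤ ‖c‖ * familySchattenNorm p f := by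
  have hpq := Real.HolderConjugate.conjExponent hp
  refine familySchattenNorm_le_of_forall_norm_tracePairing_le hpq
    (mul_nonneg (norm_nonneg _) (familySchattenNorm_nonneg _ _)) fun g => ?_
  rw [tracePairing_smul_left, norm_mul, mul_assoc]
  exact mul_le_mul_of_nonneg_left (norm_tracePairing_le hpq _ _) (norm_nonneg _)

end SchattenFamily

section SingularCount

variable {d : ℕ}

/-- The number of singular values of `A` exceeding `t`, that is, the trace of the spectral
projection `1_{(t,∞)}(|A|)`. -/
noncomputable def singularCount (t : ℝ) (A : CMat d) : ℕ := #{i | t < singularValues A i}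

lemma norm_toLp_mulVec_of_mem_unitaryGroup {W : CMat d} (hW : W ∈ unitaryGroup (Fin d) ℂ)
    (v : Fin d → ℂ) : ‖WithLp.toLp 2 (W *ᵥ v)‖ = ‖WithLp.toLp 2 v‖ := by
  have hnorm : ∀ u : Fin d → ℂ, ((‖WithLp.toLp 2 u‖ ^ 2 : ℝ) : ℂ) = star u ⬝ᵥ u := fun u => by
    rw [EuclideanSpace.norm_sq_eq, ← sum_star_mul_self univ u]
    rfl
  have hsq : ‖WithLp.toLp 2 (W *ᵥ v)‖ ^ 2 = ‖WithLp.toLp 2 v‖ ^ 2 := by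
    have := hnorm (W *ᵥ v)
    rw [star_mulVec, dotProduct_mulVec, vecMul_vecMul,
      conjTranspose_mul_self_of_mem_unitaryGroup hW, vecMul_one, ← hnorm v] at this
    exact_mod_cast this
  exact (pow_left_inj₀ (norm_nonneg _) (norm_nonneg _) two_ne_zero).1 hsq

lemma exists_unitary_norm_sq_mulVec (A : CMat d) :
    ∃ V ∈ unitaryGroup (Fin d) ℂ, ∀ v : Fin d → ℂ,
      ‖WithLp.toLp 2 v‖ ^ 2 = ∑ i, ‖(V *ᵥ v) i‖ ^ 2 ∧
      ‖WithLp.toLp 2 (A *ᵥ v)‖ ^ 2 = ∑ i, singularValues A i ^ 2 * ‖(V *ᵥ v) i‖ ^ 2 := by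
  obtain ⟨W, hW, V, hV, hA⟩ := exists_svd A
  have hV' := conjTranspose_mem_unitaryGroup hV
  refine ⟨Vᴴ, hV', fun v => ⟨?_, ?_⟩⟩
  · rw [← norm_toLp_mulVec_of_mem_unitaryGroup hV' v, EuclideanSpace.norm_sq_eq]
  · rw (occs := .pos [1]) [hA]
    rw [Matrix.mul_assoc, ← mulVec_mulVec, norm_toLp_mulVec_of_mem_unitaryGroup hW,
      ← mulVec_mulVec, EuclideanSpace.norm_sq_eq]
    simp [realDiagonal, mulVec_diagonal, mul_pow]

lemma exists_submodule_forall_mulVec_eq_zero (V : CMat d) (s : Finset (Fin d)) :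
    ∃ T : Submodule ℂ (Fin d → ℂ), d ≤ Module.finrank ℂ T + #s ∧
      ∀ v ∈ T, ∀ i ∈ s, (V *ᵥ v) i = 0 := by
  let φ : (Fin d → ℂ) →ₗ[ℂ] (s → ℂ) := LinearMap.funLeft ℂ ℂ Subtype.val ∘ₗ V.mulVecLin
  refine ⟨LinearMap.ker φ, ?_, fun v hv i hi => congrFun (LinearMap.mem_ker.1 hv) ⟨i, hi⟩⟩
  have hrank := φ.finrank_range_add_finrank_ker
  have hrange := (LinearMap.range φ).finrank_le
  simp only [Module.finrank_fintype_fun_eq_card, Fintype.card_coe, Fintype.card_fin]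
    at hrank hrange
  omega

lemma exists_submodule_norm_mulVec_le {t : ℝ} (ht : 0 ≤ t) (A : CMat d) :
    ∃ T : Submodule ℂ (Fin d → ℂ), d ≤ Module.finrank ℂ T + singularCount t A ∧
      ∀ v ∈ T, ‖WithLp.toLp 2 (A *ᵥ v)‖ ≤ t * ‖WithLp.toLp 2 v‖ := by
  obtain ⟨V, -, hV⟩ := exists_unitary_norm_sq_mulVec A
  obtain ⟨T, hT, hzero⟩ := exists_submodule_forall_mulVec_eq_zero V {i | t < singularValues A i}
  refine ⟨T, hT, fun v hv => le_of_sq_le_sq ?_ (by positivity)⟩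
  rw [mul_pow, (hV v).1, (hV v).2, mul_sum]
  refine sum_le_sum fun i _ => ?_
  by_cases hi : t < singularValues A i
  · simp [hzero v hv i (by simpa using hi)]
  · have := singularValues_nonneg A i
    have := not_lt.1 hi
    gcongr

lemma exists_submodule_lt_norm_mulVec {t : ℝ} (ht : 0 ≤ t) (A : CMat d) :
    ∃ T : Submodule ℂ (Fin d → ℂ), singularCount t A ≤ Module.finrank ℂ T ∧
      ∀ v ∈ T, v ≠ 0 → t * ‖WithLp.toLp 2 v‖ < ‖WithLp.toLp 2 (A *ᵥ v)‖ := by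
  obtain ⟨V, -, hV⟩ := exists_unitary_norm_sq_mulVec A
  obtain ⟨T, hT, hzero⟩ := exists_submodule_forall_mulVec_eq_zero V {i | ¬ t < singularValues A i}
  have hcard := card_filter_add_card_filter_not (s := univ) fun i => t < singularValues A i
  rw [card_univ, Fintype.card_fin] at hcard
  refine ⟨T, by rw [singularCount]; omega, fun v hv hv0 => ?_⟩
  refine lt_of_pow_lt_pow_left₀ 2 (norm_nonneg _) ?_
  have hpos : 0 < ∑ i, ‖(V *ᵥ v) i‖ ^ 2 := by
    rw [← (hV v).1]
    have : WithLp.toLp 2 v ≠ 0 := by simpa using hv0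
    positivity
  obtain ⟨i, -, hi⟩ := exists_ne_zero_of_sum_ne_zero hpos.ne'
  have hsupp : ∀ j, (V *ᵥ v) j ≠ 0 → t < singularValues A j := fun j hj => by
    by_contra h
    exact hj (hzero v hv j (by simpa using h))
  rw [mul_pow, (hV v).1, (hV v).2, mul_sum]
  refine sum_lt_sum (fun j _ => ?_) ⟨i, mem_univ i, ?_⟩
  · by_cases hj : (V *ᵥ v) j = 0
    · simp [hj]
    · have := (hsupp j hj).le
      gcongr
  · have := hsupp i (by simpa using hi)
    gcongr

lemma singularCount_add_le {s t : ℝ} (hs : 0 ≤ s) (ht : 0 ≤ t) (A B : CMat d) :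
    singularCount (s + t) (A + B) ≤ singularCount s A + singularCount t B := by
  obtain ⟨S, hSdim, hS⟩ := exists_submodule_norm_mulVec_le hs A
  obtain ⟨T, hTdim, hT⟩ := exists_submodule_norm_mulVec_le ht B
  obtain ⟨R, hRdim, hR⟩ := exists_submodule_lt_norm_mulVec (add_nonneg hs ht) (A + B)
  have hdisj : Disjoint (S ⊓ T) R := by
    refine Submodule.disjoint_def.2 fun v hv hvR => by_contra fun hv0 => ?_
    have hle : ‖WithLp.toLp 2 ((A + B) *ᵥ v)‖ ≤ (s + t) * ‖WithLp.toLp 2 v‖ := by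
      rw [add_mulVec, WithLp.toLp_add, add_mul]
      exact (norm_add_le _ _).trans (add_le_add (hS v hv.1) (hT v hv.2))
    exact hle.not_gt (hR v hvR hv0)
  have hsum := Submodule.finrank_sup_add_finrank_inf_eq S T
  have hsup := (S ⊔ T).finrank_le
  have htotal := Submodule.finrank_add_finrank_le_of_disjoint hdisj
  rw [Module.finrank_fin_fun] at hsup htotal
  omega

open ComplexOrder in
lemma singularCount_zero (A : CMat d) : singularCount 0 A = A.rank := by
  have hrank := (isHermitian_conjTranspose_mul_self A).rank_eq_card_non_zero_eigs
  rw [rank_conjTranspose_mul_self, Fintype.card_subtype] at hrank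
  rw [hrank, singularCount]
  congr 1
  ext i
  simp only [mem_filter, mem_univ, true_and, eigenvalues_conjTranspose_mul_self]
  rw [(singularValues_nonneg A i).lt_iff_ne', pow_ne_zero_iff two_ne_zero]

lemma singularCount_le_singularCount_compress {t : ℝ} (ht : 0 ≤ t) (q A : CMat d) :
    singularCount t A ≤ singularCount t (q * A * q) + 2 * (1 - q).rank := by
  have hsplit : A = q * A * q + ((1 - q) * A + q * A * (1 - q)) := by noncomm_ring
  have hcount := singularCount_add_le ht le_rfl (q * A * q) ((1 - q) * A + q * A * (1 - q))
  rw [← hsplit, add_zero, singularCount_zero] at hcount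
  have hadd := singularCount_add_le le_rfl le_rfl ((1 - q) * A) (q * A * (1 - q))
  rw [add_zero] at hadd
  simp only [singularCount_zero] at hadd
  have hleft := rank_mul_le_left (1 - q) A
  have hright := rank_mul_le_right (q * A) (1 - q)
  omega

lemma singularCount_le_rpow_mul_schattenSum {t r : ℝ} (ht : 0 < t) (hr : 0 < r) (A : CMat d) :
    (singularCount t A : ℝ) ≤ t ^ (-r) * schattenSum r A := by
  rw [singularCount, ← sum_boole, schattenSum, mul_sum]
  refine sum_le_sum fun i _ => ?_
  split_ifs with h
  · rw [Real.rpow_neg ht.le, ← div_eq_inv_mul, one_le_div (by positivity)]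
    exact Real.rpow_le_rpow ht.le h.le hr.le
  · exact mul_nonneg (by positivity) (Real.rpow_nonneg (singularValues_nonneg _ _) _)

lemma rank_eq_trace_of_isIdempotentElem {q : CMat d} (hq : IsIdempotentElem q) :
    (q.rank : ℂ) = q.trace := by
  have hproj := LinearMap.IsIdempotentElem.isProj_range q.toLin'
    (hq.map (toLinAlgEquiv' (R := ℂ)))
  rw [← trace_toLin'_eq, hproj.trace]
  rfl

end SingularCount

section LoewnerOrder

open scoped MatrixOrder ComplexOrder

variable {d : ℕ}

/-- The real part of the trace, as a real-linear functional; on Hermitian matrices it is the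
trace itself. -/
noncomputable def reTrace : CMat d →ₗ[ℝ] ℝ :=
  Complex.reLm ∘ₗ traceLinearMap (Fin d) ℝ ℂ

lemma reTrace_apply (A : CMat d) : reTrace A = A.trace.re := rfl

lemma reTrace_mul_comm (A B : CMat d) : reTrace (A * B) = reTrace (B * A) := by
  rw [reTrace_apply, trace_mul_comm, reTrace_apply]

lemma reTrace_mul_realDiagonal_mul {V : CMat d} (hV : V ∈ unitaryGroup (Fin d) ℂ)
    (s : Fin d → ℝ) : reTrace (V * realDiagonal s * Vᴴ) = ∑ i, s i := by
  rw [reTrace_mul_comm, ← Matrix.mul_assoc, conjTranspose_mul_self_of_mem_unitaryGroup hV,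
    Matrix.one_mul, reTrace_apply, realDiagonal, trace_diagonal, Complex.re_sum]
  simp only [Complex.ofReal_re]

lemma reTrace_nonneg {A : CMat d} (hA : 0 ≤ A) : 0 ≤ reTrace A :=
  (Complex.le_def.1 (nonneg_iff_posSemidef.1 hA).trace_nonneg).1

lemma reTrace_mono {A B : CMat d} (h : A ≤ B) : reTrace A ≤ reTrace B := by
  rw [← sub_nonneg, ← map_sub]
  exact reTrace_nonneg (sub_nonneg.2 h)

lemma reTrace_mul_nonneg {A B : CMat d} (hA : 0 ≤ A) (hB : 0 ≤ B) : 0 ≤ reTrace (A * B) := by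
  obtain ⟨C, rfl⟩ := CStarAlgebra.nonneg_iff_eq_star_mul_self.1 hA
  rw [Matrix.mul_assoc, reTrace_mul_comm]
  exact reTrace_nonneg (star_right_conjugate_nonneg hB C)

lemma reTrace_mul_mul_self {e : CMat d} (he : IsIdempotentElem e) (A : CMat d) :
    reTrace (e * A * e) = reTrace (e * A) := by
  rw [reTrace_mul_comm, ← Matrix.mul_assoc, he.eq]

lemma mul_realDiagonal_mul_nonneg (V : CMat d) {s : Fin d → ℝ} (hs : ∀ i, 0 ≤ s i) :
    0 ≤ V * realDiagonal s * Vᴴ := by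
  refine star_right_conjugate_nonneg (nonneg_iff_posSemidef.2 ?_) V
  exact posSemidef_diagonal_iff.2 fun i => by exact_mod_cast hs i

lemma schattenSum_two_eq_reTrace (M : CMat d) : schattenSum 2 M = reTrace (Mᴴ * M) := by
  rw [reTrace_apply, trace_conjTranspose_mul_self, Complex.ofReal_re]

lemma schattenSum_two_add_of_conjTranspose_mul_eq_zero {A B : CMat d} (h : Aᴴ * B = 0) :
    schattenSum 2 (A + B) = schattenSum 2 A + schattenSum 2 B := by
  have h' : Bᴴ * A = 0 := by simpa using congrArg conjTranspose h
  simp only [schattenSum_two_eq_reTrace, ← map_add]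
  rw [conjTranspose_add, Matrix.add_mul, Matrix.mul_add, Matrix.mul_add, h, h', add_zero,
    zero_add]

lemma schattenSum_two_mul_le {q : CMat d} (hq : IsStarProjection q) (X : CMat d) :
    schattenSum 2 (q * X) ≤ schattenSum 2 X := by
  have orthogonal : (q * X)ᴴ * ((1 - q) * X) = 0 := by
    rw [conjTranspose_mul, ← star_eq_conjTranspose q, hq.isSelfAdjoint.star_eq, Matrix.mul_assoc,
      ← Matrix.mul_assoc q, hq.isIdempotentElem.mul_one_sub_self, Matrix.zero_mul, Matrix.mul_zero]
  calc schattenSum 2 (q * X) ≤ schattenSum 2 (q * X) + schattenSum 2 ((1 - q) * X) :=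
        le_add_of_nonneg_right (schattenSum_nonneg _ _)
    _ = schattenSum 2 X := by
        rw [← schattenSum_two_add_of_conjTranspose_mul_eq_zero orthogonal, ← Matrix.add_mul,
          add_sub_cancel, Matrix.one_mul]

lemma schattenSum_two_compress_le {q : CMat d} (hq : IsStarProjection q) (X : CMat d) :
    schattenSum 2 (q * X * q) ≤ schattenSum 2 X :=
  calc schattenSum 2 (q * X * q) = schattenSum 2 (q * (q * X)ᴴ) := by
        rw [← schattenSum_conjTranspose, conjTranspose_mul, ← star_eq_conjTranspose q,
          hq.isSelfAdjoint.star_eq]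
    _ ≤ schattenSum 2 (q * X) := by
        rw [← schattenSum_conjTranspose (q * X)]
        exact schattenSum_two_mul_le hq _
    _ ≤ schattenSum 2 X := schattenSum_two_mul_le hq X

lemma schattenSum_two_le_mul_reTrace {A e : CMat d} {c : ℝ} (hA : 0 ≤ A) (hc : A ≤ c • e)
    (hAe : A * e = A) : schattenSum 2 A ≤ c * reTrace A := by
  have h := reTrace_mul_nonneg hA (sub_nonneg.2 hc)
  rw [Matrix.mul_sub, Matrix.mul_smul, hAe, map_sub, map_smul, smul_eq_mul, sub_nonneg] at h
  rwa [schattenSum_two_eq_reTrace, (nonneg_iff_posSemidef.1 hA).isHermitian.eq]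

/-- The spectral projection `1_{(l,∞)}(H)` of a Hermitian matrix, through the continuous
functional calculus (every function is continuous on the finite spectrum of a matrix). -/
noncomputable def spectralProjection (l : ℝ) (H : CMat d) : CMat d :=
  cfc (fun t : ℝ => if l < t then 1 else 0) H

lemma continuousOn_spectrum (H : CMat d) (u : ℝ → ℝ) : ContinuousOn u (spectrum ℝ H) :=
  (finite_real_spectrum (A := H)).continuousOn u

lemma isStarProjection_spectralProjection (l : ℝ) (H : CMat d) :
    IsStarProjection (spectralProjection l H) where
  isIdempotentElem := by
    rw [IsIdempotentElem, spectralProjection,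
      ← cfc_mul _ _ H (continuousOn_spectrum H _) (continuousOn_spectrum H _)]
    congr 1
    ext t
    split_ifs <;> simp
  isSelfAdjoint := cfc_predicate _ H

lemma cfc_mul_matrix {H : CMat d} (hH : IsSelfAdjoint H) (u : ℝ → ℝ) :
    cfc u H * H = cfc (fun t => u t * t) H := by
  rw [cfc_mul u (fun t => t) H (continuousOn_spectrum H u) (continuousOn_spectrum H _),
    cfc_id' ℝ H hH]

lemma commute_spectralProjection {H : CMat d} (hH : IsSelfAdjoint H) (l : ℝ) :
    Commute (spectralProjection l H) H := by
  have hcomm := cfc_commute_cfc (fun t : ℝ => if l < t then 1 else 0) (fun t => t) H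
  rwa [cfc_id' ℝ H hH] at hcomm

lemma smul_spectralProjection_le {H : CMat d} (hH : IsSelfAdjoint H) (l : ℝ) :
    l • spectralProjection l H ≤ spectralProjection l H * H := by
  rw [spectralProjection, cfc_mul_matrix hH, ← cfc_const_mul l _ H (continuousOn_spectrum H _)]
  refine cfc_mono (fun t _ => ?_) (continuousOn_spectrum H _) (continuousOn_spectrum H _)
  split_ifs with h
  · simpa using h.le
  · simp

lemma one_sub_spectralProjection_mul_le {H : CMat d} (hH : IsSelfAdjoint H) (l : ℝ) :
    (1 - spectralProjection l H) * H ≤ l • (1 - spectralProjection l H) := by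
  have hcompl : 1 - spectralProjection l H = cfc (fun t : ℝ => 1 - if l < t then 1 else 0) H := by
    rw [cfc_sub _ _ H (continuousOn_spectrum H _) (continuousOn_spectrum H _),
      cfc_const_one ℝ H hH, spectralProjection]
  rw [hcompl, cfc_mul_matrix hH, ← cfc_const_mul l _ H (continuousOn_spectrum H _)]
  refine cfc_mono (fun t _ => ?_) (continuousOn_spectrum H _) (continuousOn_spectrum H _)
  split_ifs with h
  · simp
  · simpa using not_lt.1 h

lemma mul_spectralProjection_of_mul_eq {e H : CMat d} (hH : IsSelfAdjoint H) (heH : e * H = H)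
    {l : ℝ} (hl : 0 < l) : e * spectralProjection l H = spectralProjection l H := by
  have factor : spectralProjection l H = H * cfc (fun t : ℝ => if l < t then t⁻¹ else 0) H := by
    have hcomm := cfc_commute_cfc (fun t : ℝ => if l < t then t⁻¹ else 0) (fun t => t) H
    rw [cfc_id' ℝ H hH] at hcomm
    rw [← hcomm.eq, cfc_mul_matrix hH, spectralProjection]
    congr 1
    ext t
    split_ifs with h
    · rw [inv_mul_cancel₀ (hl.trans h).ne']
    · rw [zero_mul]
  rw [factor, ← Matrix.mul_assoc, heH]

lemma compress_sub_spectralProjection_le {e H : CMat d} (he : IsStarProjection e)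
    (hH : IsSelfAdjoint H) (heH : e * H = H) {l : ℝ} (hl : 0 < l) :
    (e - spectralProjection l H) * H * (e - spectralProjection l H) ≤
      l • (e - spectralProjection l H) := by
  set p := spectralProjection l H
  have hproj : IsStarProjection p := isStarProjection_spectralProjection l H
  have hep : e * p = p := mul_spectralProjection_of_mul_eq hH heH hl
  have hpe : p * e = p := by
    simpa [he.isSelfAdjoint.star_eq, hproj.isSelfAdjoint.star_eq] using congrArg star hep
  have hcomm : Commute (1 - p) H :=
    (Commute.one_left H).sub_left (commute_spectralProjection hH l)
  calc (e - p) * H * (e - p) = e * (1 - p) * H * ((1 - p) * e) := by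
        rw [Matrix.mul_sub e, Matrix.sub_mul 1 p e, hep, hpe, Matrix.mul_one, Matrix.one_mul]
    _ = e * ((1 - p) * (H * (1 - p))) * e := by simp only [Matrix.mul_assoc]
    _ = e * ((1 - p) * H) * e := by
        rw [← hcomm.eq, ← Matrix.mul_assoc (1 - p), hproj.one_sub.isIdempotentElem.eq]
    _ ≤ e * (l • (1 - p)) * e :=
        he.isSelfAdjoint.conjugate_le_conjugate (one_sub_spectralProjection_mul_le hH l)
    _ = l • (e - p) := by
        rw [Matrix.mul_smul, Matrix.smul_mul, Matrix.mul_sub, Matrix.sub_mul, hep, hpe,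
          Matrix.mul_one, he.isIdempotentElem.eq]

end LoewnerOrder

section DyadicMartingales

/-- The leaves of the rooted binary tree of depth `K`. A leaf of a tree of positive depth is a
pair: the branch taken at the root, then a leaf of the subtree. -/
def Leaf : ℕ → Type
  | 0 => Unit
  | K + 1 => Bool × Leaf K

instance Leaf.instFintype : (K : ℕ) → Fintype (Leaf K)
  | 0 => inferInstanceAs (Fintype Unit)
  | K + 1 => @instFintypeProd Bool (Leaf K) _ (Leaf.instFintype K)

lemma Leaf.sum_zero {M : Type*} [AddCommMonoid M] (f : Leaf 0 → M) : ∑ ω, f ω = f () :=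
  Fintype.sum_unique (ι := Unit) f

lemma Leaf.sum_succ {M : Type*} [AddCommMonoid M] {K : ℕ} (f : Leaf (K + 1) → M) :
    ∑ ω, f ω = ∑ i : Bool, ∑ η : Leaf K, f (i, η) :=
  Fintype.sum_prod_type (α₁ := Bool) (α₂ := Leaf K) f

lemma Leaf.card (K : ℕ) : Fintype.card (Leaf K) = 2 ^ K := by
  induction K with
  | zero => rfl
  | succ K ih =>
    calc Fintype.card (Leaf (K + 1)) = Fintype.card Bool * Fintype.card (Leaf K) :=
          Fintype.card_prod Bool (Leaf K)
      _ = 2 ^ (K + 1) := by rw [ih, Fintype.card_bool, pow_succ']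

lemma Leaf.sum_const {K : ℕ} (c : ℝ) : ∑ _ω : Leaf K, c = 2 ^ K * c := by
  simp [Leaf.card]

variable {E E' F : Type*} [AddCommGroup E] [Module ℝ E] [AddCommGroup E'] [Module ℝ E']
  [AddCommGroup F] [Module ℝ F] {K : ℕ}

/-- The restriction of a function on leaves to one of the two subtrees below the root. -/
def branch (i : Bool) : (Leaf (K + 1) → E) →ₗ[ℝ] Leaf K → E :=
  LinearMap.funLeft ℝ E (Prod.mk i)

lemma branch_apply (i : Bool) (f : Leaf (K + 1) → E) (η : Leaf K) : branch i f η = f (i, η) := rfl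

/-- The average of a function over the leaves. -/
noncomputable def leafMean : (Leaf K → E) →ₗ[ℝ] E :=
  ((2 : ℝ) ^ K)⁻¹ • ∑ ω, LinearMap.proj ω

/-- The martingale transform with coefficients `ε`: the martingale difference across the root of
a subtree of depth `k + 1` is multiplied by `ε k`, and the mean is dropped. -/
noncomputable def martingaleTransform (ε : ℕ → ℝ) : (K : ℕ) → (Leaf K → E) →ₗ[ℝ] Leaf K → E
  | 0 => 0
  | K + 1 => LinearMap.pi fun ω => LinearMap.proj ω.2 ∘ₗ martingaleTransform ε K ∘ₗ branch ω.1 +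
      ε K • (leafMean ∘ₗ branch ω.1 - leafMean)

lemma leafMean_apply (f : Leaf K → E) : leafMean f = ((2 : ℝ) ^ K)⁻¹ • ∑ ω, f ω := by
  simp [leafMean]

lemma two_pow_smul_leafMean (f : Leaf K → E) : (2 : ℝ) ^ K • leafMean f = ∑ ω, f ω := by
  rw [leafMean_apply, smul_inv_smul₀ (by positivity)]

lemma leafMean_zero (f : Leaf 0 → E) : leafMean f = f () := by
  rw [leafMean_apply, Leaf.sum_zero, pow_zero, inv_one, one_smul]

lemma leafMean_succ (f : Leaf (K + 1) → E) :
    leafMean f = (2 : ℝ)⁻¹ • ∑ i, leafMean (branch i f) := by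
  simp only [leafMean_apply, Leaf.sum_succ, ← Finset.smul_sum, smul_smul, pow_succ', mul_inv,
    branch_apply]

lemma sum_leafMean_branch (f : Leaf (K + 1) → E) :
    ∑ i, leafMean (branch i f) = (2 : ℝ) • leafMean f := by
  rw [leafMean_succ, smul_inv_smul₀ two_ne_zero]

lemma leafMean_const (c : E) : leafMean (fun _ : Leaf K => c) = c := by
  rw [leafMean_apply, Finset.sum_const, card_univ, Leaf.card, ← Nat.cast_smul_eq_nsmul ℝ,
    Nat.cast_pow, Nat.cast_ofNat, inv_smul_smul₀ (by positivity)]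

lemma leafMean_map (L : E →ₗ[ℝ] E') (f : Leaf K → E) :
    leafMean (fun ω => L (f ω)) = L (leafMean f) := by
  simp only [leafMean_apply, map_smul, map_sum]

variable (ε : ℕ → ℝ)

lemma martingaleTransform_zero (f : Leaf 0 → E) : martingaleTransform ε 0 f = 0 := rfl

lemma martingaleTransform_succ (f : Leaf (K + 1) → E) (i : Bool) (η : Leaf K) :
    martingaleTransform ε (K + 1) f (i, η) =
      martingaleTransform ε K (branch i f) η + ε K • (leafMean (branch i f) - leafMean f) := rfl

lemma martingaleTransform_map (L : E →ₗ[ℝ] E') : ∀ {K : ℕ} (f : Leaf K → E) (ω : Leaf K),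
    martingaleTransform ε K (fun η => L (f η)) ω = L (martingaleTransform ε K f ω)
  | 0, _, _ => (map_zero L).symm
  | K + 1, f, (i, η) => by
    have hbranch : branch i (fun ω => L (f ω)) = fun η => L (branch i f η) := rfl
    rw [martingaleTransform_succ, martingaleTransform_succ, hbranch, leafMean_map, leafMean_map,
      martingaleTransform_map L (branch i f), map_add, map_smul, map_sub]

lemma martingaleTransform_const (c : E) : ∀ {K : ℕ}, martingaleTransform ε K (fun _ => c) = 0
  | 0 => rfl
  | K + 1 => by
    ext ⟨i, η⟩
    have hbranch : branch i (fun _ : Leaf (K + 1) => c) = fun _ => c := rfl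
    rw [martingaleTransform_succ, hbranch, martingaleTransform_const c, leafMean_const,
      leafMean_const, sub_self, smul_zero, add_zero]
    rfl

lemma sum_martingaleTransform : ∀ {K : ℕ} (f : Leaf K → E), ∑ ω, martingaleTransform ε K f ω = 0
  | 0, f => by simp [martingaleTransform_zero]
  | K + 1, f => by
    have differences : ∑ i, (leafMean (branch i f) - leafMean f) = 0 := by
      rw [sum_sub_distrib, sum_leafMean_branch, two_smul, Fintype.sum_bool, sub_self]
    simp only [Leaf.sum_succ, martingaleTransform_succ, sum_add_distrib,
      sum_martingaleTransform (branch _ f), zero_add, Finset.sum_const, ← Finset.smul_sum,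
      differences, smul_zero]

lemma sum_martingaleTransform_succ_pairing (B : E →ₗ[ℝ] E' →ₗ[ℝ] F) (f : Leaf (K + 1) → E)
    (g : Leaf (K + 1) → E') :
    ∑ ω, B (martingaleTransform ε (K + 1) f ω) (g ω) =
      ∑ i, ∑ η, B (martingaleTransform ε K (branch i f) η) (branch i g η) +
        (ε K * 2 ^ K) • (∑ i, B (leafMean (branch i f)) (leafMean (branch i g)) -
          (2 : ℝ) • B (leafMean f) (leafMean g)) := by
  have node (i : Bool) : ∑ η, B (leafMean (branch i f) - leafMean f) (g (i, η)) =
      (2 : ℝ) ^ K • B (leafMean (branch i f) - leafMean f) (leafMean (branch i g)) := by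
    rw [← map_smul, two_pow_smul_leafMean, map_sum]
    rfl
  simp only [Leaf.sum_succ, martingaleTransform_succ, map_add, LinearMap.add_apply,
    sum_add_distrib, map_smul, LinearMap.smul_apply, ← Finset.smul_sum, branch_apply, node,
    smul_smul]
  congr 2
  simp only [map_sub, LinearMap.sub_apply, sum_sub_distrib]
  rw [← map_sum, sum_leafMean_branch, map_smul]

lemma sum_martingaleTransform_pairing (B : E →ₗ[ℝ] E' →ₗ[ℝ] F) :
    ∀ {K : ℕ} (f : Leaf K → E) (g : Leaf K → E'),
      ∑ ω, B (martingaleTransform ε K f ω) (g ω) = ∑ ω, B (f ω) (martingaleTransform ε K g ω)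
  | 0, f, g => by simp [martingaleTransform_zero]
  | K + 1, f, g => by
    have flipped := sum_martingaleTransform_succ_pairing ε B.flip g f
    simp only [LinearMap.flip_apply] at flipped
    rw [sum_martingaleTransform_succ_pairing, flipped]
    congr 1
    exact sum_congr rfl fun i _ => sum_martingaleTransform_pairing B _ _

lemma tracePairing_martingaleTransform {d : ℕ} (f g : Leaf K → CMat d) :
    tracePairing (martingaleTransform ε K f) g = tracePairing f (martingaleTransform ε K g) :=
  sum_martingaleTransform_pairing ε
    ((LinearMap.mul ℝ (CMat d)).compr₂ (traceLinearMap (Fin d) ℝ ℂ)) f g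

end DyadicMartingales

section MartingaleTransformL2

variable {V : Type*} [NormedAddCommGroup V] [InnerProductSpace ℝ V] {ε : ℕ → ℝ}

open scoped RealInnerProductSpace

lemma sum_norm_sq_martingaleTransform_branch {K : ℕ} (f : Leaf (K + 1) → V) (i : Bool) :
    ∑ η : Leaf K, ‖martingaleTransform ε (K + 1) f (i, η)‖ ^ 2 =
      ∑ η, ‖martingaleTransform ε K (branch i f) η‖ ^ 2 +
        2 ^ K * ‖ε K • (leafMean (branch i f) - leafMean f)‖ ^ 2 := by
  simp only [martingaleTransform_succ, norm_add_sq_real, sum_add_distrib, ← Finset.mul_sum,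
    ← sum_inner, sum_martingaleTransform, inner_zero_left, mul_zero, add_zero, Leaf.sum_const]

lemma sum_norm_sq_leafMean_branch_sub {K : ℕ} (f : Leaf (K + 1) → V) :
    ∑ i, ‖leafMean (branch i f) - leafMean f‖ ^ 2 =
      ∑ i, ‖leafMean (branch i f)‖ ^ 2 - 2 * ‖leafMean f‖ ^ 2 := by
  have cross : ∑ i, ⟪leafMean (branch i f), leafMean f⟫ = 2 * ‖leafMean f‖ ^ 2 := by
    rw [← sum_inner, sum_leafMean_branch, real_inner_smul_left, real_inner_self_eq_norm_sq]
  simp only [norm_sub_sq_real, sum_add_distrib, sum_sub_distrib, ← Finset.mul_sum, cross,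
    Fintype.sum_bool]
  ring

lemma sum_norm_sq_martingaleTransform_le_sub (hε : ∀ k, |ε k| ≤ 1) : ∀ {K : ℕ} (f : Leaf K → V),
    ∑ ω, ‖martingaleTransform ε K f ω‖ ^ 2 ≤ ∑ ω, ‖f ω‖ ^ 2 - 2 ^ K * ‖leafMean f‖ ^ 2
  | 0, f => by simp [Leaf.sum_zero, leafMean_zero, martingaleTransform_zero]
  | K + 1, f => by
    have contraction (i : Bool) : ‖ε K • (leafMean (branch i f) - leafMean f)‖ ^ 2 ≤
        ‖leafMean (branch i f) - leafMean f‖ ^ 2 := by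
      rw [norm_smul, Real.norm_eq_abs]
      gcongr
      exact mul_le_of_le_one_left (norm_nonneg _) (hε K)
    calc ∑ ω, ‖martingaleTransform ε (K + 1) f ω‖ ^ 2
        ≤ ∑ i, (∑ η, ‖branch i f η‖ ^ 2 - 2 ^ K * ‖leafMean (branch i f)‖ ^ 2 +
            2 ^ K * ‖leafMean (branch i f) - leafMean f‖ ^ 2) := by
          rw [Leaf.sum_succ]
          refine sum_le_sum fun i _ => ?_
          rw [sum_norm_sq_martingaleTransform_branch]
          exact add_le_add (sum_norm_sq_martingaleTransform_le_sub hε _)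
            (mul_le_mul_of_nonneg_left (contraction i) (by positivity))
      _ = ∑ ω, ‖f ω‖ ^ 2 - 2 ^ (K + 1) * ‖leafMean f‖ ^ 2 := by
          rw [sum_add_distrib, sum_sub_distrib, ← Finset.mul_sum, ← Finset.mul_sum,
            sum_norm_sq_leafMean_branch_sub, Leaf.sum_succ]
          simp only [branch_apply]
          ring

lemma sum_norm_sq_martingaleTransform_le (hε : ∀ k, |ε k| ≤ 1) {K : ℕ} (f : Leaf K → V) :
    ∑ ω, ‖martingaleTransform ε K f ω‖ ^ 2 ≤ ∑ ω, ‖f ω‖ ^ 2 :=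
  (sum_norm_sq_martingaleTransform_le_sub hε f).trans (sub_le_self _ (by positivity))

lemma sum_schattenSum_two_martingaleTransform_le (hε : ∀ k, |ε k| ≤ 1) {d K : ℕ}
    (f : Leaf K → CMat d) :
    ∑ ω, schattenSum 2 (martingaleTransform ε K f ω) ≤ ∑ ω, schattenSum 2 (f ω) := by
  have entrywise (h : Leaf K → CMat d) :
      ∑ ω, schattenSum 2 (h ω) = ∑ i, ∑ j, ∑ ω, ‖h ω i j‖ ^ 2 := by
    simp only [schattenSum_two]
    rw [sum_comm]
    exact sum_congr rfl fun i _ => sum_comm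
  rw [entrywise, entrywise]
  refine sum_le_sum fun i _ => sum_le_sum fun j _ => ?_
  have entry (ω : Leaf K) : martingaleTransform ε K f ω i j =
      martingaleTransform ε K (fun η => f η i j) ω :=
    (martingaleTransform_map ε (entryLinearMap ℝ ℂ i j) f ω).symm
  simpa only [entry] using sum_norm_sq_martingaleTransform_le hε fun ω => f ω i j

end MartingaleTransformL2

section Cuculescu

open scoped MatrixOrder ComplexOrder

variable {d K : ℕ}

lemma leafMean_nonneg {f : Leaf K → CMat d} (hf : ∀ ω, 0 ≤ f ω) : 0 ≤ leafMean f := by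
  rw [leafMean_apply]
  exact smul_nonneg (by positivity) (sum_nonneg fun ω _ => hf ω)

lemma leafMean_branch_le {f : Leaf (K + 1) → CMat d} (hf : ∀ ω, 0 ≤ f ω) (i : Bool) :
    leafMean (branch i f) ≤ (2 : ℝ) • leafMean f := by
  rw [← sum_leafMean_branch]
  exact single_le_sum (f := fun i => leafMean (branch i f))
    (fun j _ => leafMean_nonneg fun η => hf (j, η)) (mem_univ i)

lemma two_pow_mul_reTrace_mul_leafMean (p : CMat d) (f : Leaf K → CMat d) :
    2 ^ K * reTrace (p * leafMean f) = ∑ ω, reTrace (p * f ω) := by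
  rw [← smul_eq_mul, ← map_smul, ← Matrix.mul_smul, two_pow_smul_leafMean, Matrix.mul_sum, map_sum]

lemma leafMean_mul_mul (a b : CMat d) (f : Leaf K → CMat d) :
    leafMean (fun ω => a * f ω * b) = a * leafMean f * b :=
  leafMean_map (LinearMap.mulRight ℝ b ∘ₗ LinearMap.mulLeft ℝ a) f

lemma martingaleTransform_mul_mul (ε : ℕ → ℝ) (a b : CMat d) (f : Leaf K → CMat d) (ω : Leaf K) :
    martingaleTransform ε K (fun η => a * f η * b) ω = a * martingaleTransform ε K f ω * b :=
  martingaleTransform_map ε (LinearMap.mulRight ℝ b ∘ₗ LinearMap.mulLeft ℝ a) f ω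

/-- The projection onto the part of the range of `e` where the compression of `F` to that range
exceeds the level `l`. -/
noncomputable def heavyProjection (l : ℝ) (e F : CMat d) : CMat d :=
  spectralProjection l (e * F * e)

/-- The complement in `e` of `heavyProjection`, where the compression of `F` is at most `l`. -/
noncomputable def lightProjection (l : ℝ) (e F : CMat d) : CMat d :=
  e - heavyProjection l e F

section Cut

variable {l : ℝ} {e F : CMat d}

lemma isStarProjection_heavyProjection (l : ℝ) (e F : CMat d) :
    IsStarProjection (heavyProjection l e F) :=
  isStarProjection_spectralProjection l _

lemma mul_heavyProjection (hl : 0 < l) (he : IsStarProjection e) (hF : IsSelfAdjoint F) :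
    e * heavyProjection l e F = heavyProjection l e F := by
  refine mul_spectralProjection_of_mul_eq (hF.conjugate_self he.isSelfAdjoint) ?_ hl
  rw [← Matrix.mul_assoc, ← Matrix.mul_assoc, he.isIdempotentElem.eq]

lemma heavyProjection_mul (hl : 0 < l) (he : IsStarProjection e) (hF : IsSelfAdjoint F) :
    heavyProjection l e F * e = heavyProjection l e F := by
  simpa [he.isSelfAdjoint.star_eq, (isStarProjection_heavyProjection l e F).isSelfAdjoint.star_eq]
    using congrArg star (mul_heavyProjection hl he hF)

lemma isStarProjection_lightProjection (hl : 0 < l) (he : IsStarProjection e)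
    (hF : IsSelfAdjoint F) : IsStarProjection (lightProjection l e F) :=
  (isStarProjection_heavyProjection l e F).sub_of_mul_eq_left he (heavyProjection_mul hl he hF)

lemma mul_lightProjection (hl : 0 < l) (he : IsStarProjection e) (hF : IsSelfAdjoint F) :
    e * lightProjection l e F = lightProjection l e F := by
  rw [lightProjection, Matrix.mul_sub, he.isIdempotentElem.eq, mul_heavyProjection hl he hF]

lemma lightProjection_mul (hl : 0 < l) (he : IsStarProjection e) (hF : IsSelfAdjoint F) :
    lightProjection l e F * e = lightProjection l e F := by
  rw [lightProjection, Matrix.sub_mul, he.isIdempotentElem.eq, heavyProjection_mul hl he hF]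

lemma lightProjection_mul_heavyProjection (hl : 0 < l) (he : IsStarProjection e)
    (hF : IsSelfAdjoint F) : lightProjection l e F * heavyProjection l e F = 0 := by
  rw [lightProjection, Matrix.sub_mul, mul_heavyProjection hl he hF,
    (isStarProjection_heavyProjection l e F).isIdempotentElem.eq, sub_self]

lemma mul_mul_mul_mul_of_mul_eq {e p : CMat d} (hep : e * p = p) (hpe : p * e = p) (F : CMat d) :
    p * (e * F * e) * p = p * F * p := by
  calc p * (e * F * e) * p = p * e * F * (e * p) := by simp only [Matrix.mul_assoc]
    _ = p * F * p := by rw [hep, hpe]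

lemma compress_eq_compress_add_compress (hl : 0 < l) (he : IsStarProjection e)
    (hF : IsSelfAdjoint F) :
    e * F * e = lightProjection l e F * F * lightProjection l e F +
      heavyProjection l e F * F * heavyProjection l e F := by
  set p := heavyProjection l e F with hp
  rw [← mul_mul_mul_mul_of_mul_eq (mul_heavyProjection hl he hF) (heavyProjection_mul hl he hF) F,
    ← mul_mul_mul_mul_of_mul_eq (mul_lightProjection hl he hF)
      (lightProjection_mul hl he hF) F, lightProjection, ← hp]
  set H := e * F * e with hH
  have heH : e * H = H := by
    rw [hH, ← Matrix.mul_assoc, ← Matrix.mul_assoc, he.isIdempotentElem.eq]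
  have hHe : H * e = H := by rw [hH, Matrix.mul_assoc, he.isIdempotentElem.eq]
  have hcomm : p * H = H * p :=
    commute_spectralProjection (hF.conjugate_self he.isSelfAdjoint) l
  have hpp : p * p = p := (isStarProjection_heavyProjection l e F).isIdempotentElem
  have hpHp : p * H * p = H * p := by rw [hcomm, Matrix.mul_assoc, hpp]
  rw [Matrix.sub_mul, Matrix.mul_sub, Matrix.sub_mul _ _ p, Matrix.sub_mul _ _ e, hpHp, heH, hHe,
    Matrix.mul_assoc p, hHe, hcomm]
  abel

lemma compress_lightProjection_le (hl : 0 < l) (he : IsStarProjection e)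
    (hF : IsSelfAdjoint F) :
    lightProjection l e F * F * lightProjection l e F ≤
      l • lightProjection l e F := by
  rw [← mul_mul_mul_mul_of_mul_eq (mul_lightProjection hl he hF)
    (lightProjection_mul hl he hF)]
  refine compress_sub_spectralProjection_le he (hF.conjugate_self he.isSelfAdjoint) ?_ hl
  rw [← Matrix.mul_assoc, ← Matrix.mul_assoc, he.isIdempotentElem.eq]

lemma mul_reTrace_heavyProjection_le (hl : 0 < l) (he : IsStarProjection e)
    (hF : IsSelfAdjoint F) :
    l * reTrace (heavyProjection l e F) ≤ reTrace (heavyProjection l e F * F) := by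
  have hle := smul_spectralProjection_le (hF.conjugate_self he.isSelfAdjoint) l
  calc l * reTrace (heavyProjection l e F)
      ≤ reTrace (heavyProjection l e F * (e * F * e)) := by
        rw [← smul_eq_mul, ← map_smul]
        exact reTrace_mono hle
    _ = reTrace (heavyProjection l e F * e * F * e) := by simp only [Matrix.mul_assoc]
    _ = reTrace (heavyProjection l e F * F) := by
        rw [heavyProjection_mul hl he hF, reTrace_mul_comm, ← Matrix.mul_assoc,
          mul_heavyProjection hl he hF]

lemma schattenSum_two_compress_heavyProjection_le (hl : 0 < l) (he : IsStarProjection e)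
    (hF : 0 ≤ F) {c : ℝ} (hc : e * F * e ≤ c • e) :
    schattenSum 2 (heavyProjection l e F * F * heavyProjection l e F) ≤
      c * reTrace (heavyProjection l e F * F) := by
  have hF' := IsSelfAdjoint.of_nonneg hF
  set p := heavyProjection l e F
  have hp : IsStarProjection p := isStarProjection_heavyProjection l e F
  have hep : e * p = p := mul_heavyProjection hl he hF'
  have hpe : p * e = p := heavyProjection_mul hl he hF'
  have hpc : p * F * p ≤ c • p := by
    calc p * F * p = p * (e * F * e) * p := (mul_mul_mul_mul_of_mul_eq hep hpe F).symm
      _ ≤ p * (c • e) * p := hp.isSelfAdjoint.conjugate_le_conjugate hc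
      _ = c • p := by rw [Matrix.mul_smul, Matrix.smul_mul, hpe, hp.isIdempotentElem.eq]
  rw [← reTrace_mul_mul_self hp.isIdempotentElem]
  refine schattenSum_two_le_mul_reTrace (hp.isSelfAdjoint.conjugate_nonneg hF) hpc ?_
  rw [Matrix.mul_assoc, hp.isIdempotentElem.eq]

end Cut

/-- The projections of Cuculescu's construction at the leaves: descending from the root, the
current projection `e` loses the heavy part of the conditional mean in the branch taken. -/
noncomputable def cuculescuProjection (l : ℝ) :
    (K : ℕ) → CMat d → (Leaf K → CMat d) → Leaf K → CMat d
  | 0, e, _, _ => e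
  | K + 1, e, f, (i, η) =>
    cuculescuProjection l K (lightProjection l e (leafMean (branch i f))) (branch i f) η

/-- The good part of the noncommutative Calderón–Zygmund decomposition attached to Cuculescu's
projections: the conditional means compressed to the removed heavy parts, together with `f`
compressed to what remains at the leaves. -/
noncomputable def cuculescuGoodPart (l : ℝ) :
    (K : ℕ) → CMat d → (Leaf K → CMat d) → Leaf K → CMat d
  | 0, e, f, ω => e * f ω * e
  | K + 1, e, f, (i, η) =>
    cuculescuGoodPart l K (lightProjection l e (leafMean (branch i f))) (branch i f) η +
      heavyProjection l e (leafMean (branch i f)) * leafMean (branch i f) *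
        heavyProjection l e (leafMean (branch i f))

variable {l : ℝ}

lemma branch_cuculescuGoodPart (e : CMat d) (f : Leaf (K + 1) → CMat d) (i : Bool) :
    branch i (cuculescuGoodPart l (K + 1) e f) =
      cuculescuGoodPart l K (lightProjection l e (leafMean (branch i f))) (branch i f) +
        fun _ => heavyProjection l e (leafMean (branch i f)) * leafMean (branch i f) *
          heavyProjection l e (leafMean (branch i f)) := rfl

lemma branch_cuculescuProjection (e : CMat d) (f : Leaf (K + 1) → CMat d) (i : Bool) :
    branch i (cuculescuProjection l (K + 1) e f) =
      cuculescuProjection l K (lightProjection l e (leafMean (branch i f))) (branch i f) := rfl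

lemma branch_nonneg {f : Leaf (K + 1) → CMat d} (hf : ∀ ω, 0 ≤ f ω) (i : Bool) (η : Leaf K) :
    0 ≤ branch i f η :=
  hf (i, η)

lemma isSelfAdjoint_leafMean {f : Leaf K → CMat d} (hf : ∀ ω, 0 ≤ f ω) :
    IsSelfAdjoint (leafMean f) :=
  .of_nonneg (leafMean_nonneg hf)

lemma reTrace_lightProjection_mul (e F A : CMat d) :
    reTrace (lightProjection l e F * A) =
      reTrace (e * A) - reTrace (heavyProjection l e F * A) := by
  rw [lightProjection, Matrix.sub_mul, map_sub]

lemma reTrace_sub_eq_heavyProjection_add (l : ℝ) (e F q : CMat d) :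
    reTrace (e - q) = reTrace (heavyProjection l e F) + reTrace (lightProjection l e F - q) := by
  rw [← map_add, lightProjection]
  congr 1
  abel

lemma compress_leafMean_branch_le {e : CMat d} {f : Leaf (K + 1) → CMat d}
    (he : IsStarProjection e) (hf : ∀ ω, 0 ≤ f ω) (hle : e * leafMean f * e ≤ l • e) (i : Bool) :
    e * leafMean (branch i f) * e ≤ (2 * l) • e :=
  calc e * leafMean (branch i f) * e ≤ e * ((2 : ℝ) • leafMean f) * e :=
        he.isSelfAdjoint.conjugate_le_conjugate (leafMean_branch_le hf i)
    _ = (2 : ℝ) • (e * leafMean f * e) := by rw [Matrix.mul_smul, Matrix.smul_mul]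
    _ ≤ (2 : ℝ) • l • e := smul_le_smul_of_nonneg_left hle zero_le_two
    _ = (2 * l) • e := smul_smul ..

variable (hl : 0 < l)
include hl

lemma isStarProjection_cuculescuProjection : ∀ {K : ℕ} {e : CMat d} {f : Leaf K → CMat d},
    IsStarProjection e → (∀ ω, 0 ≤ f ω) → ∀ ω, IsStarProjection (cuculescuProjection l K e f ω)
  | 0, _, _, he, _, _ => he
  | _ + 1, _, _, he, hf, (i, η) =>
    isStarProjection_cuculescuProjection (isStarProjection_lightProjection hl he
      (isSelfAdjoint_leafMean (branch_nonneg hf i))) (branch_nonneg hf i) η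

lemma mul_cuculescuProjection : ∀ {K : ℕ} {e : CMat d} {f : Leaf K → CMat d},
    IsStarProjection e → (∀ ω, 0 ≤ f ω) → ∀ ω,
      e * cuculescuProjection l K e f ω = cuculescuProjection l K e f ω
  | 0, _, _, he, _, _ => he.isIdempotentElem
  | K + 1, e, f, he, hf, (i, η) => by
    have hF := isSelfAdjoint_leafMean (branch_nonneg hf i)
    have below := mul_cuculescuProjection (isStarProjection_lightProjection hl he hF)
      (branch_nonneg hf i) η
    change e * branch i (cuculescuProjection l (K + 1) e f) η =
      branch i (cuculescuProjection l (K + 1) e f) η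
    rw [branch_cuculescuProjection, ← below, ← Matrix.mul_assoc, mul_lightProjection hl he hF]

lemma cuculescuProjection_mul {e : CMat d} {f : Leaf K → CMat d} (he : IsStarProjection e)
    (hf : ∀ ω, 0 ≤ f ω) (ω : Leaf K) :
    cuculescuProjection l K e f ω * e = cuculescuProjection l K e f ω := by
  simpa [he.isSelfAdjoint.star_eq,
    (isStarProjection_cuculescuProjection hl he hf ω).isSelfAdjoint.star_eq]
    using congrArg star (mul_cuculescuProjection hl he hf ω)

lemma compress_cuculescuGoodPart : ∀ {K : ℕ} {e : CMat d} {f : Leaf K → CMat d},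
    IsStarProjection e → (∀ ω, 0 ≤ f ω) → ∀ ω,
      e * cuculescuGoodPart l K e f ω * e = cuculescuGoodPart l K e f ω
  | 0, e, f, he, _, ω =>
    mul_mul_mul_mul_of_mul_eq he.isIdempotentElem he.isIdempotentElem (f ω)
  | K + 1, e, f, he, hf, (i, η) => by
    have hF := isSelfAdjoint_leafMean (branch_nonneg hf i)
    have below := compress_cuculescuGoodPart (isStarProjection_lightProjection hl he hF)
      (branch_nonneg hf i) η
    have compress_of_le {q : CMat d} (hl : e * q = q) (hr : q * e = q) (A : CMat d) :
        e * (q * A * q) * e = q * A * q := by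
      rw [← Matrix.mul_assoc, ← Matrix.mul_assoc, hl, Matrix.mul_assoc, hr]
    change e * branch i (cuculescuGoodPart l (K + 1) e f) η * e =
      branch i (cuculescuGoodPart l (K + 1) e f) η
    rw [branch_cuculescuGoodPart, Pi.add_apply, Matrix.mul_add, Matrix.add_mul,
      compress_of_le (mul_heavyProjection hl he hF) (heavyProjection_mul hl he hF), ← below,
      compress_of_le (mul_lightProjection hl he hF) (lightProjection_mul hl he hF)]

lemma leafMean_branch_cuculescuGoodPart : ∀ {K : ℕ} {e : CMat d} {f : Leaf (K + 1) → CMat d},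
    IsStarProjection e → (∀ ω, 0 ≤ f ω) → ∀ i,
      leafMean (branch i (cuculescuGoodPart l (K + 1) e f)) = e * leafMean (branch i f) * e := by
  intro K
  induction K with
  | zero =>
    intro e f he hf i
    rw [branch_cuculescuGoodPart, map_add, leafMean_const, compress_eq_compress_add_compress hl he
      (isSelfAdjoint_leafMean (branch_nonneg hf i))]
    congr 1
    rw [leafMean_zero, leafMean_zero]
    rfl
  | succ K below =>
    intro e f he hf i
    have hF := isSelfAdjoint_leafMean (branch_nonneg hf i)
    rw [branch_cuculescuGoodPart, map_add, leafMean_const,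
      compress_eq_compress_add_compress hl he hF, leafMean_succ]
    simp only [below (isStarProjection_lightProjection hl he hF) (branch_nonneg hf i)]
    rw [← Matrix.sum_mul, ← Matrix.mul_sum, ← Matrix.smul_mul, ← Matrix.mul_smul, ← leafMean_succ]

/-- The bad part of the Calderón–Zygmund decomposition below the projection `e`. -/
noncomputable def cuculescuBadPart (l : ℝ) (K : ℕ) (e : CMat d) (f : Leaf K → CMat d)
    (ω : Leaf K) : CMat d :=
  e * f ω * e - cuculescuGoodPart l K e f ω

lemma leafMean_branch_cuculescuBadPart {e : CMat d} {f : Leaf (K + 1) → CMat d}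
    (he : IsStarProjection e) (hf : ∀ ω, 0 ≤ f ω) (i : Bool) :
    leafMean (branch i (cuculescuBadPart l (K + 1) e f)) = 0 := by
  change leafMean ((fun η => e * branch i f η * e) -
    branch i (cuculescuGoodPart l (K + 1) e f)) = 0
  rw [map_sub, leafMean_mul_mul, leafMean_branch_cuculescuGoodPart hl he hf, sub_self]

lemma compress_branch_cuculescuBadPart {e : CMat d} {f : Leaf (K + 1) → CMat d}
    (he : IsStarProjection e) (hf : ∀ ω, 0 ≤ f ω) (i : Bool) :
    (fun η => lightProjection l e (leafMean (branch i f)) *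
      branch i (cuculescuBadPart l (K + 1) e f) η *
        lightProjection l e (leafMean (branch i f))) =
      cuculescuBadPart l K (lightProjection l e (leafMean (branch i f))) (branch i f) := by
  have hF := isSelfAdjoint_leafMean (branch_nonneg hf i)
  set e' := lightProjection l e (leafMean (branch i f))
  have he' : IsStarProjection e' := isStarProjection_lightProjection hl he hF
  funext η
  change e' * (e * branch i f η * e - branch i (cuculescuGoodPart l (K + 1) e f) η) * e' = _
  rw [branch_cuculescuGoodPart, Pi.add_apply, Matrix.mul_sub, Matrix.sub_mul,
    mul_mul_mul_mul_of_mul_eq (mul_lightProjection hl he hF) (lightProjection_mul hl he hF),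
    Matrix.mul_add, Matrix.add_mul, compress_cuculescuGoodPart hl he' (branch_nonneg hf i),
    ← Matrix.mul_assoc e', ← Matrix.mul_assoc e', lightProjection_mul_heavyProjection hl he hF,
    Matrix.zero_mul, Matrix.zero_mul, Matrix.zero_mul, add_zero, cuculescuBadPart]

/-- All conditional means of the bad part vanish before the current projection starts to shrink,
and the part removed is killed by the final projection. -/
lemma compress_martingaleTransform_cuculescuBadPart (ε : ℕ → ℝ) :
    ∀ {K : ℕ} {e : CMat d} {f : Leaf K → CMat d}, IsStarProjection e → (∀ ω, 0 ≤ f ω) → ∀ ω,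
      cuculescuProjection l K e f ω * martingaleTransform ε K (cuculescuBadPart l K e f) ω *
        cuculescuProjection l K e f ω = 0
  | 0, _, _, _, _, _ => by
    rw [martingaleTransform_zero, Pi.zero_apply, Matrix.mul_zero, Matrix.zero_mul]
  | K + 1, e, f, he, hf, (i, η) => by
    have hF := isSelfAdjoint_leafMean (branch_nonneg hf i)
    set e' := lightProjection l e (leafMean (branch i f))
    have he' : IsStarProjection e' := isStarProjection_lightProjection hl he hF
    have transform_eq : martingaleTransform ε (K + 1) (cuculescuBadPart l (K + 1) e f) (i, η) =
        martingaleTransform ε K (branch i (cuculescuBadPart l (K + 1) e f)) η := by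
      rw [martingaleTransform_succ, leafMean_succ]
      simp only [leafMean_branch_cuculescuBadPart hl he hf, sum_const_zero, smul_zero, sub_zero,
        add_zero]
    have below := compress_martingaleTransform_cuculescuBadPart ε he' (branch_nonneg hf i) η
    rw [← compress_branch_cuculescuBadPart hl he hf i, martingaleTransform_mul_mul,
      mul_mul_mul_mul_of_mul_eq (mul_cuculescuProjection hl he' (branch_nonneg hf i) η)
        (cuculescuProjection_mul hl he' (branch_nonneg hf i) η)] at below
    rw [transform_eq]
    exact below

lemma schattenSum_two_branch_cuculescuGoodPart {e : CMat d} {f : Leaf (K + 1) → CMat d}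
    (he : IsStarProjection e) (hf : ∀ ω, 0 ≤ f ω) (i : Bool) (η : Leaf K) :
    schattenSum 2 (branch i (cuculescuGoodPart l (K + 1) e f) η) =
      schattenSum 2 (cuculescuGoodPart l K (lightProjection l e (leafMean (branch i f)))
        (branch i f) η) +
      schattenSum 2 (heavyProjection l e (leafMean (branch i f)) * leafMean (branch i f) *
        heavyProjection l e (leafMean (branch i f))) := by
  have hF := isSelfAdjoint_leafMean (branch_nonneg hf i)
  have he' := isStarProjection_lightProjection hl he hF
  rw [branch_cuculescuGoodPart, Pi.add_apply]
  refine schattenSum_two_add_of_conjTranspose_mul_eq_zero ?_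
  rw [← compress_cuculescuGoodPart hl he' (branch_nonneg hf i), conjTranspose_mul,
    conjTranspose_mul, he'.isSelfAdjoint.isHermitian.eq]
  have light_heavy_mul (X : CMat d) : lightProjection l e (leafMean (branch i f)) *
      (heavyProjection l e (leafMean (branch i f)) * X) = 0 := by
    rw [← Matrix.mul_assoc, lightProjection_mul_heavyProjection hl he hF, Matrix.zero_mul]
  simp only [Matrix.mul_assoc, light_heavy_mul, Matrix.mul_zero]

/-- The heavy parts removed at different nodes are mutually orthogonal, so their energies add. -/
lemma sum_schattenSum_two_cuculescuGoodPart_le :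
    ∀ {K : ℕ} {e : CMat d} {f : Leaf K → CMat d}, IsStarProjection e → (∀ ω, 0 ≤ f ω) →
      e * leafMean f * e ≤ l • e →
        ∑ ω, schattenSum 2 (cuculescuGoodPart l K e f ω) ≤ 2 * l * ∑ ω, reTrace (e * f ω)
  | 0, e, f, he, hf, hle => by
    rw [leafMean_zero] at hle
    rw [Leaf.sum_zero, Leaf.sum_zero, ← reTrace_mul_mul_self he.isIdempotentElem]
    have hnonneg := he.isSelfAdjoint.conjugate_nonneg (hf ())
    calc schattenSum 2 (e * f () * e) ≤ l * reTrace (e * f () * e) :=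
          schattenSum_two_le_mul_reTrace hnonneg hle
            (by rw [Matrix.mul_assoc, he.isIdempotentElem.eq])
      _ ≤ 2 * l * reTrace (e * f () * e) :=
          mul_le_mul_of_nonneg_right (by linarith) (reTrace_nonneg hnonneg)
  | K + 1, e, f, he, hf, hle => by
    rw [Leaf.sum_succ, Leaf.sum_succ, mul_sum]
    refine sum_le_sum fun i _ => ?_
    have hf_branch := branch_nonneg hf i
    have hF := isSelfAdjoint_leafMean hf_branch
    have below := sum_schattenSum_two_cuculescuGoodPart_le
      (isStarProjection_lightProjection hl he hF) hf_branch (compress_lightProjection_le hl he hF)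
    have heavy := schattenSum_two_compress_heavyProjection_le hl he (leafMean_nonneg hf_branch)
      (compress_leafMean_branch_le he hf hle i)
    simp only [reTrace_lightProjection_mul, sum_sub_distrib, ← two_pow_mul_reTrace_mul_leafMean]
      at below
    calc ∑ η, schattenSum 2 (branch i (cuculescuGoodPart l (K + 1) e f) η)
        = _ + 2 ^ K * _ := by
          simp only [schattenSum_two_branch_cuculescuGoodPart hl he hf, sum_add_distrib,
            Leaf.sum_const]
      _ ≤ _ := add_le_add below (mul_le_mul_of_nonneg_left heavy (by positivity))
      _ = 2 * l * ∑ η, reTrace (e * branch i f η) := by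
          rw [← two_pow_mul_reTrace_mul_leafMean]
          ring

lemma mul_sum_reTrace_sub_cuculescuProjection_le :
    ∀ {K : ℕ} {e : CMat d} {f : Leaf K → CMat d}, IsStarProjection e → (∀ ω, 0 ≤ f ω) →
      l * ∑ ω, reTrace (e - cuculescuProjection l K e f ω) ≤ ∑ ω, reTrace (e * f ω)
  | 0, e, f, he, hf => by
    rw [Leaf.sum_zero, Leaf.sum_zero]
    change l * reTrace (e - e) ≤ _
    rw [sub_self, map_zero, mul_zero]
    exact reTrace_mul_nonneg he.nonneg (hf ())
  | K + 1, e, f, he, hf => by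
    rw [Leaf.sum_succ, Leaf.sum_succ, mul_sum]
    refine sum_le_sum fun i _ => ?_
    have hf_branch := branch_nonneg hf i
    have hF := isSelfAdjoint_leafMean hf_branch
    have below := mul_sum_reTrace_sub_cuculescuProjection_le
      (isStarProjection_lightProjection hl he hF) hf_branch
    have heavy := mul_reTrace_heavyProjection_le hl he hF
    simp only [reTrace_lightProjection_mul, sum_sub_distrib, ← two_pow_mul_reTrace_mul_leafMean]
      at below
    change l * ∑ η, reTrace (e - branch i (cuculescuProjection l (K + 1) e f) η) ≤
      ∑ η, reTrace (e * branch i f η)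
    simp only [reTrace_sub_eq_heavyProjection_add l e (leafMean (branch i f)), sum_add_distrib,
      Leaf.sum_const, ← two_pow_mul_reTrace_mul_leafMean]
    rw [branch_cuculescuProjection]
    linarith [mul_le_mul_of_nonneg_left heavy (pow_nonneg zero_le_two K : (0 : ℝ) ≤ 2 ^ K)]

lemma compress_martingaleTransform_eq_cuculescuGoodPart (ε : ℕ → ℝ) {e : CMat d}
    {f : Leaf K → CMat d} (he : IsStarProjection e) (hf : ∀ ω, 0 ≤ f ω) (ω : Leaf K) :
    cuculescuProjection l K e f ω * martingaleTransform ε K f ω * cuculescuProjection l K e f ω =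
      cuculescuProjection l K e f ω *
        martingaleTransform ε K (cuculescuGoodPart l K e f) ω * cuculescuProjection l K e f ω := by
  have bad := compress_martingaleTransform_cuculescuBadPart hl ε he hf ω
  rwa [show cuculescuBadPart l K e f = (fun η => e * f η * e) - cuculescuGoodPart l K e f from rfl,
    map_sub, Pi.sub_apply, martingaleTransform_mul_mul, Matrix.mul_sub, Matrix.sub_mul,
    mul_mul_mul_mul_of_mul_eq (mul_cuculescuProjection hl he hf ω)
      (cuculescuProjection_mul hl he hf ω), sub_eq_zero] at bad

lemma singularCount_martingaleTransform_le (ε : ℕ → ℝ) {e : CMat d} {f : Leaf K → CMat d}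
    (he : IsStarProjection e) (hf : ∀ ω, 0 ≤ f ω) (ω : Leaf K) :
    (singularCount l (martingaleTransform ε K f ω) : ℝ) ≤
      l ^ (-2 : ℝ) * schattenSum 2 (martingaleTransform ε K (cuculescuGoodPart l K e f) ω) +
        2 * reTrace (1 - cuculescuProjection l K e f ω) := by
  set q := cuculescuProjection l K e f ω
  have hq : IsStarProjection q := isStarProjection_cuculescuProjection hl he hf ω
  have rank_eq : ((1 - q).rank : ℝ) = reTrace (1 - q) := by
    rw [reTrace_apply, ← rank_eq_trace_of_isIdempotentElem hq.one_sub.isIdempotentElem,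
      Complex.natCast_re]
  have compressed : (singularCount l (q * martingaleTransform ε K f ω * q) : ℝ) ≤
      l ^ (-2 : ℝ) * schattenSum 2 (martingaleTransform ε K (cuculescuGoodPart l K e f) ω) := by
    refine (singularCount_le_rpow_mul_schattenSum hl two_pos _).trans ?_
    rw [compress_martingaleTransform_eq_cuculescuGoodPart hl ε he hf ω]
    exact mul_le_mul_of_nonneg_left (schattenSum_two_compress_le hq _) (by positivity)
  rw [← rank_eq]
  calc (singularCount l (martingaleTransform ε K f ω) : ℝ)
      ≤ singularCount l (q * martingaleTransform ε K f ω * q) + 2 * (1 - q).rank :=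
        mod_cast singularCount_le_singularCount_compress hl.le q _
    _ ≤ _ := add_le_add_left compressed _

lemma mul_sum_reTrace_one_sub_cuculescuProjection_le {f : Leaf K → CMat d} (hf : ∀ ω, 0 ≤ f ω) :
    l * ∑ ω, reTrace (1 - cuculescuProjection l K (lightProjection l 1 (leafMean f)) f ω) ≤
      ∑ ω, reTrace (f ω) := by
  have hF := isSelfAdjoint_leafMean hf
  have root := mul_reTrace_heavyProjection_le hl (.one _) hF
  have below := mul_sum_reTrace_sub_cuculescuProjection_le hl
    (isStarProjection_lightProjection hl (.one _) hF) hf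
  simp only [reTrace_lightProjection_mul, sum_sub_distrib, ← two_pow_mul_reTrace_mul_leafMean,
    Matrix.one_mul] at below
  simp only [reTrace_sub_eq_heavyProjection_add l 1 (leafMean f), sum_add_distrib, Leaf.sum_const]
  linarith [mul_le_mul_of_nonneg_left root (pow_nonneg zero_le_two K : (0 : ℝ) ≤ 2 ^ K)]

theorem sum_singularCount_martingaleTransform_le {ε : ℕ → ℝ} (hε : ∀ k, |ε k| ≤ 1)
    {f : Leaf K → CMat d} (hf : ∀ ω, 0 ≤ f ω) :
    (∑ ω, singularCount l (martingaleTransform ε K f ω) : ℝ) ≤ 4 / l * ∑ ω, reTrace (f ω) := by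
  have hF := isSelfAdjoint_leafMean hf
  set e := lightProjection l 1 (leafMean f)
  have he : IsStarProjection e := isStarProjection_lightProjection hl (.one _) hF
  have energy : ∑ ω, schattenSum 2 (martingaleTransform ε K (cuculescuGoodPart l K e f) ω) ≤
      2 * l * ∑ ω, reTrace (f ω) := by
    refine (sum_schattenSum_two_martingaleTransform_le hε _).trans <|
      (sum_schattenSum_two_cuculescuGoodPart_le hl he hf
        (compress_lightProjection_le hl (.one _) hF)).trans ?_
    refine mul_le_mul_of_nonneg_left (sum_le_sum fun ω _ => ?_) (by positivity)
    rw [reTrace_lightProjection_mul, Matrix.one_mul]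
    exact sub_le_self _ (reTrace_mul_nonneg (isStarProjection_heavyProjection ..).nonneg (hf ω))
  have removed := mul_sum_reTrace_one_sub_cuculescuProjection_le hl hf
  calc (∑ ω, singularCount l (martingaleTransform ε K f ω) : ℝ)
      ≤ l ^ (-2 : ℝ) * ∑ ω, schattenSum 2
            (martingaleTransform ε K (cuculescuGoodPart l K e f) ω) +
          2 * ∑ ω, reTrace (1 - cuculescuProjection l K e f ω) := by
        rw [mul_sum, mul_sum, ← sum_add_distrib]
        exact sum_le_sum fun ω _ => singularCount_martingaleTransform_le hl ε he hf ω
    _ ≤ l ^ (-2 : ℝ) * (2 * l * ∑ ω, reTrace (f ω)) + 2 * (l⁻¹ * ∑ ω, reTrace (f ω)) := by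
        gcongr
        exact (le_inv_mul_iff₀ hl).2 removed
    _ = 4 / l * ∑ ω, reTrace (f ω) := by
        rw [Real.rpow_neg hl.le, Real.rpow_two]
        field_simp
        ring

end Cuculescu

section Interpolation

open MeasureTheory

variable {α β m : ℝ}

lemma integrableOn_Ioi_ite_lt_rpow (hα : -1 < α) (hm : 0 ≤ m) :
    IntegrableOn (fun t : ℝ => if t < m then t ^ α else 0) (Set.Ioi 0) := by
  have hint : IntegrableOn (fun t : ℝ => t ^ α) (Set.Ioo 0 m) :=
    (intervalIntegrable_iff_integrableOn_Ioo_of_le hm).1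
      (intervalIntegral.intervalIntegrable_rpow' hα)
  change Integrable ((Set.Iio m).indicator fun t : ℝ => t ^ α) (volume.restrict (Set.Ioi 0))
  rwa [integrable_indicator_iff measurableSet_Iio, IntegrableOn,
    Measure.restrict_restrict measurableSet_Iio, Set.inter_comm]

lemma integral_Ioi_ite_lt_rpow (hα : -1 < α) (hm : 0 ≤ m) :
    ∫ t in Set.Ioi (0 : ℝ), (if t < m then t ^ α else 0) = m ^ (α + 1) / (α + 1) := by
  change ∫ t in Set.Ioi (0 : ℝ), (Set.Iio m).indicator (fun t => t ^ α) t = _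
  rw [setIntegral_indicator measurableSet_Iio, Set.Ioi_inter_Iio, ← integral_Ioc_eq_integral_Ioo,
    ← intervalIntegral.integral_of_le hm, integral_rpow (Or.inl hα), Real.zero_rpow (by linarith),
    sub_zero]

lemma ite_lt_zero_rpow_eq_indicator (β m : ℝ) :
    (fun t : ℝ => if t < m then 0 else t ^ β) = (Set.Ici m).indicator fun t => t ^ β := by
  ext t
  by_cases ht : t < m <;> simp [ht, not_lt.1, not_le.2]

lemma integrableOn_Ioi_ite_lt_zero_rpow (hβ : β < -1) (hm : 0 < m) :
    IntegrableOn (fun t : ℝ => if t < m then 0 else t ^ β) (Set.Ioi 0) := by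
  rw [ite_lt_zero_rpow_eq_indicator, IntegrableOn, integrable_indicator_iff measurableSet_Ici]
  exact ((integrableOn_Ici_iff_integrableOn_Ioi (by simp)).2
    (integrableOn_Ioi_rpow_of_lt hβ hm)).restrict

lemma integral_Ioi_ite_lt_zero_rpow (hβ : β < -1) (hm : 0 < m) :
    ∫ t in Set.Ioi (0 : ℝ), (if t < m then 0 else t ^ β) = -m ^ (β + 1) / (β + 1) := by
  rw [ite_lt_zero_rpow_eq_indicator, setIntegral_indicator measurableSet_Ici,
    Set.inter_eq_right.2 (Set.Ici_subset_Ioi.2 hm), integral_Ici_eq_integral_Ioi,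
    integral_Ioi_rpow_of_lt hβ hm]

/-- What a mass `m`, split at height `l`, contributes to the distribution function of an operator
of weak type `(1, 1)` with constant `c` and strong type `(r, r)` with constant `C`. -/
noncomputable def distributionBound (c C r m l : ℝ) : ℝ :=
  c / l * (if l < m then m else 0) + l ^ (-r) * (C * if l < m then 0 else m ^ r)

variable {c C q r : ℝ}

lemma rpow_mul_distributionBound {l : ℝ} (hl : 0 < l) :
    l ^ (q - 1) * distributionBound c C r m l =
      c * m * (if l < m then l ^ (q - 2) else 0) +
        C * m ^ r * (if l < m then 0 else l ^ (q - 1 - r)) := by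
  have low : l ^ (q - 1) * (c / l) = c * l ^ (q - 2) := by
    rw [show q - 1 = q - 2 + 1 by ring, Real.rpow_add_one hl.ne']
    field_simp
  have high : l ^ (q - 1) * l ^ (-r) = l ^ (q - 1 - r) := by
    rw [← Real.rpow_add hl, ← sub_eq_add_neg]
  rw [distributionBound, mul_add, ← mul_assoc, ← mul_assoc, low, high]
  split_ifs <;> ring

lemma integrableOn_rpow_mul_distributionBound (hm : 0 ≤ m) (hq : 1 < q) (hr : q < r) :
    IntegrableOn (fun l => l ^ (q - 1) * distributionBound c C r m l) (Set.Ioi 0) := by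
  refine (integrableOn_congr_fun (s := Set.Ioi 0) (fun l hl => rpow_mul_distributionBound hl)
    measurableSet_Ioi).2 ?_
  rcases hm.eq_or_lt with rfl | hm
  · simp [Real.zero_rpow (by linarith : r ≠ 0)]
  · exact ((integrableOn_Ioi_ite_lt_rpow (by linarith) hm.le).const_mul _).add
      ((integrableOn_Ioi_ite_lt_zero_rpow (by linarith) hm).const_mul _)

lemma integral_rpow_mul_distributionBound (hm : 0 ≤ m) (hq : 1 < q) (hr : q < r) :
    ∫ l in Set.Ioi 0, l ^ (q - 1) * distributionBound c C r m l =
      (c / (q - 1) + C / (r - q)) * m ^ q := by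
  rw [setIntegral_congr_fun measurableSet_Ioi fun l hl => rpow_mul_distributionBound hl]
  rcases hm.eq_or_lt with rfl | hm
  · simp [Real.zero_rpow (by linarith : r ≠ 0), Real.zero_rpow (by linarith : q ≠ 0)]
  have low : m * m ^ (q - 1) = m ^ q := by
    rw [← Real.rpow_one_add' hm.le (by linarith), add_sub_cancel]
  have high : m ^ r * m ^ (-(r - q)) = m ^ q := by
    rw [← Real.rpow_add hm, neg_sub, add_sub_cancel]
  rw [integral_add ((integrableOn_Ioi_ite_lt_rpow (by linarith) hm.le).const_mul _)
      ((integrableOn_Ioi_ite_lt_zero_rpow (by linarith) hm).const_mul _),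
    integral_const_mul, integral_const_mul, integral_Ioi_ite_lt_rpow (by linarith) hm.le,
    integral_Ioi_ite_lt_zero_rpow (by linarith) hm, show q - 2 + 1 = q - 1 by ring,
    show q - 1 - r + 1 = -(r - q) by ring]
  calc c * m * (m ^ (q - 1) / (q - 1)) + C * m ^ r * (-m ^ (-(r - q)) / -(r - q))
      = c * (m * m ^ (q - 1)) / (q - 1) + C * (m ^ r * m ^ (-(r - q))) / (r - q) := by
        rw [neg_div_neg_eq]
        ring
    _ = (c / (q - 1) + C / (r - q)) * m ^ q := by
        rw [low, high]
        ring

/-- The Marcinkiewicz interpolation theorem for finite sums: integrate the hypothesis against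
`l ^ (q - 1)`. -/
theorem sum_rpow_le_of_sum_ite_le {ι κ : Type*} [Fintype ι] [Fintype κ] {s : ι → ℝ} {w : κ → ℝ}
    (hs : ∀ a, 0 ≤ s a) (hw : ∀ b, 0 ≤ w b) (hq : 1 < q) (hr : q < r)
    (h : ∀ l : ℝ, 0 < l →
      ∑ a, (if 2 * l < s a then (1 : ℝ) else 0) ≤ ∑ b, distributionBound c C r (w b) l) :
    ∑ a, s a ^ q ≤ 2 ^ q * (q * (c / (q - 1) + C / (r - q))) * ∑ b, w b ^ q := by
  have layer_int (a : ι) := integrableOn_Ioi_ite_lt_rpow (by linarith : -1 < q - 1)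
    (div_nonneg (hs a) zero_le_two)
  have bound_int (b : κ) := integrableOn_rpow_mul_distributionBound (c := c) (C := C) (hw b) hq hr
  have layer_cake : ∑ a, (s a / 2) ^ q / q ≤ ∑ b, (c / (q - 1) + C / (r - q)) * w b ^ q := by
    calc ∑ a, (s a / 2) ^ q / q
        = ∫ l in Set.Ioi (0 : ℝ), ∑ a, if l < s a / 2 then l ^ (q - 1) else 0 := by
          rw [integral_finsetSum _ fun a _ => layer_int a]
          refine sum_congr rfl fun a _ => ?_
          rw [integral_Ioi_ite_lt_rpow (by linarith) (div_nonneg (hs a) zero_le_two),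
            sub_add_cancel]
      _ ≤ ∫ l in Set.Ioi (0 : ℝ), ∑ b, l ^ (q - 1) * distributionBound c C r (w b) l := by
          refine setIntegral_mono_on (integrable_finsetSum _ fun a _ => layer_int a)
            (integrable_finsetSum _ fun b _ => bound_int b) measurableSet_Ioi fun l hl => ?_
          have hl : 0 < l := hl
          rw [← mul_sum]
          refine le_trans (le_of_eq ?_)
            (mul_le_mul_of_nonneg_left (h l hl) (Real.rpow_nonneg hl.le (q - 1)))
          simp only [mul_sum, mul_ite, mul_one, mul_zero, lt_div_iff₀' (zero_lt_two' ℝ)]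
      _ = ∑ b, (c / (q - 1) + C / (r - q)) * w b ^ q := by
          rw [integral_finsetSum _ fun b _ => bound_int b]
          exact sum_congr rfl fun b _ => integral_rpow_mul_distributionBound (hw b) hq hr
  have hq0 : q ≠ 0 := by linarith
  calc ∑ a, s a ^ q = 2 ^ q * q * ∑ a, (s a / 2) ^ q / q := by
        rw [mul_sum]
        refine sum_congr rfl fun a _ => ?_
        rw [Real.div_rpow (hs a) zero_le_two]
        field_simp
    _ ≤ 2 ^ q * q * ∑ b, (c / (q - 1) + C / (r - q)) * w b ^ q :=
        mul_le_mul_of_nonneg_left layer_cake (by positivity)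
    _ = 2 ^ q * (q * (c / (q - 1) + C / (r - q))) * ∑ b, w b ^ q := by
        rw [← mul_sum]
        ring

end Interpolation

section Marcinkiewicz

open scoped MatrixOrder ComplexOrder

variable {d K : ℕ} {q r C : ℝ} {ε : ℕ → ℝ}

lemma sum_singularCount_two_mul_le {l : ℝ} (hl : 0 < l) (hr : 0 < r) (hε : ∀ k, |ε k| ≤ 1)
    (hC : ∀ f : Leaf K → CMat d,
      ∑ ω, schattenSum r (martingaleTransform ε K f ω) ≤ C * ∑ ω, schattenSum r (f ω))
    {V : Leaf K → CMat d} (hV : ∀ ω, V ω ∈ unitaryGroup (Fin d) ℂ) {s : Leaf K → Fin d → ℝ}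
    (hs : ∀ ω i, 0 ≤ s ω i) :
    (∑ ω, singularCount (2 * l)
        (martingaleTransform ε K (fun ω => V ω * realDiagonal (s ω) * (V ω)ᴴ) ω) : ℝ) ≤
      ∑ ω, ∑ i, distributionBound 4 C r (s ω i) l := by
  let tall (ω : Leaf K) (i : Fin d) : ℝ := if l < s ω i then s ω i else 0
  let short (ω : Leaf K) (i : Fin d) : ℝ := if l < s ω i then 0 else s ω i
  have tall_nonneg (ω) (i) : 0 ≤ tall ω i := ite_nonneg (hs ω i) le_rfl
  have short_nonneg (ω) (i) : 0 ≤ short ω i := ite_nonneg le_rfl (hs ω i)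
  let f (s : Leaf K → Fin d → ℝ) (ω : Leaf K) : CMat d := V ω * realDiagonal (s ω) * (V ω)ᴴ
  have split : f s = f tall + f short := by
    have tall_eq (ω) : tall ω = s ω - short ω := by
      funext i
      by_cases h : l < s ω i <;> simp [tall, short, h]
    funext ω
    simp [f, tall_eq, realDiagonal_sub, Matrix.mul_sub, Matrix.sub_mul]
  have tall_le := sum_singularCount_martingaleTransform_le hl hε
    (fun ω => mul_realDiagonal_mul_nonneg (V ω) (tall_nonneg ω))
  have short_le : (∑ ω, singularCount l (martingaleTransform ε K (f short) ω) : ℝ) ≤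
      l ^ (-r) * (C * ∑ ω, schattenSum r (f short ω)) := by
    refine (sum_le_sum fun ω _ => singularCount_le_rpow_mul_schattenSum hl hr _).trans ?_
    rw [← mul_sum]
    exact mul_le_mul_of_nonneg_left (hC _) (by positivity)
  calc (∑ ω, singularCount (2 * l) (martingaleTransform ε K (f s) ω) : ℝ)
      ≤ ∑ ω, ((singularCount l (martingaleTransform ε K (f tall) ω) : ℝ) +
          singularCount l (martingaleTransform ε K (f short) ω)) := by
        refine sum_le_sum fun ω _ => ?_
        rw [split, map_add, two_mul]
        exact_mod_cast singularCount_add_le hl.le hl.le _ _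
    _ ≤ 4 / l * ∑ ω, reTrace (f tall ω) + l ^ (-r) * (C * ∑ ω, schattenSum r (f short ω)) := by
        rw [sum_add_distrib]
        exact add_le_add tall_le short_le
    _ = ∑ ω, ∑ i, distributionBound 4 C r (s ω i) l := by
        simp only [f, reTrace_mul_realDiagonal_mul (hV _),
          schattenSum_mul_realDiagonal_mul (hV _) (hV _) (short_nonneg _), mul_sum,
          ← sum_add_distrib, distributionBound]
        refine sum_congr rfl fun ω _ => sum_congr rfl fun i _ => ?_
        simp only [tall, short, apply_ite (· ^ r), Real.zero_rpow hr.ne']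

lemma sum_schattenSum_martingaleTransform_le_of_nonneg (hq : 1 < q) (hr : q < r)
    (hε : ∀ k, |ε k| ≤ 1)
    (hC : ∀ f : Leaf K → CMat d,
      ∑ ω, schattenSum r (martingaleTransform ε K f ω) ≤ C * ∑ ω, schattenSum r (f ω))
    {f : Leaf K → CMat d} (hf : ∀ ω, 0 ≤ f ω) :
    ∑ ω, schattenSum q (martingaleTransform ε K f ω) ≤
      2 ^ q * (q * (4 / (q - 1) + C / (r - q))) * ∑ ω, schattenSum q (f ω) := by
  have hpsd (ω : Leaf K) : (f ω).PosSemidef := (hf ω).posSemidef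
  choose V hV hfV using fun ω => exists_unitary_diagonalization (hpsd ω).isHermitian
  have hs (ω : Leaf K) := (hpsd ω).eigenvalues_nonneg
  have hsum : f = fun ω => V ω * realDiagonal (hpsd ω).isHermitian.eigenvalues * (V ω)ᴴ :=
    funext hfV
  have interpolated := sum_rpow_le_of_sum_ite_le (c := 4) (C := C)
    (s := fun z : Leaf K × Fin d => singularValues (martingaleTransform ε K f z.1) z.2)
    (w := fun z : Leaf K × Fin d => (hpsd z.1).isHermitian.eigenvalues z.2)
    (fun _ => singularValues_nonneg _ _) (fun z => hs z.1 z.2) hq hr fun l hl => ?_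
  · rw [Fintype.sum_prod_type, Fintype.sum_prod_type] at interpolated
    refine interpolated.trans_eq ?_
    congr 1
    refine sum_congr rfl fun ω _ => ?_
    conv_rhs => rw [hfV ω, schattenSum_mul_realDiagonal_mul (hV ω) (hV ω) (hs ω)]
  · have counted := sum_singularCount_two_mul_le hl (by linarith) hε hC hV hs
    rw [← hsum] at counted
    rw [Fintype.sum_prod_type, Fintype.sum_prod_type]
    simpa only [singularCount, card_filter, Nat.cast_sum, Nat.cast_ite, Nat.cast_one,
      Nat.cast_zero] using counted

end Marcinkiewicz

section UniformBound

open Complex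
open scoped MatrixOrder ComplexOrder ComplexStarModule

variable {Ω : Type*} [Fintype Ω] {d K : ℕ} {p q r C N : ℝ} {ε : ℕ → ℝ}

lemma schattenSum_of_isHermitian {h : CMat d} (hh : h.IsHermitian) (p : ℝ) :
    schattenSum p h = ∑ i, |hh.eigenvalues i| ^ p := by
  obtain ⟨V, hV, hhV⟩ := exists_unitary_diagonalization hh
  set s := hh.eigenvalues
  let u : Fin d → ℝ := fun i => if 0 ≤ s i then 1 else -1
  have hu_sq : u * u = 1 := by
    funext i
    by_cases hi : 0 ≤ s i <;> simp [u, hi]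
  have hus : u * |s| = s := by
    funext i
    by_cases hi : 0 ≤ s i
    · simp [u, hi]
    · simp [u, hi, abs_of_neg (not_le.1 hi)]
  have hu : realDiagonal u ∈ unitaryGroup (Fin d) ℂ := by
    rw [mem_unitaryGroup_iff, star_eq_conjTranspose, conjTranspose_realDiagonal, realDiagonal_mul,
      hu_sq]
    simp [realDiagonal]
  have polar : h = V * realDiagonal u * realDiagonal |s| * Vᴴ := by
    rw [Matrix.mul_assoc V, realDiagonal_mul, hus]
    exact hhV
  conv_lhs => rw [polar]
  exact schattenSum_mul_realDiagonal_mul (mul_mem hV hu) hV (fun i => abs_nonneg (s i)) p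

lemma exists_nonneg_sub_of_isHermitian {h : CMat d} (hh : h.IsHermitian) (hp : 0 < p) :
    ∃ a b : CMat d, 0 ≤ a ∧ 0 ≤ b ∧ h = a - b ∧
      schattenSum p a ≤ schattenSum p h ∧ schattenSum p b ≤ schattenSum p h := by
  obtain ⟨V, hV, hhV⟩ := exists_unitary_diagonalization hh
  have hsum := schattenSum_of_isHermitian hh p
  set s := hh.eigenvalues
  have posPart_le (i) : (s⁺ i) ≤ |s i| := by
    rw [Pi.posPart_apply]
    exact max_le (le_abs_self _) (abs_nonneg _)
  have negPart_le (i) : (s⁻ i) ≤ |s i| := by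
    rw [Pi.negPart_apply]
    exact max_le (neg_le_abs _) (abs_nonneg _)
  refine ⟨V * realDiagonal s⁺ * Vᴴ, V * realDiagonal s⁻ * Vᴴ,
    mul_realDiagonal_mul_nonneg V (posPart_nonneg s),
    mul_realDiagonal_mul_nonneg V (negPart_nonneg s), ?_, ?_, ?_⟩
  · rw [← Matrix.sub_mul, ← Matrix.mul_sub, ← realDiagonal_sub, posPart_sub_negPart]
    exact hhV
  · rw [hsum, schattenSum_mul_realDiagonal_mul hV hV (posPart_nonneg s)]
    exact sum_le_sum fun i _ => Real.rpow_le_rpow (posPart_nonneg s i) (posPart_le i) hp.le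
  · rw [hsum, schattenSum_mul_realDiagonal_mul hV hV (negPart_nonneg s)]
    exact sum_le_sum fun i _ => Real.rpow_le_rpow (negPart_nonneg s i) (negPart_le i) hp.le

lemma familySchattenNorm_rpow (hp : p ≠ 0) (f : Ω → CMat d) :
    familySchattenNorm p f ^ p = ∑ ω, schattenSum p (f ω) := by
  rw [familySchattenNorm, ← Real.rpow_mul (sum_schattenSum_nonneg p f), one_div_mul_cancel hp,
    Real.rpow_one]

lemma familySchattenNorm_mono (hp : 0 ≤ p) {f g : Ω → CMat d}
    (h : ∀ ω, schattenSum p (f ω) ≤ schattenSum p (g ω)) :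
    familySchattenNorm p f ≤ familySchattenNorm p g :=
  Real.rpow_le_rpow (sum_schattenSum_nonneg _ _) (sum_le_sum fun ω _ => h ω) (by positivity)

lemma familySchattenNorm_neg_le (hp : 1 < p) (f : Ω → CMat d) :
    familySchattenNorm p (-f) ≤ familySchattenNorm p f := by
  simpa using familySchattenNorm_smul_le hp (-1) f

lemma familySchattenNorm_conjTranspose (f : Ω → CMat d) :
    familySchattenNorm p (fun ω => (f ω)ᴴ) = familySchattenNorm p f := by
  simp only [familySchattenNorm, schattenSum_conjTranspose]

lemma familySchattenNorm_realPart_le (hp : 1 < p) (f : Ω → CMat d) :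
    familySchattenNorm p (fun ω => (ℜ (f ω) : CMat d)) ≤ familySchattenNorm p f := by
  have hre : (fun ω => (ℜ (f ω) : CMat d)) = (2⁻¹ : ℂ) • (f + fun ω => (f ω)ᴴ) := by
    funext ω
    rw [realPart_apply_coe, Pi.smul_apply, Pi.add_apply, star_eq_conjTranspose,
      ← Complex.coe_smul]
    simp
  rw [hre]
  refine (familySchattenNorm_smul_le hp _ _).trans ?_
  have hadd := familySchattenNorm_add_le hp f fun ω => (f ω)ᴴ
  rw [familySchattenNorm_conjTranspose] at hadd
  rw [norm_inv, Complex.norm_two]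
  linarith

lemma familySchattenNorm_imaginaryPart_le (hp : 1 < p) (f : Ω → CMat d) :
    familySchattenNorm p (fun ω => (ℑ (f ω) : CMat d)) ≤ familySchattenNorm p f := by
  have him : (fun ω => (ℑ (f ω) : CMat d)) = fun ω => (ℜ ((-I • f) ω) : CMat d) := by
    funext ω
    rw [Pi.smul_apply, neg_smul, map_neg, realPart_I_smul, neg_neg]
  rw [him]
  refine (familySchattenNorm_realPart_le hp _).trans ((familySchattenNorm_smul_le hp _ _).trans ?_)
  simp

/-- The martingale transform with multipliers `ε` on the binary tree of depth `K` is bounded by `N`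
on the Schatten space of order `p` of families of `d × d` matrices. -/
def MartingaleTransformBound (ε : ℕ → ℝ) (d K : ℕ) (p N : ℝ) : Prop :=
  ∀ f : Leaf K → CMat d,
    familySchattenNorm p (martingaleTransform ε K f) ≤ N * familySchattenNorm p f

lemma MartingaleTransformBound.mono {N' : ℝ} (h : MartingaleTransformBound ε d K p N)
    (hN : N ≤ N') : MartingaleTransformBound ε d K p N' := fun f =>
  (h f).trans (mul_le_mul_of_nonneg_right hN (familySchattenNorm_nonneg _ _))

lemma MartingaleTransformBound.dual (h : MartingaleTransformBound ε d K q N)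
    (hpq : p.HolderConjugate q) (hN : 0 ≤ N) : MartingaleTransformBound ε d K p N := fun f => by
  refine familySchattenNorm_le_of_forall_norm_tracePairing_le hpq
    (mul_nonneg hN (familySchattenNorm_nonneg _ _)) fun g => ?_
  rw [tracePairing_martingaleTransform, mul_right_comm, mul_comm _ (familySchattenNorm p f)]
  exact (norm_tracePairing_le hpq _ _).trans
    (mul_le_mul_of_nonneg_left (h g) (familySchattenNorm_nonneg _ _))

lemma MartingaleTransformBound.sum_schattenSum_le (h : MartingaleTransformBound ε d K p N)
    (hp : 0 < p) (hN : 0 ≤ N) (f : Leaf K → CMat d) :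
    ∑ ω, schattenSum p (martingaleTransform ε K f ω) ≤ N ^ p * ∑ ω, schattenSum p (f ω) := by
  have hpow := Real.rpow_le_rpow (familySchattenNorm_nonneg _ _) (h f) hp.le
  rwa [Real.mul_rpow hN (familySchattenNorm_nonneg _ _), familySchattenNorm_rpow hp.ne',
    familySchattenNorm_rpow hp.ne'] at hpow

lemma familySchattenNorm_martingaleTransform_le_of_nonneg {A : ℝ} (hp : 1 ≤ p) (hA : 1 ≤ A)
    {f : Leaf K → CMat d}
    (h : ∑ ω, schattenSum p (martingaleTransform ε K f ω) ≤ A * ∑ ω, schattenSum p (f ω)) :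
    familySchattenNorm p (martingaleTransform ε K f) ≤ A * familySchattenNorm p f := by
  have hp0 : 0 < p := by linarith
  calc familySchattenNorm p (martingaleTransform ε K f)
      ≤ (A * ∑ ω, schattenSum p (f ω)) ^ (1 / p) :=
        Real.rpow_le_rpow (sum_schattenSum_nonneg _ _) h (by positivity)
    _ = A ^ (1 / p) * familySchattenNorm p f := by
        rw [Real.mul_rpow (by linarith) (sum_schattenSum_nonneg _ _), familySchattenNorm]
    _ ≤ A * familySchattenNorm p f := by
        refine mul_le_mul_of_nonneg_right ?_ (familySchattenNorm_nonneg _ _)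
        exact Real.rpow_le_self_of_one_le hA ((div_le_one hp0).2 hp)

lemma familySchattenNorm_martingaleTransform_le_of_isHermitian (hp : 1 < p) {A : ℝ} (hA : 0 ≤ A)
    (h : ∀ f : Leaf K → CMat d, (∀ ω, 0 ≤ f ω) →
      familySchattenNorm p (martingaleTransform ε K f) ≤ A * familySchattenNorm p f)
    {f : Leaf K → CMat d} (hf : ∀ ω, (f ω).IsHermitian) :
    familySchattenNorm p (martingaleTransform ε K f) ≤ 2 * A * familySchattenNorm p f := by
  have hp0 : 0 < p := by linarith
  choose a b ha hb hab ha_le hb_le using fun ω => exists_nonneg_sub_of_isHermitian (hf ω) hp0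
  have hsplit : martingaleTransform ε K f =
      martingaleTransform ε K a + -martingaleTransform ε K b := by
    rw [← sub_eq_add_neg, ← map_sub, show f = a - b from funext hab]
  calc familySchattenNorm p (martingaleTransform ε K f)
      ≤ familySchattenNorm p (martingaleTransform ε K a) +
          familySchattenNorm p (martingaleTransform ε K b) := by
        rw [hsplit]
        exact (familySchattenNorm_add_le hp _ _).trans
          (add_le_add_right (familySchattenNorm_neg_le hp _) _)
    _ ≤ A * familySchattenNorm p f + A * familySchattenNorm p f :=
        add_le_add
          ((h a ha).trans (mul_le_mul_of_nonneg_left (familySchattenNorm_mono hp0.le ha_le) hA))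
          ((h b hb).trans (mul_le_mul_of_nonneg_left (familySchattenNorm_mono hp0.le hb_le) hA))
    _ = 2 * A * familySchattenNorm p f := by ring

lemma martingaleTransformBound_of_isHermitian (hp : 1 < p) {A : ℝ} (hA : 0 ≤ A)
    (h : ∀ f : Leaf K → CMat d, (∀ ω, (f ω).IsHermitian) →
      familySchattenNorm p (martingaleTransform ε K f) ≤ A * familySchattenNorm p f) :
    MartingaleTransformBound ε d K p (2 * A) := fun f => by
  let re : Leaf K → CMat d := fun ω => ℜ (f ω)
  let im : Leaf K → CMat d := fun ω => ℑ (f ω)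
  have hf : f = re + fun ω => I • im ω :=
    funext fun ω => (realPart_add_I_smul_imaginaryPart (f ω)).symm
  have hsplit : martingaleTransform ε K f =
      martingaleTransform ε K re + I • martingaleTransform ε K im := by
    conv_lhs => rw [hf, map_add]
    congr 1
    funext ω
    exact martingaleTransform_map ε (I • LinearMap.id) im ω
  have im_le : familySchattenNorm p (I • martingaleTransform ε K im) ≤
      familySchattenNorm p (martingaleTransform ε K im) := by
    simpa using familySchattenNorm_smul_le hp I (martingaleTransform ε K im)
  calc familySchattenNorm p (martingaleTransform ε K f)
      ≤ familySchattenNorm p (martingaleTransform ε K re) +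
          familySchattenNorm p (martingaleTransform ε K im) := by
        rw [hsplit]
        exact (familySchattenNorm_add_le hp _ _).trans (add_le_add_right im_le _)
    _ ≤ A * familySchattenNorm p f + A * familySchattenNorm p f :=
        add_le_add
          ((h re fun ω => (ℜ (f ω)).2).trans
            (mul_le_mul_of_nonneg_left (familySchattenNorm_realPart_le hp f) hA))
          ((h im fun ω => (ℑ (f ω)).2).trans
            (mul_le_mul_of_nonneg_left (familySchattenNorm_imaginaryPart_le hp f) hA))
    _ = 2 * A * familySchattenNorm p f := by ring

lemma MartingaleTransformBound.interpolate (hq : 1 < q) (hq2 : q ≤ 2) (hr : q < r)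
    (hε : ∀ k, |ε k| ≤ 1) (hC : 0 ≤ C)
    (h : ∀ f : Leaf K → CMat d,
      ∑ ω, schattenSum r (martingaleTransform ε K f ω) ≤ C * ∑ ω, schattenSum r (f ω)) :
    MartingaleTransformBound ε d K q (4 * (2 ^ q * (q * (4 / (q - 1) + C / (r - q))))) := by
  set A := 2 ^ q * (q * (4 / (q - 1) + C / (r - q)))
  have hA : 1 ≤ A := by
    have pow_ge : (1 : ℝ) ≤ 2 ^ q := Real.one_le_rpow one_le_two (by linarith)
    have low_ge : 1 ≤ 4 / (q - 1) := by
      rw [le_div_iff₀ (by linarith)]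
      linarith
    have high_nonneg : 0 ≤ C / (r - q) := div_nonneg hC (by linarith)
    exact one_le_mul_of_one_le_of_one_le pow_ge
      (one_le_mul_of_one_le_of_one_le hq.le (by linarith))
  rw [show 4 * A = 2 * (2 * A) by ring]
  exact martingaleTransformBound_of_isHermitian hq (by linarith) fun f hf =>
    familySchattenNorm_martingaleTransform_le_of_isHermitian hq (by linarith) (fun a ha =>
      familySchattenNorm_martingaleTransform_le_of_nonneg hq.le hA
        (sum_schattenSum_martingaleTransform_le_of_nonneg hq hr hε h ha)) hf

/-- The order-`3 / 2` and order-`3` bound obtained by interpolating at `3 / 2` between the weak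
`(1, 1)` and the `(2, 2)` estimates. -/
noncomputable def cubicBound : ℝ :=
  4 * (2 ^ (3 / 2 : ℝ) * (3 / 2 * (4 / (3 / 2 - 1) + 1 / (2 - 3 / 2))))

lemma cubicBound_pos : 0 < cubicBound := by
  rw [cubicBound]
  norm_num
  positivity

lemma martingaleTransformBound_three (hε : ∀ k, |ε k| ≤ 1) (d K : ℕ) :
    MartingaleTransformBound ε d K 3 cubicBound := by
  have threeHalves : MartingaleTransformBound ε d K (3 / 2) cubicBound :=
    MartingaleTransformBound.interpolate (r := 2) (by norm_num) (by norm_num) (by norm_num) hε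
      zero_le_one fun f => by
        rw [one_mul]
        exact sum_schattenSum_two_martingaleTransform_le hε f
  exact threeHalves.dual (Real.holderConjugate_iff.2 ⟨by norm_num, by norm_num⟩) cubicBound_pos.le

lemma martingaleTransformBound_of_le_two (hε : ∀ k, |ε k| ≤ 1) (hq : 1 < q) (hq2 : q ≤ 2) :
    MartingaleTransformBound ε d K q (32 * (4 + cubicBound ^ (3 : ℝ)) * (1 / (q - 1))) := by
  set C := cubicBound ^ (3 : ℝ)
  have hC : 0 ≤ C := Real.rpow_nonneg cubicBound_pos.le 3
  have bound_three := (martingaleTransformBound_three hε d K).sum_schattenSum_le (by norm_num)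
    cubicBound_pos.le
  refine (MartingaleTransformBound.interpolate hq hq2 (by linarith) hε hC bound_three).mono ?_
  have hq3 : 0 < 3 - q := by linarith
  have pow_le : (2 : ℝ) ^ q ≤ 4 := by
    calc (2 : ℝ) ^ q ≤ 2 ^ (2 : ℝ) := Real.rpow_le_rpow_of_exponent_le one_le_two hq2
      _ = 4 := by norm_num
  calc 4 * (2 ^ q * (q * (4 / (q - 1) + C / (3 - q))))
      ≤ 4 * (4 * (2 * (4 / (q - 1) + C / (q - 1)))) := by
        have hle : q - 1 ≤ 3 - q := by linarith
        gcongr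
    _ = 32 * (4 + C) * (1 / (q - 1)) := by ring

theorem exists_martingaleTransformBound :
    ∃ c : ℝ, 0 < c ∧ ∀ p : ℝ, 1 < p → ∀ ε : ℕ → ℝ, (∀ k, |ε k| ≤ 1) → ∀ d K : ℕ,
      MartingaleTransformBound ε d K p (c * (p ^ 2 / (p - 1))) := by
  have hpos : 0 < 32 * (4 + cubicBound ^ (3 : ℝ)) := by
    have := Real.rpow_pos_of_pos cubicBound_pos 3
    positivity
  refine ⟨32 * (4 + cubicBound ^ (3 : ℝ)), hpos, fun p hp ε hε d K => ?_⟩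
  have hp1 : 0 < p - 1 := by linarith
  rcases le_or_gt p 2 with hp2 | hp2
  · refine (martingaleTransformBound_of_le_two hε hp hp2).mono
      (mul_le_mul_of_nonneg_left ?_ hpos.le)
    gcongr
    nlinarith
  · have hpq : p.HolderConjugate (p / (p - 1)) := Real.HolderConjugate.conjExponent hp
    have hq_sub_one : p / (p - 1) - 1 = 1 / (p - 1) := by
      field_simp
      ring
    have hq2 : p / (p - 1) ≤ 2 := by
      rw [div_le_iff₀ hp1]
      linarith
    have bound_q := martingaleTransformBound_of_le_two (d := d) (K := K) hε hpq.symm.lt hq2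
    rw [hq_sub_one, one_div_one_div] at bound_q
    refine (bound_q.dual hpq (by positivity)).mono (mul_le_mul_of_nonneg_left ?_ hpos.le)
    rw [le_div_iff₀ hp1]
    nlinarith

end UniformBound

section TreeCharacters

/-- The factor `exp (± i t)` contributed by one branching, with sign `+` on the branch `true`. -/
noncomputable def branchPhase (i : Bool) (t : ℝ) : ℂ :=
  Complex.exp (((cond i t (-t) : ℝ) : ℂ) * Complex.I)

/-- The character `exp (i ∑ ± θ k)` of the leaves, the sign of `θ k` being the branch taken at the
root of the subtree of depth `k + 1`. -/
noncomputable def treeCharacter (θ : ℕ → ℝ) : (K : ℕ) → Leaf K → ℂ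
  | 0, _ => 1
  | K + 1, (i, η) => branchPhase i (θ K) * treeCharacter θ K η

/-- The correlation of `treeCharacter θ` with its image under `martingaleTransform ε`. -/
noncomputable def martingaleSymbol (ε θ : ℕ → ℝ) (K : ℕ) : ℝ :=
  ∑ k ∈ range K, ε k * Real.sin (θ k) ^ 2 * (∏ j ∈ range k, Real.cos (θ j)) ^ 2

lemma branchPhase_add (i : Bool) (s t : ℝ) :
    branchPhase i (s + t) = branchPhase i s * branchPhase i t := by
  rw [branchPhase, branchPhase, branchPhase, ← Complex.exp_add, ← add_mul]
  cases i <;> simp only [cond_true, cond_false] <;> congr 2 <;> push_cast <;> ring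

lemma branchPhase_neg (i : Bool) (t : ℝ) : branchPhase i (-t) = star (branchPhase i t) := by
  rw [branchPhase, branchPhase, Complex.star_def, ← Complex.exp_conj, map_mul, Complex.conj_ofReal,
    Complex.conj_I]
  cases i <;> simp

lemma branchPhase_mul_branchPhase_neg (i : Bool) (t : ℝ) :
    branchPhase i t * branchPhase i (-t) = 1 := by
  rw [← branchPhase_add, add_neg_cancel]
  cases i <;> simp [branchPhase]

lemma sum_branchPhase (t : ℝ) : ∑ i, branchPhase i t = ((2 * Real.cos t : ℝ) : ℂ) := by
  rw [Fintype.sum_bool, branchPhase, branchPhase]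
  push_cast
  rw [Complex.two_cos]
  simp

lemma treeCharacter_succ (θ : ℕ → ℝ) {K : ℕ} (i : Bool) (η : Leaf K) :
    treeCharacter θ (K + 1) (i, η) = branchPhase i (θ K) * treeCharacter θ K η := rfl

lemma treeCharacter_sub (θ θ' : ℕ → ℝ) : ∀ {K : ℕ} (ω : Leaf K),
    treeCharacter (θ - θ') K ω = treeCharacter θ K ω * star (treeCharacter θ' K ω)
  | 0, _ => by simp [treeCharacter]
  | K + 1, (i, η) => by
    rw [treeCharacter_succ, treeCharacter_succ, treeCharacter_succ, treeCharacter_sub θ θ' η,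
      Pi.sub_apply, sub_eq_add_neg, branchPhase_add, branchPhase_neg, star_mul']
    ring

lemma treeCharacter_zero : ∀ {K : ℕ} (ω : Leaf K), treeCharacter 0 K ω = 1
  | 0, _ => rfl
  | K + 1, (i, η) => by
    rw [treeCharacter_succ, treeCharacter_zero η]
    cases i <;> simp [branchPhase]

lemma star_treeCharacter_mul_self (θ : ℕ → ℝ) {K : ℕ} (ω : Leaf K) :
    star (treeCharacter θ K ω) * treeCharacter θ K ω = 1 := by
  rw [mul_comm, ← treeCharacter_sub, sub_self, treeCharacter_zero]

lemma branch_treeCharacter (θ : ℕ → ℝ) {K : ℕ} (i : Bool) :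
    branch i (treeCharacter θ (K + 1)) =
      fun η => LinearMap.mulLeft ℝ (branchPhase i (θ K)) (treeCharacter θ K η) := rfl

lemma leafMean_branch_treeCharacter (θ : ℕ → ℝ) {K : ℕ} (i : Bool) :
    leafMean (branch i (treeCharacter θ (K + 1))) =
      branchPhase i (θ K) * leafMean (treeCharacter θ K) := by
  rw [branch_treeCharacter, leafMean_map, LinearMap.mulLeft_apply]

lemma martingaleTransform_branch_treeCharacter (ε θ : ℕ → ℝ) {K : ℕ} (i : Bool) (η : Leaf K) :
    martingaleTransform ε K (branch i (treeCharacter θ (K + 1))) η =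
      branchPhase i (θ K) * martingaleTransform ε K (treeCharacter θ K) η := by
  rw [branch_treeCharacter, martingaleTransform_map, LinearMap.mulLeft_apply]

lemma leafMean_treeCharacter (θ : ℕ → ℝ) (K : ℕ) :
    leafMean (treeCharacter θ K) = ((∏ k ∈ range K, Real.cos (θ k) : ℝ) : ℂ) := by
  induction K with
  | zero => simp [leafMean_zero, treeCharacter]
  | succ K ih =>
    rw [leafMean_succ]
    simp only [leafMean_branch_treeCharacter, ih, ← Finset.sum_mul, sum_branchPhase,
      Complex.real_smul, prod_range_succ]
    push_cast
    ring

lemma martingaleSymbol_succ (ε θ : ℕ → ℝ) (K : ℕ) :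
    martingaleSymbol ε θ (K + 1) = martingaleSymbol ε θ K +
      ε K * Real.sin (θ K) ^ 2 * (∏ k ∈ range K, Real.cos (θ k)) ^ 2 :=
  sum_range_succ _ K

lemma sum_martingaleTransform_treeCharacter (ε θ : ℕ → ℝ) (K : ℕ) :
    ∑ ω, martingaleTransform ε K (treeCharacter θ K) ω * treeCharacter (-θ) K ω =
      2 ^ K * (martingaleSymbol ε θ K : ℂ) := by
  induction K with
  | zero => simp [martingaleTransform_zero, martingaleSymbol]
  | succ K ih =>
    set c : ℝ := ∏ k ∈ range K, Real.cos (θ k) with hc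
    have mean (i : Bool) : leafMean (branch i (treeCharacter θ (K + 1))) *
        leafMean (branch i (treeCharacter (-θ) (K + 1))) = ((c ^ 2 : ℝ) : ℂ) := by
      rw [leafMean_branch_treeCharacter, leafMean_branch_treeCharacter, mul_mul_mul_comm,
        Pi.neg_apply, branchPhase_mul_branchPhase_neg, one_mul, leafMean_treeCharacter,
        leafMean_treeCharacter]
      simp only [Pi.neg_apply, Real.cos_neg, ← hc, sq, Complex.ofReal_mul]
    have subtree (i : Bool) : ∑ η, martingaleTransform ε K (branch i (treeCharacter θ (K + 1))) η *
        branch i (treeCharacter (-θ) (K + 1)) η = 2 ^ K * (martingaleSymbol ε θ K : ℂ) := by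
      rw [← ih]
      refine sum_congr rfl fun η _ => ?_
      rw [martingaleTransform_branch_treeCharacter, branch_apply, treeCharacter_succ,
        mul_mul_mul_comm, Pi.neg_apply, branchPhase_mul_branchPhase_neg, one_mul]
    have pairing := sum_martingaleTransform_succ_pairing ε (LinearMap.mul ℝ ℂ)
      (treeCharacter θ (K + 1)) (treeCharacter (-θ) (K + 1))
    simp only [LinearMap.mul_apply', subtree, mean, leafMean_treeCharacter, Pi.neg_apply,
      Real.cos_neg, prod_range_succ, ← hc, Fintype.sum_bool, Complex.real_smul] at pairing
    rw [pairing, martingaleSymbol_succ, ← hc, Real.sin_sq]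
    push_cast
    ring

end TreeCharacters

section SchurMultipliers

variable {d : ℕ} {p q N : ℝ}

/-- In dual form, for conjugate exponents `p` and `q`: the Schur multiplier `x ↦ m ⊙ x` has norm
at most `N` on the Schatten class of exponent `p`. -/
def SchurMultiplierBound (p q N : ℝ) (m : CMat d) : Prop :=
  ∀ x y : CMat d, ‖((m ⊙ x) * y).trace‖ ≤ N * (schattenNorm p x * schattenNorm q y)

lemma trace_hadamard_mul (m x y : CMat d) :
    ((m ⊙ x) * y).trace = ∑ k, ∑ l, m k l * (x k l * y l k) := by
  simp only [Matrix.trace, diag_apply, Matrix.mul_apply, hadamard_apply, mul_assoc]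

/-- Conjugating `x` by the diagonal unitaries of a family of tree characters. -/
noncomputable def modulation (θ : Fin d → ℕ → ℝ) {K : ℕ} (x : CMat d) (ω : Leaf K) : CMat d :=
  diagonal (fun k => treeCharacter (θ k) K ω) * x * (diagonal fun k => treeCharacter (θ k) K ω)ᴴ

variable (θ : Fin d → ℕ → ℝ) {K : ℕ}

lemma modulation_apply (x : CMat d) (ω : Leaf K) (k l : Fin d) :
    modulation θ x ω k l = x k l * treeCharacter (θ k - θ l) K ω := by
  rw [modulation, diagonal_conjTranspose, mul_diagonal, diagonal_mul, treeCharacter_sub,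
    Pi.star_apply]
  ring

lemma familySchattenNorm_modulation (x : CMat d) :
    familySchattenNorm p (modulation θ x : Leaf K → CMat d) =
      ((2 : ℝ) ^ K) ^ (1 / p) * schattenNorm p x := by
  have unitary (ω : Leaf K) : (diagonal fun k => treeCharacter (θ k) K ω) ∈
      unitaryGroup (Fin d) ℂ := by
    rw [mem_unitaryGroup_iff', star_eq_conjTranspose, diagonal_conjTranspose,
      diagonal_mul_diagonal]
    simp only [Pi.star_apply, star_treeCharacter_mul_self, diagonal_one]
  rw [familySchattenNorm, schattenNorm, ← schattenSum]
  simp only [modulation, schattenSum_unitary_mul_mul (unitary _) (unitary _), Leaf.sum_const]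
  rw [Real.mul_rpow (by positivity) (schattenSum_nonneg p x)]

lemma tracePairing_martingaleTransform_modulation (ε : ℕ → ℝ) (x y : CMat d) :
    tracePairing (martingaleTransform ε K (modulation θ x)) (modulation θ y) =
      2 ^ K * (((of fun k l => (martingaleSymbol ε (θ k - θ l) K : ℂ)) ⊙ x) * y).trace := by
  have entry (k l : Fin d) (ω : Leaf K) : martingaleTransform ε K (modulation θ x) ω k l =
      x k l * martingaleTransform ε K (treeCharacter (θ k - θ l) K) ω := by
    have := martingaleTransform_map ε (entryLinearMap ℝ ℂ k l) (modulation θ x) ω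
    simp only [entryLinearMap_apply, modulation_apply] at this
    rw [← this]
    exact martingaleTransform_map ε (LinearMap.mulLeft ℝ (x k l)) _ ω
  rw [trace_hadamard_mul]
  simp only [tracePairing, Matrix.trace, diag_apply, Matrix.mul_apply, of_apply, entry,
    modulation_apply, Finset.mul_sum]
  rw [sum_comm]
  refine sum_congr rfl fun k _ => ?_
  rw [sum_comm]
  refine sum_congr rfl fun l _ => ?_
  have symbol := sum_martingaleTransform_treeCharacter ε (θ k - θ l) K
  rw [neg_sub] at symbol
  rw [← mul_assoc (2 ^ K), ← symbol, Finset.sum_mul]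
  exact sum_congr rfl fun ω _ => by ring

lemma MartingaleTransformBound.schurMultiplierBound (hpq : p.HolderConjugate q) {ε : ℕ → ℝ}
    (h : MartingaleTransformBound ε d K p N) :
    SchurMultiplierBound p q N (of fun k l => (martingaleSymbol ε (θ k - θ l) K : ℂ)) := by
  intro x y
  have volume : ((2 : ℝ) ^ K) ^ (1 / p) * ((2 : ℝ) ^ K) ^ (1 / q) = 2 ^ K := by
    rw [← Real.rpow_add (by positivity), one_div, one_div, hpq.inv_add_inv_eq_one, Real.rpow_one]
  refine le_of_mul_le_mul_left ?_ (by positivity : (0 : ℝ) < 2 ^ K)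
  set m : CMat d := of fun k l => (martingaleSymbol ε (θ k - θ l) K : ℂ)
  calc 2 ^ K * ‖((m ⊙ x) * y).trace‖
      = ‖tracePairing (martingaleTransform ε K (modulation θ x)) (modulation θ y)‖ := by
        rw [tracePairing_martingaleTransform_modulation, norm_mul, norm_pow, Complex.norm_ofNat]
    _ ≤ N * familySchattenNorm p (modulation θ x : Leaf K → CMat d) *
          familySchattenNorm q (modulation θ y : Leaf K → CMat d) :=
        (norm_tracePairing_le hpq _ _).trans
          (mul_le_mul_of_nonneg_right (h _) (familySchattenNorm_nonneg q _))
    _ = 2 ^ K * (N * (schattenNorm p x * schattenNorm q y)) := by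
        rw [familySchattenNorm_modulation, familySchattenNorm_modulation]
        linear_combination (N * schattenNorm p x * schattenNorm q y) * volume

end SchurMultipliers

section SchurMultiplierBoundAlgebra

variable {d : ℕ} {p q N N' : ℝ}

open Filter Topology in
lemma SchurMultiplierBound.of_tendsto {ι : Type*} {F : Filter ι} [F.NeBot] {m : ι → CMat d}
    {m' : CMat d} (h : ∀ j, SchurMultiplierBound p q N (m j))
    (hm : ∀ k l, Tendsto (fun j => m j k l) F (𝓝 (m' k l))) : SchurMultiplierBound p q N m' := by
  intro x y
  refine le_of_tendsto (x := F) (f := fun j => ‖((m j ⊙ x) * y).trace‖) (Tendsto.norm ?_)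
    (Eventually.of_forall fun j => h j x y)
  simp only [trace_hadamard_mul]
  exact tendsto_finsetSum _ fun k _ => tendsto_finsetSum _ fun l _ => (hm k l).mul_const _

lemma SchurMultiplierBound.add {m m' : CMat d} (h : SchurMultiplierBound p q N m)
    (h' : SchurMultiplierBound p q N' m') : SchurMultiplierBound p q (N + N') (m + m') := by
  intro x y
  rw [add_hadamard, Matrix.add_mul, trace_add, add_mul]
  exact (norm_add_le _ _).trans (add_le_add (h x y) (h' x y))

lemma SchurMultiplierBound.smul {m : CMat d} (c : ℂ) (h : SchurMultiplierBound p q N m) :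
    SchurMultiplierBound p q (‖c‖ * N) (c • m) := by
  intro x y
  rw [smul_hadamard, Matrix.smul_mul, trace_smul, norm_smul, mul_assoc]
  exact mul_le_mul_of_nonneg_left (h x y) (norm_nonneg c)

end SchurMultiplierBoundAlgebra

section RieszSymbol

/-- The coefficients `1, 0, 1, 0, …`. -/
noncomputable def alternatingCoeff (j : ℕ) : ℝ := if Even j then 1 else 0

/-- The sequence `b, a, b, a, …`. -/
def interlace (a b : ℝ) (j : ℕ) : ℝ := if Even j then b else a

/-- The symbol of the squared second Riesz transform of the plane. -/
noncomputable def rieszSquareSymbol (a b : ℝ) : ℝ := b ^ 2 / (a ^ 2 + b ^ 2)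

lemma abs_alternatingCoeff_le_one (j : ℕ) : |alternatingCoeff j| ≤ 1 := by
  rw [alternatingCoeff]
  split_ifs <;> simp

lemma interlace_sub (a b a' b' : ℝ) :
    interlace a b - interlace a' b' = interlace (a - a') (b - b') := by
  ext j
  simp only [Pi.sub_apply, interlace]
  split_ifs <;> rfl

lemma prod_cos_interlace (a b : ℝ) (K : ℕ) :
    ∏ j ∈ range (2 * K), Real.cos (interlace a b j) = (Real.cos b * Real.cos a) ^ K := by
  induction K with
  | zero => simp
  | succ K ih =>
    rw [Nat.mul_succ, prod_range_succ, prod_range_succ, ih, pow_succ, interlace, interlace,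
      if_pos (even_two_mul K), if_neg (by simp [parity_simps]), mul_assoc]

lemma martingaleSymbol_alternatingCoeff_interlace (a b : ℝ) (K : ℕ) :
    martingaleSymbol alternatingCoeff (interlace a b) (2 * K) =
      Real.sin b ^ 2 * ∑ j ∈ range K, ((Real.cos b * Real.cos a) ^ 2) ^ j := by
  induction K with
  | zero => simp [martingaleSymbol]
  | succ K ih =>
    have even : alternatingCoeff (2 * K) = 1 := if_pos (even_two_mul K)
    have odd : alternatingCoeff (2 * K + 1) = 0 := if_neg (by simp [parity_simps])
    rw [Nat.mul_succ, martingaleSymbol_succ, martingaleSymbol_succ, ih, prod_cos_interlace, even,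
      odd, interlace, if_pos (even_two_mul K), sum_range_succ]
    ring

open Filter Topology

lemma tendsto_sin_sq_mul_sum_cos_pow (a b : ℝ) :
    Tendsto (fun K => Real.sin b ^ 2 * ∑ j ∈ range K, ((Real.cos b * Real.cos a) ^ 2) ^ j) atTop
      (𝓝 (Real.sin b ^ 2 / (1 - (Real.cos b * Real.cos a) ^ 2))) := by
  have ratio_le : (Real.cos b * Real.cos a) ^ 2 ≤ Real.cos b ^ 2 := by
    rw [mul_pow]
    exact mul_le_of_le_one_right (sq_nonneg _) (Real.cos_sq_le_one a)
  rcases (sq_nonneg (Real.sin b)).eq_or_lt with hb | hb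
  · simp [← hb]
  · have ratio_lt_one : (Real.cos b * Real.cos a) ^ 2 < 1 := by
      linarith [Real.sin_sq_add_cos_sq b]
    rw [div_eq_mul_inv]
    exact (hasSum_geometric_of_lt_one (sq_nonneg _) ratio_lt_one).tendsto_sum_nat.const_mul _

lemma tendsto_sin_mul_div (b : ℝ) :
    Tendsto (fun h : ℝ => Real.sin (h * b) / h) (𝓝[≠] 0) (𝓝 b) := by
  have deriv_sin : HasDerivAt (fun h : ℝ => Real.sin (h * b)) b 0 := by
    simpa using ((hasDerivAt_id (0 : ℝ)).mul_const b).sin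
  simpa [div_eq_inv_mul] using deriv_sin.tendsto_slope_zero

lemma tendsto_rieszSquareSymbol (a b : ℝ) :
    Tendsto (fun h : ℝ =>
        Real.sin (h * b) ^ 2 / (1 - (Real.cos (h * b) * Real.cos (h * a)) ^ 2))
      (𝓝[≠] 0) (𝓝 (rieszSquareSymbol a b)) := by
  rcases eq_or_ne b 0 with rfl | hb
  · simp [rieszSquareSymbol]
  have cos_tendsto : Tendsto (fun h : ℝ => Real.cos (h * b)) (𝓝[≠] 0) (𝓝 1) := by
    have cos_continuous : Continuous fun h : ℝ => Real.cos (h * b) := by fun_prop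
    simpa using (cos_continuous.tendsto 0).mono_left (nhdsWithin_le_nhds (s := {0}ᶜ))
  have quotient := ((tendsto_sin_mul_div b).pow 2).div
    (((cos_tendsto.pow 2).mul ((tendsto_sin_mul_div a).pow 2)).add ((tendsto_sin_mul_div b).pow 2))
    (by positivity)
  rw [one_pow, one_mul] at quotient
  refine quotient.congr' ?_
  filter_upwards [self_mem_nhdsWithin] with h hh
  have hh : h ≠ 0 := hh
  have denominator : 1 - (Real.cos (h * b) * Real.cos (h * a)) ^ 2 = h ^ 2 *
      (Real.cos (h * b) ^ 2 * (Real.sin (h * a) / h) ^ 2 + (Real.sin (h * b) / h) ^ 2) := by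
    field_simp
    rw [Real.sin_sq, Real.sin_sq]
    ring
  rw [denominator, ← div_div, ← div_pow]
  rfl

/-- The symbol `Im z / z`, which is `b / (a + i b)` at `z = a + i b`. -/
noncomputable def cauchySymbol (z : ℂ) : ℂ := z.im / z

lemma norm_cauchySymbol_le_one (z : ℂ) : ‖cauchySymbol z‖ ≤ 1 := by
  rw [cauchySymbol, norm_div, Complex.norm_real]
  exact div_le_one_of_le₀ (Complex.abs_im_le_norm z) (norm_nonneg z)

/-- The first two terms give `ab / (a² + b²)`: they are the squares of the Riesz transforms along
the two diagonals. -/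
lemma cauchySymbol_eq_rieszSquareSymbol (z : ℂ) :
    cauchySymbol z = (1 / 2 : ℂ) * rieszSquareSymbol (z.re - z.im) (z.re + z.im)
      + (-1 / 2 : ℂ) * rieszSquareSymbol (z.re + z.im) (z.re - z.im)
      + -Complex.I * rieszSquareSymbol z.re z.im := by
  rcases eq_or_ne z 0 with rfl | hz
  · simp [rieszSquareSymbol, cauchySymbol]
  have sq_sum : (z.re : ℂ) ^ 2 + (z.im : ℂ) ^ 2 ≠ 0 := by
    have normSq_ne_zero := (Complex.normSq_pos.mpr hz).ne'
    rw [Complex.normSq_apply, ← sq, ← sq] at normSq_ne_zero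
    exact_mod_cast normSq_ne_zero
  have diagonals : (z.re - z.im) ^ 2 + (z.re + z.im) ^ 2 = 2 * (z.re ^ 2 + z.im ^ 2) := by ring
  rw [cauchySymbol, div_eq_iff hz, rieszSquareSymbol, rieszSquareSymbol, rieszSquareSymbol,
    add_comm ((z.re + z.im) ^ 2), diagonals]
  conv_rhs => enter [2]; rw [← Complex.re_add_im z]
  push_cast
  field_simp
  ring_nf
  simp only [Complex.I_sq]
  ring

end RieszSymbol

section CauchySchurMultiplier

open Filter Topology

variable {d : ℕ} {p q N : ℝ} (hpq : p.HolderConjugate q)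
  (h : ∀ K, MartingaleTransformBound alternatingCoeff d K p N)
include hpq h

lemma schurMultiplierBound_rieszSquareSymbol (a b : Fin d → ℝ) :
    SchurMultiplierBound p q N (of fun k l => (rieszSquareSymbol (a k - a l) (b k - b l) : ℂ)) := by
  refine .of_tendsto (F := 𝓝[≠] (0 : ℝ)) (m := fun r => of fun k l =>
    ((Real.sin (r * (b k - b l)) ^ 2 /
      (1 - (Real.cos (r * (b k - b l)) * Real.cos (r * (a k - a l))) ^ 2) : ℝ) : ℂ))
    (fun r => ?_) fun k l => (Complex.continuous_ofReal.tendsto _).comp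
      (tendsto_rieszSquareSymbol _ _)
  refine .of_tendsto (F := atTop) (m := fun K => of fun k l => (martingaleSymbol alternatingCoeff
    (interlace (r * a k) (r * b k) - interlace (r * a l) (r * b l)) (2 * K) : ℂ))
    (fun K => (h _).schurMultiplierBound (fun k => interlace (r * a k) (r * b k)) hpq) fun k l => ?_
  simp only [of_apply, interlace_sub, ← mul_sub, martingaleSymbol_alternatingCoeff_interlace]
  exact (Complex.continuous_ofReal.tendsto _).comp (tendsto_sin_sq_mul_sum_cos_pow _ _)

lemma schurMultiplierBound_cauchySymbol (z : Fin d → ℂ) :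
    SchurMultiplierBound p q (2 * N) (of fun k l => cauchySymbol (z k - z l)) := by
  have horizontal := schurMultiplierBound_rieszSquareSymbol hpq h (fun k => (z k).re - (z k).im)
    fun k => (z k).re + (z k).im
  have vertical := schurMultiplierBound_rieszSquareSymbol hpq h (fun k => (z k).re + (z k).im)
    fun k => (z k).re - (z k).im
  have imaginary := schurMultiplierBound_rieszSquareSymbol hpq h (fun k => (z k).re)
    fun k => (z k).im
  have constant : ‖(1 / 2 : ℂ)‖ * N + ‖(-1 / 2 : ℂ)‖ * N + ‖-Complex.I‖ * N = 2 * N := by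
    rw [norm_neg, Complex.norm_I]
    norm_num
    ring
  rw [← constant]
  convert ((horizontal.smul (1 / 2)).add (vertical.smul (-1 / 2))).add
    (imaginary.smul (-Complex.I)) using 1
  ext k l
  simp only [of_apply, Matrix.add_apply, Matrix.smul_apply, smul_eq_mul,
    cauchySymbol_eq_rieszSquareSymbol, Complex.sub_re, Complex.sub_im]
  rw [sub_sub_sub_comm, add_sub_add_comm]

end CauchySchurMultiplier

section CircleAverage

open Real MeasureTheory

lemma circleIntegrable_of_measurable_of_norm_le {f : ℂ → ℂ} (hf : Measurable f) {C : ℝ}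
    {c : ℂ} {R : ℝ} (hC : ∀ z ∈ Metric.sphere c |R|, ‖f z‖ ≤ C) : CircleIntegrable f c R :=
  (intervalIntegrable_const (c := C)).mono_fun
    (hf.comp (measurable_circleMap c R)).aestronglyMeasurable
    (Filter.Eventually.of_forall fun θ =>
      (hC _ (circleMap_mem_sphere' c R θ)).trans (le_abs_self C))

lemma norm_circleAverage_le {E : Type*} [NormedAddCommGroup E] [NormedSpace ℝ E] {f : ℂ → E}
    {c : ℂ} {R C : ℝ} (hf : ∀ z ∈ Metric.sphere c |R|, ‖f z‖ ≤ C) : ‖circleAverage f c R‖ ≤ C := by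
  have bound := intervalIntegral.norm_integral_le_of_norm_le_const (a := 0) (b := 2 * π)
    fun θ _ => hf _ (circleMap_mem_sphere' c R θ)
  rw [sub_zero, abs_of_pos two_pi_pos] at bound
  rw [circleAverage_def, norm_smul, norm_inv, norm_of_nonneg two_pi_pos.le,
    inv_mul_le_iff₀ two_pi_pos, mul_comm _ C]
  exact bound

lemma circleAverage_mul_const (f : ℂ → ℂ) (a c : ℂ) (R : ℝ) :
    circleAverage (fun z => f z * a) c R = circleAverage f c R * a := by
  simp_rw [mul_comm _ a]
  exact circleAverage_fun_smul (𝕜 := ℂ)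

lemma SchurMultiplierBound.circleAverage {d : ℕ} {p q N : ℝ} {m : ℂ → CMat d} {c : ℂ} {R : ℝ}
    (hm : ∀ k l, CircleIntegrable (fun z => m z k l) c R)
    (h : ∀ z ∈ Metric.sphere c |R|, SchurMultiplierBound p q N (m z)) :
    SchurMultiplierBound p q N
      (of fun k l => Real.circleAverage (fun z => m z k l) c R) := by
  intro x y
  have integrable (k l) : CircleIntegrable (fun z => m z k l * (x k l * y l k)) c R :=
    (hm k l).mul_const _
  have trace_circleAverage :
      (((of fun k l => Real.circleAverage (fun z => m z k l) c R) ⊙ x) * y).trace =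
        Real.circleAverage (fun z => ((m z ⊙ x) * y).trace) c R := by
    simp only [trace_hadamard_mul, of_apply, ← circleAverage_mul_const]
    rw [circleAverage_fun_sum fun k _ => CircleIntegrable.fun_sum _ fun l _ => integrable k l]
    exact sum_congr rfl fun k _ => (circleAverage_fun_sum fun l _ => integrable k l).symm
  rw [trace_circleAverage]
  exact norm_circleAverage_le fun z hz => h z hz x y

end CircleAverage

section CircleKernel

open Real MeasureTheory

/-- The function of `z` on the unit circle whose average defines `circleKernel w t`. -/
noncomputable def circleKernelIntegrand (w t : ℝ) (z : ℂ) : ℂ :=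
  -2 * Complex.I * z ^ 3 * cauchySymbol (w * z - t)

/-- The average of rotated Cauchy symbols against the third Fourier mode, which is
`(t - t ^ 3 / w ^ 2) / w` for `|t| < |w|`. -/
noncomputable def circleKernel (w t : ℝ) : ℂ := circleAverage (circleKernelIntegrand w t) 0 1

lemma norm_circleKernelIntegrand_le (w t : ℝ) {z : ℂ} (hz : ‖z‖ = 1) :
    ‖circleKernelIntegrand w t z‖ ≤ 2 := by
  simpa [circleKernelIntegrand, hz] using norm_cauchySymbol_le_one (w * z - t)

lemma measurable_cauchySymbol : Measurable cauchySymbol :=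
  (Complex.measurable_ofReal.comp Complex.measurable_im).div measurable_id

lemma measurable_circleKernelIntegrand (t : ℝ) :
    Measurable fun x : ℝ × ℂ => circleKernelIntegrand x.1 t x.2 :=
  (by fun_prop : Measurable fun x : ℝ × ℂ => -2 * Complex.I * x.2 ^ 3).mul
    (measurable_cauchySymbol.comp (by fun_prop))

lemma circleIntegrable_circleKernelIntegrand (w t : ℝ) :
    CircleIntegrable (circleKernelIntegrand w t) 0 1 :=
  circleIntegrable_of_measurable_of_norm_le
    ((measurable_circleKernelIntegrand t).comp measurable_prodMk_left)
    fun _ hz => norm_circleKernelIntegrand_le w t (by simpa using hz)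

lemma measurable_circleKernel (t : ℝ) : Measurable fun w => circleKernel w t := by
  simp only [circleKernel, circleAverage_def, intervalIntegral.integral_of_le two_pi_pos.le]
  exact ((measurable_circleKernelIntegrand t).comp (measurable_fst.prodMk
    ((measurable_circleMap 0 1).comp measurable_snd))).stronglyMeasurable.integral_prod_right'
      |>.measurable.const_smul _

lemma norm_circleKernel_le (w t : ℝ) : ‖circleKernel w t‖ ≤ 2 :=
  norm_circleAverage_le fun z hz => norm_circleKernelIntegrand_le w t (by simpa using hz)

lemma im_mul_sub_ofReal_of_norm_eq_one (w t : ℝ) {z : ℂ} (hz : ‖z‖ = 1) :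
    ((w * z - t).im : ℂ) = w * (z - z⁻¹) / (2 * Complex.I) := by
  rw [Complex.inv_eq_conj hz, Complex.sub_conj]
  simp only [Complex.sub_im, Complex.mul_im, Complex.ofReal_re, Complex.ofReal_im, zero_mul,
    add_zero, sub_zero, Complex.ofReal_mul, Complex.ofReal_ofNat]
  field_simp

lemma mul_circleKernel {w t : ℝ} (h : |t| < |w|) :
    w * circleKernel w t = ((t - t ^ 3 / w ^ 2 : ℝ) : ℂ) := by
  have w_ne_zero : (w : ℂ) ≠ 0 := by
    exact_mod_cast abs_pos.mp ((abs_nonneg t).trans_lt h)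
  have mem_ball : ((t / w : ℝ) : ℂ) ∈ Metric.ball (0 : ℂ) |1| := by
    rw [mem_ball_zero_iff, Complex.norm_real, norm_eq_abs, abs_div, abs_one,
      div_lt_one ((abs_nonneg t).trans_lt h)]
    exact h
  have integrand : Set.EqOn (circleKernelIntegrand w t)
      (fun z => ((z - 0) / (z - (t / w : ℝ))) • (z * (1 - z ^ 2))) (Metric.sphere 0 |1|) := by
    intro z hz
    have norm_z : ‖z‖ = 1 := by simpa using hz
    have z_ne_zero : z ≠ 0 := norm_ne_zero_iff.mp (by simp [norm_z])
    have sub_ne_zero : z - (t / w : ℝ) ≠ 0 := by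
      rintro hzw
      rw [mem_ball_zero_iff, ← sub_eq_zero.mp hzw, norm_z, abs_one] at mem_ball
      exact lt_irrefl _ mem_ball
    have factor : w * z - t = w * (z - (t / w : ℝ)) := by
      push_cast
      field_simp
    rw [circleKernelIntegrand, cauchySymbol, im_mul_sub_ofReal_of_norm_eq_one w t norm_z, factor]
    simp only [sub_zero, smul_eq_mul]
    field_simp
    ring
  have cauchy := DiffContOnCl.circleAverage_smul_div (c := 0) (R := 1)
    (f := fun z : ℂ => z * (1 - z ^ 2)) (Differentiable.diffContOnCl (by fun_prop)) mem_ball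
  rw [circleKernel, circleAverage_congr_sphere integrand, cauchy]
  push_cast
  field_simp

lemma schurMultiplierBound_circleKernel {d : ℕ} {p q N : ℝ} (hpq : p.HolderConjugate q)
    (h : ∀ K, MartingaleTransformBound alternatingCoeff d K p N) (w f : Fin d → ℝ) :
    SchurMultiplierBound p q (4 * N) (of fun k l => circleKernel (w k - w l) (f k - f l)) := by
  refine SchurMultiplierBound.circleAverage
    (m := fun z => of fun k l => circleKernelIntegrand (w k - w l) (f k - f l) z)
    (fun k l => circleIntegrable_circleKernelIntegrand _ _) fun z hz => ?_
  have norm_z : ‖z‖ = 1 := by simpa using hz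
  convert (schurMultiplierBound_cauchySymbol hpq h fun k => w k * z - f k).smul
    (-2 * Complex.I * z ^ 3) using 1
  · simp [norm_z]
    ring
  · ext k l
    simp only [circleKernelIntegrand, of_apply, Matrix.smul_apply, smul_eq_mul]
    push_cast
    ring_nf

/-- The combination of circle kernels in which the cubic terms cancel, so that
`w * reproducingKernel w t = 3 * t` for `|t| < |w|`. -/
noncomputable def reproducingKernel (w t : ℝ) : ℂ := 8 * circleKernel w (t / 2) - circleKernel w t

lemma measurable_reproducingKernel (t : ℝ) : Measurable fun w => reproducingKernel w t :=
  ((measurable_circleKernel _).const_mul _).sub (measurable_circleKernel _)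

lemma norm_reproducingKernel_le (w t : ℝ) : ‖reproducingKernel w t‖ ≤ 18 := by
  refine (norm_sub_le _ _).trans ?_
  rw [norm_mul, Complex.norm_ofNat]
  linarith [norm_circleKernel_le w t, norm_circleKernel_le w (t / 2)]

lemma mul_reproducingKernel {w t : ℝ} (h : |t| < |w|) :
    (w : ℂ) * reproducingKernel w t = 3 * t := by
  have half_lt : |t / 2| < |w| := by
    rw [abs_div, abs_two]
    linarith [abs_nonneg t]
  rw [reproducingKernel, mul_sub, mul_left_comm, mul_circleKernel h, mul_circleKernel half_lt]
  push_cast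
  ring

lemma schurMultiplierBound_reproducingKernel {d : ℕ} {p q N : ℝ} (hpq : p.HolderConjugate q)
    (h : ∀ K, MartingaleTransformBound alternatingCoeff d K p N) (w f : Fin d → ℝ) :
    SchurMultiplierBound p q (36 * N)
      (of fun k l => reproducingKernel (w k - w l) (f k - f l)) := by
  convert ((schurMultiplierBound_circleKernel hpq h w fun k => f k / 2).smul 8).add
    ((schurMultiplierBound_circleKernel hpq h w f).smul (-1)) using 1
  · norm_num
    ring
  · ext k l
    simp only [reproducingKernel, of_apply, Matrix.add_apply, Matrix.smul_apply, smul_eq_mul]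
    rw [sub_div]
    ring

end CircleKernel

section FwdDiffWeight

/-- The weights of the `N`-th forward difference with step `1`. -/
noncomputable def fwdDiffWeight (N l : ℕ) : ℝ := (-1) ^ (N - l) * N.choose l

lemma sum_fwdDiffWeight_mul (N : ℕ) (f : ℝ → ℝ) (x : ℝ) :
    ∑ l ∈ range (N + 1), fwdDiffWeight N l * f (x + l) = (fwdDiff 1)^[N] f x := by
  rw [fwdDiff_iter_eq_sum_shift]
  exact sum_congr rfl fun l _ => by simp [fwdDiffWeight]

lemma sum_fwdDiffWeight_mul_sq_sub_sq_pow {N m : ℕ} (hm : 2 * m < N) (r x : ℝ) :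
    ∑ l ∈ range (N + 1), fwdDiffWeight N l * ((r + l) ^ 2 - x ^ 2) ^ m = 0 := by
  have degree : ((Polynomial.X ^ 2 - Polynomial.C (x ^ 2)) ^ m : Polynomial ℝ).natDegree < N := by
    rw [Polynomial.natDegree_pow, Polynomial.natDegree_X_pow_sub_C]
    lia
  have vanish := congrFun (Polynomial.fwdDiff_iter_eq_zero_of_degree_lt degree) r
  rw [← sum_fwdDiffWeight_mul] at vanish
  simpa using vanish

lemma sum_fwdDiffWeight_mul_pow (N : ℕ) (r : ℝ) :
    ∑ l ∈ range (N + 1), fwdDiffWeight N l * (r + l) ^ N = N.factorial := by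
  rw [sum_fwdDiffWeight_mul N fun x => x ^ N, fwdDiff_iter_eq_factorial]
  rfl

end FwdDiffWeight

section BallIntegral

open MeasureTheory Filter

lemma setIntegral_ball_inner_eq_of_norm_eq {E : Type*} [NormedAddCommGroup E]
    [InnerProductSpace ℝ E] [FiniteDimensional ℝ E] [MeasurableSpace E] [BorelSpace E] {s e : E}
    (hse : ‖s‖ = ‖e‖) (r : ℝ) (h : ℝ → ℂ) :
    ∫ θ in Metric.ball (0 : E) r, h (inner ℝ θ s) =
      ∫ θ in Metric.ball (0 : E) r, h (inner ℝ θ e) := by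
  let L := Submodule.reflection (ℝ ∙ (s - e))ᗮ
  have map_s : L s = e := Submodule.reflection_sub hse
  have inner_map (θ : E) : inner ℝ (L θ) e = inner ℝ θ s := by
    rw [← map_s, LinearIsometryEquiv.inner_map_map]
  have preimage_ball : L ⁻¹' Metric.ball 0 r = Metric.ball 0 r := by
    ext θ
    simp
  have change_of_variables := (LinearIsometryEquiv.measurePreserving L).setIntegral_preimage_emb
    L.toHomeomorph.measurableEmbedding (fun θ => h (inner ℝ θ e)) (Metric.ball 0 r)
  simpa only [preimage_ball, inner_map] using change_of_variables

lemma finrank_withLp_real_prod {V : Type*} [NormedAddCommGroup V] [InnerProductSpace ℝ V]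
    [FiniteDimensional ℝ V] {m : ℕ} (hV : Module.finrank ℝ V = 2 * m) :
    Module.finrank ℝ (WithLp 2 (ℝ × V)) = 2 * m + 1 := by
  rw [(WithLp.linearEquiv 2 ℝ (ℝ × V)).finrank_eq, Module.finrank_prod, Module.finrank_self, hV,
    add_comm]

variable {V : Type*} [NormedAddCommGroup V] [InnerProductSpace ℝ V] [FiniteDimensional ℝ V]
  [MeasurableSpace V] [BorelSpace V]

lemma setIntegral_ball_fst {r : ℝ} (hr : 0 < r) {g : ℝ → ℂ} (hg : Measurable g) {B : ℝ}
    (hB : ∀ x, ‖g x‖ ≤ B) :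
    ∫ θ in Metric.ball (0 : WithLp 2 (ℝ × V)) r, g θ.fst =
      ∫ x, (volume.real (Metric.ball (0 : V) √(r ^ 2 - x ^ 2)) : ℂ) * g x := by
  let S : Set (ℝ × V) := {z | z.1 ^ 2 + ‖z.2‖ ^ 2 < r ^ 2}
  have measurableSet_S : MeasurableSet S := measurableSet_lt (by fun_prop) measurable_const
  have preimage_S : (@WithLp.ofLp 2 (ℝ × V)) ⁻¹' S = Metric.ball 0 r := by
    ext θ
    simp only [S, Set.mem_preimage, Set.mem_ofPred_eq, mem_ball_zero_iff]
    rw [← sq_lt_sq₀ (norm_nonneg θ) hr.le, WithLp.prod_norm_sq_eq_of_L2]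
    simp
  have volume_preserving := WithLp.volume_preserving_ofLp ℝ V
  have volume_S : volume S ≠ ⊤ := by
    rw [← volume_preserving.measure_preimage measurableSet_S.nullMeasurableSet, preimage_S]
    exact measure_ball_lt_top.ne
  have integrable : Integrable (S.indicator fun z : ℝ × V => g z.1) volume :=
    (integrable_indicator_iff measurableSet_S).mpr <| Measure.integrableOn_of_bounded (M := B)
      volume_S (hg.comp measurable_fst).aestronglyMeasurable (Eventually.of_forall fun _ => hB _)
  have slice (x : ℝ) : (fun y : V => S.indicator (fun z : ℝ × V => g z.1) (x, y)) =
      (Metric.ball (0 : V) √(r ^ 2 - x ^ 2)).indicator fun _ => g x := by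
    ext y
    refine Set.indicator_eq_indicator ?_ rfl
    simp only [S, Set.mem_ofPred_eq, mem_ball_zero_iff, Real.lt_sqrt (norm_nonneg _),
      lt_sub_iff_add_lt']
  have to_prod := volume_preserving.setIntegral_preimage_emb
    (MeasurableEquiv.toLp 2 (ℝ × V)).symm.measurableEmbedding (fun z => g z.1) S
  rw [preimage_S] at to_prod
  refine to_prod.trans ?_
  rw [← integral_indicator measurableSet_S]
  rw [Measure.volume_eq_prod] at integrable ⊢
  simp only [integral_prod _ integrable, slice,
    integral_indicator_const _ Metric.isOpen_ball.measurableSet, Complex.real_smul]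

lemma setIntegral_ball_inner {r : ℝ} (hr : 0 < r) (s : WithLp 2 (ℝ × V)) {h : ℝ → ℂ}
    (hm : Measurable h) {B : ℝ} (hB : ∀ x, ‖h x‖ ≤ B) :
    ∫ θ in Metric.ball (0 : WithLp 2 (ℝ × V)) r, h (inner ℝ θ s) =
      ∫ x, (volume.real (Metric.ball (0 : V) √(r ^ 2 - x ^ 2)) : ℂ) * h (‖s‖ * x) := by
  let axis : WithLp 2 (ℝ × V) := WithLp.toLp 2 (‖s‖, 0)
  have norm_axis : ‖s‖ = ‖axis‖ := by
    rw [← sq_eq_sq₀ (norm_nonneg _) (norm_nonneg _), WithLp.prod_norm_sq_eq_of_L2 axis]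
    simp [axis]
  have inner_axis (θ : WithLp 2 (ℝ × V)) : inner ℝ θ axis = ‖s‖ * θ.fst := by
    rw [WithLp.prod_inner_apply]
    simp [axis]
  rw [setIntegral_ball_inner_eq_of_norm_eq norm_axis]
  simp only [inner_axis]
  exact setIntegral_ball_fst hr (hm.comp (measurable_const_mul ‖s‖)) fun x => hB _

lemma volume_real_ball_sqrt {m : ℕ} (hV : Module.finrank ℝ V = 2 * m) {a : ℝ} (ha : 0 < a) :
    volume.real (Metric.ball (0 : V) √a) = a ^ m * volume.real (Metric.ball (0 : V) 1) := by
  rw [Measure.real, Measure.addHaar_ball_of_pos _ _ (Real.sqrt_pos.mpr ha), ENNReal.toReal_mul,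
    ENNReal.toReal_ofReal (by positivity), hV, pow_mul, Real.sq_sqrt ha.le, Measure.real]

/-- Since `V` has even dimension, the density of the marginal is a polynomial in `r`. -/
lemma setIntegral_ball_inner_of_support {m : ℕ} (hV : Module.finrank ℝ V = 2 * m) {r : ℝ}
    (hr : 1 < r) {s : WithLp 2 (ℝ × V)} {h : ℝ → ℂ} (hm : Measurable h) {B : ℝ}
    (hB : ∀ x, ‖h x‖ ≤ B) (supp : ∀ x, 1 < |x| → h (‖s‖ * x) = 0) :
    ∫ θ in Metric.ball (0 : WithLp 2 (ℝ × V)) r, h (inner ℝ θ s) =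
      volume.real (Metric.ball (0 : V) 1) *
        ∫ x : ℝ, ((r ^ 2 - x ^ 2) ^ m : ℝ) * h (‖s‖ * x) := by
  rw [setIntegral_ball_inner (by linarith) s hm hB, ← integral_const_mul]
  refine integral_congr_ae (Eventually.of_forall fun x => ?_)
  rcases le_or_gt |x| 1 with hx | hx
  · have radicand_pos : 0 < r ^ 2 - x ^ 2 :=
      sub_pos.mpr (sq_lt_sq.mpr (hx.trans_lt (hr.trans_le (le_abs_self r))))
    simp only [volume_real_ball_sqrt hV radicand_pos]
    push_cast
    ring
  · simp only [supp x hx, mul_zero]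

lemma integrable_continuous_mul_of_support {P h : ℝ → ℂ} (hP : Continuous P) (hm : Measurable h)
    {B a : ℝ} (hB : ∀ x, ‖h x‖ ≤ B) (supp : ∀ x, a < |x| → h x = 0) :
    Integrable fun x => P x * h x := by
  have integrableOn : IntegrableOn (fun x => P x * h x) (Set.Icc (-a) a) :=
    (Measure.integrableOn_of_bounded (M := B) measure_Icc_lt_top.ne hm.aestronglyMeasurable
      (Eventually.of_forall fun _ => hB _)).continuousOn_mul hP.continuousOn isCompact_Icc
  refine (integrableOn_iff_integrable_of_support_subset fun x hx => ?_).mp integrableOn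
  by_contra outside
  exact hx (by simp [supp x (not_le.mp fun hxa => outside (abs_le.mp hxa))])

lemma sum_fwdDiffWeight_mul_setIntegral_ball_inner {m N : ℕ} (hV : Module.finrank ℝ V = 2 * m)
    (hN : 2 * m < N) {s : WithLp 2 (ℝ × V)} {h : ℝ → ℂ} (hm : Measurable h) {B : ℝ}
    (hB : ∀ x, ‖h x‖ ≤ B) (supp : ∀ x, 1 < |x| → h (‖s‖ * x) = 0) :
    ∑ l ∈ range (N + 1), (fwdDiffWeight N l : ℂ) *
      ∫ θ in Metric.ball (0 : WithLp 2 (ℝ × V)) (2 + l), h (inner ℝ θ s) = 0 := by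
  have marginal (l : ℕ) := setIntegral_ball_inner_of_support hV
    (by linarith [l.cast_nonneg (α := ℝ)] : (1 : ℝ) < 2 + l) hm hB supp
  have integrable (l : ℕ) :
      Integrable fun x : ℝ => ((((2 + l : ℝ) ^ 2 - x ^ 2) ^ m : ℝ) : ℂ) * h (‖s‖ * x) :=
    integrable_continuous_mul_of_support (by fun_prop) (hm.comp (measurable_const_mul ‖s‖))
      (fun _ => hB _) supp
  simp only [marginal, mul_left_comm _ (volume.real _ : ℂ), ← mul_sum]
  simp only [← integral_const_mul (fwdDiffWeight N _ : ℂ)]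
  rw [← integral_finsetSum _ fun l _ => (integrable l).const_mul _]
  simp only [← mul_assoc, ← sum_mul, ← Complex.ofReal_mul, ← Complex.ofReal_sum,
    sum_fwdDiffWeight_mul_sq_sub_sq_pow hN, Complex.ofReal_zero, zero_mul, integral_zero, mul_zero]

lemma volume_real_ball_eq_pow_mul {E : Type*} [NormedAddCommGroup E] [InnerProductSpace ℝ E]
    [FiniteDimensional ℝ E] [MeasurableSpace E] [BorelSpace E] {r : ℝ} (hr : 0 < r) :
    volume.real (Metric.ball (0 : E) r) =
      r ^ Module.finrank ℝ E * volume.real (Metric.ball (0 : E) 1) := by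
  rw [Measure.real, Measure.addHaar_ball_of_pos _ _ hr, ENNReal.toReal_mul,
    ENNReal.toReal_ofReal (by positivity), Measure.real]

lemma integrableOn_ball_inner_mul_reproducingKernel {E : Type*} [NormedAddCommGroup E]
    [InnerProductSpace ℝ E] [FiniteDimensional ℝ E] [MeasurableSpace E] [BorelSpace E] (s : E)
    (t r : ℝ) : IntegrableOn
      (fun θ : E => ((inner ℝ θ s : ℝ) : ℂ) * reproducingKernel (inner ℝ θ s) t)
      (Metric.ball 0 r) := by
  have measurable_inner : Measurable fun θ : E => inner ℝ θ s := by fun_prop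
  refine Measure.integrableOn_of_bounded (M := r * ‖s‖ * 18) measure_ball_lt_top.ne
    ((Complex.measurable_ofReal.comp measurable_inner).mul
      ((measurable_reproducingKernel t).comp measurable_inner)).aestronglyMeasurable ?_
  filter_upwards [ae_restrict_mem Metric.isOpen_ball.measurableSet] with θ hθ
  have norm_θ : ‖θ‖ ≤ r := (mem_ball_zero_iff.mp hθ).le
  rw [norm_mul, Complex.norm_real]
  exact mul_le_mul
    ((norm_inner_le_norm (𝕜 := ℝ) θ s).trans (mul_le_mul_of_nonneg_right norm_θ (norm_nonneg _)))
    (norm_reproducingKernel_le _ _) (norm_nonneg _)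
    (mul_nonneg ((norm_nonneg θ).trans norm_θ) (norm_nonneg _))

/-- The normalizing constant of `sum_fwdDiffWeight_mul_setIntegral_ball_reproducingKernel`. -/
noncomputable def reproducingConstant (E : Type*) [NormedAddCommGroup E] [InnerProductSpace ℝ E]
    [FiniteDimensional ℝ E] [MeasurableSpace E] [BorelSpace E] : ℝ :=
  (Module.finrank ℝ E).factorial * volume.real (Metric.ball (0 : E) 1)

lemma sum_fwdDiffWeight_mul_volume_real_ball (E : Type*) [NormedAddCommGroup E]
    [InnerProductSpace ℝ E] [FiniteDimensional ℝ E] [MeasurableSpace E] [BorelSpace E] :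
    ∑ l ∈ range (Module.finrank ℝ E + 1), fwdDiffWeight (Module.finrank ℝ E) l *
      volume.real (Metric.ball (0 : E) (2 + l)) = reproducingConstant E := by
  rw [reproducingConstant, ← sum_fwdDiffWeight_mul_pow _ 2, sum_mul]
  refine sum_congr rfl fun l _ => ?_
  rw [volume_real_ball_eq_pow_mul (by positivity), mul_assoc]

lemma norm_mul_reproducingKernel_sub_le {a t : ℝ} (ht : |t| ≤ a) (w : ℝ) :
    ‖(w : ℂ) * reproducingKernel w t - 3 * t‖ ≤ a * 18 + 3 * |t| := by
  have a_nonneg : 0 ≤ a := (abs_nonneg t).trans ht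
  rcases le_or_gt |w| a with hw | hw
  · refine (norm_sub_le _ _).trans (add_le_add ?_ (by simp))
    rw [norm_mul, Complex.norm_real]
    exact mul_le_mul hw (norm_reproducingKernel_le w t) (norm_nonneg _) a_nonneg
  · rw [mul_reproducingKernel (ht.trans_lt hw), sub_self, norm_zero]
    positivity

/-- The function `w * reproducingKernel w t - 3 * t` vanishes for `|t| < |w|`, so the weighted sum
of its ball integrals vanishes. -/
lemma sum_fwdDiffWeight_mul_setIntegral_ball_reproducingKernel {m : ℕ}
    (hV : Module.finrank ℝ V = 2 * m) {s : WithLp 2 (ℝ × V)} {t : ℝ} (ht : |t| ≤ ‖s‖) :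
    ∑ l ∈ range (Module.finrank ℝ (WithLp 2 (ℝ × V)) + 1),
      (fwdDiffWeight (Module.finrank ℝ (WithLp 2 (ℝ × V))) l : ℂ) *
        ∫ θ in Metric.ball (0 : WithLp 2 (ℝ × V)) (2 + l),
          ((inner ℝ θ s : ℝ) : ℂ) * reproducingKernel (inner ℝ θ s) t =
      3 * reproducingConstant (WithLp 2 (ℝ × V)) * t := by
  rcases eq_or_ne s 0 with rfl | hs
  · have t_eq_zero : t = 0 := by simpa using ht
    simp [t_eq_zero]
  have supp (x : ℝ) (hx : 1 < |x|) :
      ((‖s‖ * x : ℝ) : ℂ) * reproducingKernel (‖s‖ * x) t - 3 * t = 0 := by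
    refine sub_eq_zero.mpr (mul_reproducingKernel (ht.trans_lt ?_))
    rw [abs_mul, abs_norm]
    exact lt_mul_of_one_lt_right (norm_pos_iff.mpr hs) hx
  have vanish := sum_fwdDiffWeight_mul_setIntegral_ball_inner hV
    ((2 * m).lt_succ_self.trans_eq (finrank_withLp_real_prod hV).symm)
    ((Complex.measurable_ofReal.mul (measurable_reproducingKernel t)).sub_const (3 * t : ℂ))
    (norm_mul_reproducingKernel_sub_le ht) supp
  have split (r : ℝ) := integral_sub (integrableOn_ball_inner_mul_reproducingKernel s t r)
    (integrableOn_const measure_ball_lt_top.ne (C := (3 * t : ℂ)))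
  simp only [Pi.mul_apply, split, setIntegral_const, Complex.real_smul, mul_sub, sum_sub_distrib,
    ← mul_assoc, ← sum_mul] at vanish
  rw [sub_eq_zero.mp vanish, ← sum_fwdDiffWeight_mul_volume_real_ball]
  push_cast
  ring

end BallIntegral

section DifferenceMatrix

variable {d : ℕ}

/-- The matrix of the differences `g k - g l`: multiplying entrywise by it is the commutator with
`realDiagonal g`. -/
def differenceMatrix (g : Fin d → ℝ) : CMat d := of fun k l => ((g k - g l : ℝ) : ℂ)

lemma differenceMatrix_hadamard (g : Fin d → ℝ) (x : CMat d) :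
    differenceMatrix g ⊙ x = realDiagonal g * x - x * realDiagonal g := by
  ext k l
  rw [Matrix.sub_apply, realDiagonal, diagonal_mul, mul_diagonal, hadamard_apply, differenceMatrix,
    of_apply]
  push_cast
  ring

lemma differenceMatrix_sum_hadamard {ι : Type*} (s : Finset ι) (c : ι → ℝ) (g : ι → Fin d → ℝ)
    (x : CMat d) : differenceMatrix (fun k => ∑ j ∈ s, c j * g j k) ⊙ x =
      ∑ j ∈ s, (c j : ℂ) • (differenceMatrix (g j) ⊙ x) := by
  ext k l
  simp only [differenceMatrix, hadamard_apply, of_apply, Matrix.sum_apply, Matrix.smul_apply,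
    smul_eq_mul, ← sum_sub_distrib, ← mul_sub, Complex.ofReal_sum, Complex.ofReal_mul, sum_mul,
    mul_assoc]

lemma schattenNorm_commutator_unitary_conj {U : CMat d} (hU : U ∈ unitaryGroup (Fin d) ℂ)
    (p : ℝ) (g : Fin d → ℝ) (x : CMat d) :
    schattenNorm p (U * realDiagonal g * Uᴴ * x - x * (U * realDiagonal g * Uᴴ)) =
      schattenNorm p (differenceMatrix g ⊙ (Uᴴ * x * U)) := by
  have cancel (y : CMat d) : U * (Uᴴ * y) = y := by
    rw [← Matrix.mul_assoc, mul_conjTranspose_self_of_mem_unitaryGroup hU, Matrix.one_mul]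
  have conj : U * realDiagonal g * Uᴴ * x - x * (U * realDiagonal g * Uᴴ) =
      U * (differenceMatrix g ⊙ (Uᴴ * x * U)) * Uᴴ := by
    simp only [differenceMatrix_hadamard, mul_sub, sub_mul, Matrix.mul_assoc, cancel,
      mul_conjTranspose_self_of_mem_unitaryGroup hU, Matrix.mul_one]
  rw [conj, schattenNorm, ← schattenSum, schattenSum_unitary_mul_mul hU hU, schattenSum,
    schattenNorm]

end DifferenceMatrix

section SchattenNorm

variable {d : ℕ} {p : ℝ}

lemma familySchattenNorm_unit (p : ℝ) (f : Unit → CMat d) :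
    familySchattenNorm p f = schattenNorm p (f ()) := by
  simp [familySchattenNorm, schattenSum, schattenNorm]

lemma schattenNorm_le_of_forall_norm_trace_mul_le {q : ℝ} (hpq : p.HolderConjugate q)
    {M : CMat d} {c : ℝ} (hc : 0 ≤ c) (h : ∀ y, ‖(M * y).trace‖ ≤ c * schattenNorm q y) :
    schattenNorm p M ≤ c := by
  rw [← familySchattenNorm_unit p fun _ => M]
  refine familySchattenNorm_le_of_forall_norm_tracePairing_le hpq hc fun y => ?_
  rw [familySchattenNorm_unit]
  simpa [tracePairing] using h (y ())

lemma schattenNorm_sum_smul_le (hp : 1 < p) {ι : Type*} (s : Finset ι) (c : ι → ℂ)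
    (X : ι → CMat d) :
    schattenNorm p (∑ j ∈ s, c j • X j) ≤ ∑ j ∈ s, ‖c j‖ * schattenNorm p (X j) := by
  have smul_le (a : ℂ) (M : CMat d) : schattenNorm p (a • M) ≤ ‖a‖ * schattenNorm p M := by
    simpa only [familySchattenNorm_unit, Pi.smul_apply] using
      familySchattenNorm_smul_le hp a fun _ : Unit => M
  have add_le (M M' : CMat d) : schattenNorm p (M + M') ≤ schattenNorm p M + schattenNorm p M' := by
    simpa only [familySchattenNorm_unit, Pi.add_apply] using
      familySchattenNorm_add_le hp (fun _ : Unit => M) fun _ => M'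
  have zero_le : schattenNorm p (0 : CMat d) ≤ 0 := by simpa using smul_le 0 0
  exact (le_sum_of_subadditive _ zero_le add_le s _).trans (sum_le_sum fun j _ => smul_le _ _)

end SchattenNorm

section Averaging

open MeasureTheory

variable {d : ℕ} {E : Type*} [NormedAddCommGroup E] [InnerProductSpace ℝ E]

/-- The Schur multiplier attached to a direction `θ`, whose weighted averages over `θ` in balls give
multiples of `differenceMatrix g`. -/
noncomputable def directionalSymbol (v : Fin d → E) (g : Fin d → ℝ) (θ : E) : CMat d :=
  of fun k l => ((inner ℝ θ (v k - v l) : ℝ) : ℂ) *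
    reproducingKernel (inner ℝ θ (v k - v l)) (g k - g l)

lemma directionalSymbol_eq_hadamard (v : Fin d → E) (g : Fin d → ℝ) (θ : E) :
    directionalSymbol v g θ =
      (of fun k l => reproducingKernel (inner ℝ θ (v k) - inner ℝ θ (v l)) (g k - g l)) ⊙
        differenceMatrix fun k => inner ℝ θ (v k) := by
  ext k l
  simp only [directionalSymbol, differenceMatrix, hadamard_apply, of_apply, inner_sub_right]
  exact mul_comm _ _

lemma norm_trace_directionalSymbol_hadamard_mul_le {p q N : ℝ} (hpq : p.HolderConjugate q)
    (h : ∀ K, MartingaleTransformBound alternatingCoeff d K p N) (v : Fin d → E) (g : Fin d → ℝ)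
    (θ : E) (x y : CMat d) :
    ‖((directionalSymbol v g θ ⊙ x) * y).trace‖ ≤ 36 * N *
      (schattenNorm p (differenceMatrix (fun k => inner ℝ θ (v k)) ⊙ x) * schattenNorm q y) := by
  rw [directionalSymbol_eq_hadamard, hadamard_assoc]
  exact schurMultiplierBound_reproducingKernel hpq h _ g _ y

lemma integral_trace_hadamard_mul {α : Type*} [MeasurableSpace α] {μ : Measure α} {m : α → CMat d}
    (hm : ∀ k l, Integrable (fun a => m a k l) μ) (x y : CMat d) :
    ∫ a, ((m a ⊙ x) * y).trace ∂μ = (((of fun k l => ∫ a, m a k l ∂μ) ⊙ x) * y).trace := by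
  simp only [trace_hadamard_mul, of_apply, ← integral_mul_const]
  rw [integral_finsetSum _ fun k _ => integrable_finsetSum _ fun l _ => (hm k l).mul_const _]
  exact sum_congr rfl fun k _ => integral_finsetSum _ fun l _ => (hm k l).mul_const _

lemma sum_mul_trace_hadamard_mul {ι : Type*} (s : Finset ι) (c : ι → ℂ) (m : ι → CMat d)
    (x y : CMat d) :
    ∑ i ∈ s, c i * ((m i ⊙ x) * y).trace = (((∑ i ∈ s, c i • m i) ⊙ x) * y).trace := by
  simp only [trace_hadamard_mul, Matrix.sum_apply, Matrix.smul_apply, smul_eq_mul, sum_mul, mul_sum,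
    mul_assoc]
  rw [sum_comm]
  exact sum_congr rfl fun k _ => sum_comm

variable [FiniteDimensional ℝ E] [MeasurableSpace E] [BorelSpace E]

lemma reproducingConstant_pos (E : Type*) [NormedAddCommGroup E] [InnerProductSpace ℝ E]
    [FiniteDimensional ℝ E] [MeasurableSpace E] [BorelSpace E] : 0 < reproducingConstant E :=
  mul_pos (by positivity) <| ENNReal.toReal_pos (Metric.measure_ball_pos _ _ one_pos).ne'
    measure_ball_lt_top.ne

/-- The loss in passing from directional to full differences by averaging over the balls of radius
`2 + l` with the weights `fwdDiffWeight`. -/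
noncomputable def averagingConstant (E : Type*) [NormedAddCommGroup E] [InnerProductSpace ℝ E]
    [FiniteDimensional ℝ E] [MeasurableSpace E] [BorelSpace E] : ℝ :=
  (∑ l ∈ range (Module.finrank ℝ E + 1), |fwdDiffWeight (Module.finrank ℝ E) l| *
    (36 * (2 + l) * volume.real (Metric.ball (0 : E) (2 + l)))) / (3 * reproducingConstant E)

lemma averagingConstant_nonneg (E : Type*) [NormedAddCommGroup E] [InnerProductSpace ℝ E]
    [FiniteDimensional ℝ E] [MeasurableSpace E] [BorelSpace E] : 0 ≤ averagingConstant E :=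
  div_nonneg (sum_nonneg fun l _ => by positivity)
    (mul_nonneg zero_le_three (reproducingConstant_pos E).le)

lemma norm_setIntegral_ball_trace_directionalSymbol_le {p q N S : ℝ} (hpq : p.HolderConjugate q)
    (h : ∀ K, MartingaleTransformBound alternatingCoeff d K p N) (hN : 0 ≤ N) (hS : 0 ≤ S)
    {v : Fin d → E} {x : CMat d}
    (hx : ∀ θ, schattenNorm p (differenceMatrix (fun k => inner ℝ θ (v k)) ⊙ x) ≤ ‖θ‖ * S)
    (g : Fin d → ℝ) (y : CMat d) (r : ℝ) :
    ‖∫ θ in Metric.ball (0 : E) r, ((directionalSymbol v g θ ⊙ x) * y).trace‖ ≤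
      36 * N * (r * S * schattenNorm q y) * volume.real (Metric.ball (0 : E) r) := by
  refine norm_setIntegral_le_of_norm_le_const measure_ball_lt_top fun θ hθ => ?_
  have norm_θ : ‖θ‖ ≤ r := (mem_ball_zero_iff.mp hθ).le
  have y_nonneg := schattenNorm_nonneg q y
  exact (norm_trace_directionalSymbol_hadamard_mul_le hpq h v g θ x y).trans
    (by gcongr; exact (hx θ).trans (by gcongr))

variable {V : Type*} [NormedAddCommGroup V] [InnerProductSpace ℝ V] [FiniteDimensional ℝ V]
  [MeasurableSpace V] [BorelSpace V]

lemma sum_fwdDiffWeight_mul_setIntegral_ball_trace_directionalSymbol {m : ℕ}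
    (hV : Module.finrank ℝ V = 2 * m) {v : Fin d → WithLp 2 (ℝ × V)} {g : Fin d → ℝ}
    (hg : ∀ k l, |g k - g l| ≤ ‖v k - v l‖) (x y : CMat d) :
    ∑ i ∈ range (Module.finrank ℝ (WithLp 2 (ℝ × V)) + 1),
      (fwdDiffWeight (Module.finrank ℝ (WithLp 2 (ℝ × V))) i : ℂ) *
        ∫ θ in Metric.ball (0 : WithLp 2 (ℝ × V)) (2 + i),
          ((directionalSymbol v g θ ⊙ x) * y).trace =
      3 * reproducingConstant (WithLp 2 (ℝ × V)) * ((differenceMatrix g ⊙ x) * y).trace := by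
  have integral_eq (r : ℝ) := integral_trace_hadamard_mul (m := directionalSymbol v g)
    (fun k l => integrableOn_ball_inner_mul_reproducingKernel (v k - v l) (g k - g l) r) x y
  have average_eq : ∑ i ∈ range (Module.finrank ℝ (WithLp 2 (ℝ × V)) + 1),
      (fwdDiffWeight (Module.finrank ℝ (WithLp 2 (ℝ × V))) i : ℂ) •
        (of fun k l => ∫ θ in Metric.ball (0 : WithLp 2 (ℝ × V)) (2 + i),
          directionalSymbol v g θ k l : CMat d) =
      (3 * reproducingConstant (WithLp 2 (ℝ × V)) : ℂ) • differenceMatrix g := by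
    ext k l
    simp only [Matrix.sum_apply, Matrix.smul_apply, of_apply, smul_eq_mul]
    exact sum_fwdDiffWeight_mul_setIntegral_ball_reproducingKernel hV (hg k l)
  simp only [integral_eq, sum_mul_trace_hadamard_mul]
  rw [average_eq, smul_hadamard, Matrix.smul_mul, trace_smul, smul_eq_mul]

lemma schattenNorm_differenceMatrix_hadamard_le {m : ℕ} (hV : Module.finrank ℝ V = 2 * m)
    {p q N S : ℝ} (hpq : p.HolderConjugate q)
    (h : ∀ K, MartingaleTransformBound alternatingCoeff d K p N) (hN : 0 ≤ N) (hS : 0 ≤ S)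
    {v : Fin d → WithLp 2 (ℝ × V)} {g : Fin d → ℝ} (hg : ∀ k l, |g k - g l| ≤ ‖v k - v l‖)
    {x : CMat d}
    (hx : ∀ θ, schattenNorm p (differenceMatrix (fun k => inner ℝ θ (v k)) ⊙ x) ≤ ‖θ‖ * S) :
    schattenNorm p (differenceMatrix g ⊙ x) ≤ averagingConstant (WithLp 2 (ℝ × V)) * N * S := by
  set E := WithLp 2 (ℝ × V)
  have R_pos := reproducingConstant_pos E
  refine schattenNorm_le_of_forall_norm_trace_mul_le hpq
    (mul_nonneg (mul_nonneg (averagingConstant_nonneg E) hN) hS) fun y => ?_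
  refine le_of_mul_le_mul_left ?_ (mul_pos three_pos R_pos)
  calc 3 * reproducingConstant E * ‖((differenceMatrix g ⊙ x) * y).trace‖
      = ‖3 * (reproducingConstant E : ℂ) * ((differenceMatrix g ⊙ x) * y).trace‖ := by
        rw [norm_mul, norm_mul, Complex.norm_ofNat, Complex.norm_real,
          Real.norm_of_nonneg R_pos.le]
    _ ≤ ∑ i ∈ range (Module.finrank ℝ E + 1), |fwdDiffWeight (Module.finrank ℝ E) i| *
        (36 * N * ((2 + i) * S * schattenNorm q y) *
          volume.real (Metric.ball (0 : E) (2 + i))) := by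
        rw [← sum_fwdDiffWeight_mul_setIntegral_ball_trace_directionalSymbol hV hg]
        refine (norm_sum_le _ _).trans (sum_le_sum fun i _ => ?_)
        rw [norm_mul, Complex.norm_real, Real.norm_eq_abs]
        exact mul_le_mul_of_nonneg_left
          (norm_setIntegral_ball_trace_directionalSymbol_le hpq h hN hS hx g y _) (abs_nonneg _)
    _ = 3 * reproducingConstant E * averagingConstant E * (N * S * schattenNorm q y) := by
        rw [averagingConstant, mul_div_cancel₀ _ (mul_pos three_pos R_pos).ne', sum_mul]
        exact sum_congr rfl fun i _ => by ring
    _ = 3 * reproducingConstant E * (averagingConstant E * N * S * schattenNorm q y) := by ring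

end Averaging

section EuclideanEmbedding

variable {n : ℕ}

/-- The Euclidean space of dimension `2 * n + 1`, split as a line and an even-dimensional space. -/
abbrev OddSpace (n : ℕ) := WithLp 2 (ℝ × EuclideanSpace ℝ (Fin n ⊕ Fin n))

/-- The isometric embedding of `ℝⁿ` onto `n` of the coordinates of the even-dimensional factor. -/
def oddEmbedding (ξ : Fin n → ℝ) : OddSpace n := WithLp.toLp 2 (0, WithLp.toLp 2 (Sum.elim ξ 0))

lemma norm_oddEmbedding_sub (ξ ξ' : Fin n → ℝ) :
    ‖oddEmbedding ξ - oddEmbedding ξ'‖ = √(∑ j, (ξ j - ξ' j) ^ 2) := by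
  rw [← Real.sqrt_sq (norm_nonneg _), WithLp.prod_norm_sq_eq_of_L2, EuclideanSpace.norm_sq_eq]
  simp [oddEmbedding]

lemma inner_oddEmbedding (θ : OddSpace n) (ξ : Fin n → ℝ) :
    inner ℝ θ (oddEmbedding ξ) = ∑ j, θ.snd (Sum.inl j) * ξ j := by
  simp [oddEmbedding, WithLp.prod_inner_apply, PiLp.inner_apply, mul_comm]

lemma schattenNorm_differenceMatrix_inner_oddEmbedding_le {d : ℕ} {p : ℝ} (hp : 1 < p)
    (θ : OddSpace n) (lam : Fin n → Fin d → ℝ) (x : CMat d) :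
    schattenNorm p (differenceMatrix (fun k => inner ℝ θ (oddEmbedding fun j => lam j k)) ⊙ x) ≤
      ‖θ‖ * ∑ j, schattenNorm p (differenceMatrix (lam j) ⊙ x) := by
  have coordinate_le (j : Fin n) : ‖(θ.snd (Sum.inl j) : ℂ)‖ ≤ ‖θ‖ := by
    rw [Complex.norm_real]
    exact (PiLp.norm_apply_le θ.snd _).trans (WithLp.norm_snd_le _ θ)
  simp only [inner_oddEmbedding, differenceMatrix_sum_hadamard]
  refine (schattenNorm_sum_smul_le hp _ _ _).trans ?_
  rw [mul_sum]
  exact sum_le_sum fun j _ =>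
    mul_le_mul_of_nonneg_right (coordinate_le j) (schattenNorm_nonneg _ _)

lemma schattenNorm_differenceMatrix_hadamard_le_sum {d : ℕ} {p N : ℝ} (hp : 1 < p)
    (h : ∀ K, MartingaleTransformBound alternatingCoeff d K p N) (hN : 0 ≤ N)
    {f : (Fin n → ℝ) → ℝ} (hf : ∀ ξ ξ', |f ξ - f ξ'| ≤ √(∑ j, (ξ j - ξ' j) ^ 2))
    (lam : Fin n → Fin d → ℝ) (x : CMat d) :
    schattenNorm p (differenceMatrix (fun k => f fun j => lam j k) ⊙ x) ≤
      averagingConstant (OddSpace n) * N * ∑ j, schattenNorm p (differenceMatrix (lam j) ⊙ x) := by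
  have finrank_even : Module.finrank ℝ (EuclideanSpace ℝ (Fin n ⊕ Fin n)) = 2 * n := by
    rw [finrank_euclideanSpace, Fintype.card_sum, Fintype.card_fin, two_mul]
  exact schattenNorm_differenceMatrix_hadamard_le finrank_even
    (Real.HolderConjugate.conjExponent hp) h hN (sum_nonneg fun j _ => schattenNorm_nonneg _ _)
    (fun k l => (hf _ _).trans_eq (norm_oddEmbedding_sub _ _).symm)
    fun θ => schattenNorm_differenceMatrix_inner_oddEmbedding_le hp θ lam x

end EuclideanEmbedding

/-- Matrix form of Theorem 5.2 of the paper: for fixed `n ≥ 1` there is a constant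
`C > 0` (depending only on `n`) such that for all `p ∈ (1,∞)`, all `d ≥ 1`, every
`f : ℝⁿ → ℝ` Lipschitz with constant `1` for the Euclidean norm, every unitary `U`,
reals `λ_{j,i}`, and every `x ∈ M_d(ℂ)`, with `A_j = U diag(λ_{j,·}) U*` and
`F = f(A₁,…,Aₙ) = U diag(f(λ_{·,i}))ᵢ U*`, one has
`‖[F,x]‖_p ≤ C (p²/(p−1)) ∑ⱼ ‖[A_j,x]‖_p`. -/
theorem commutator_lipschitz_schatten_matrix (n : ℕ) (hn : 1 ≤ n) :
    ∃ C : ℝ, 0 < C ∧ ∀ (p : ℝ), 1 < p → ∀ (d : ℕ), 1 ≤ d →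
      ∀ (f : (Fin n → ℝ) → ℝ),
        (∀ ξ ξ' : Fin n → ℝ, |f ξ - f ξ'| ≤ Real.sqrt (∑ i, (ξ i - ξ' i) ^ 2)) →
      ∀ (U : Matrix (Fin d) (Fin d) ℂ), U ∈ Matrix.unitaryGroup (Fin d) ℂ →
      ∀ (lam : Fin n → Fin d → ℝ) (x : Matrix (Fin d) (Fin d) ℂ),
        schattenNorm p
            ((U * Matrix.diagonal (fun i => (f (fun j => lam j i) : ℂ)) * Uᴴ) * x
              - x * (U * Matrix.diagonal (fun i => (f (fun j => lam j i) : ℂ)) * Uᴴ))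
          ≤ C * (p ^ 2 / (p - 1)) *
            ∑ j, schattenNorm p
              ((U * Matrix.diagonal (fun i => (lam j i : ℂ)) * Uᴴ) * x
                - x * (U * Matrix.diagonal (fun i => (lam j i : ℂ)) * Uᴴ)) := by
  obtain ⟨c, c_pos, transform_bound⟩ := exists_martingaleTransformBound
  have C_nonneg := averagingConstant_nonneg (OddSpace n)
  refine ⟨(averagingConstant (OddSpace n) + 1) * c, by positivity,
    fun p hp d _ f hf U hU lam x => ?_⟩
  have N_nonneg : 0 ≤ c * (p ^ 2 / (p - 1)) :=
    mul_nonneg c_pos.le (div_nonneg (sq_nonneg p) (sub_nonneg.mpr hp.le))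
  have commutator_eq (g : Fin d → ℝ) := schattenNorm_commutator_unitary_conj hU p g x
  simp only [realDiagonal] at commutator_eq
  simp only [commutator_eq]
  refine (schattenNorm_differenceMatrix_hadamard_le_sum hp
    (transform_bound p hp alternatingCoeff abs_alternatingCoeff_le_one d) N_nonneg hf lam _).trans
    (mul_le_mul_of_nonneg_right ?_ (sum_nonneg fun j _ => schattenNorm_nonneg _ _))
  rw [mul_assoc _ c]
  exact mul_le_mul_of_nonneg_right (lt_add_one _).le N_nonneg
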